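/- arXiv:1607.04370 — 3 statements merged into one kernel-verified Lean document; each statement's English description precedes it below -/
import Mathlib

section
/- Assume the Strong Reflection Principle (SRP). Then 2^{ℵ₀} = 2^{ℵ₁} = ℵ₂. -/
universe u

/-- The first uncountable ordinal, `ω₁`. -/
noncomputable def omega1 : Ordinal.{u} := (Cardinal.aleph 1).ord

/-- `C` is club (closed unbounded) in `[A]^{<ω₁}`, the collection of countable subsets of `A`:
every member of `C` is a countable subset of `A`, every countable subset of `A` is included in a
member of `C` (cofinality), and `C` is closed under unions of countable increasing chains. -/
def ClubOn {X : Type u} (A : Set X) (C : Set (Set X)) : Prop :=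
  (∀ c ∈ C, c ⊆ A ∧ c.Countable) ∧
  (∀ s : Set X, s ⊆ A → s.Countable → ∃ c ∈ C, s ⊆ c) ∧
  (∀ f : ℕ → Set X, (∀ n, f n ∈ C) → Monotone f → (⋃ n, f n) ∈ C)

/-- `S` is stationary in `[A]^{<ω₁}`: it meets every club. -/
def StationaryOn {X : Type u} (A : Set X) (S : Set (Set X)) : Prop :=
  ∀ C, ClubOn A C → (S ∩ C).Nonempty

/-- `C` is a club (closed unbounded set) of ordinals below `κ`:
`C ⊆ κ`, `C` is unbounded in `κ`, and `C` contains each of its limit points below `κ`. -/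
def OrdClub (κ : Ordinal.{u}) (C : Set Ordinal.{u}) : Prop :=
  C ⊆ Set.Iio κ ∧ (∀ o < κ, ∃ c ∈ C, o ≤ c) ∧
  (∀ o < κ, o ≠ 0 → (∀ b < o, ∃ c ∈ C, b < c ∧ c < o) → o ∈ C)

/-- `S` is a stationary set of ordinals below `κ`: it meets every club below `κ`. -/
def OrdStationary (κ : Ordinal.{u}) (S : Set Ordinal.{u}) : Prop :=
  S ⊆ Set.Iio κ ∧ ∀ C, OrdClub κ C → (S ∩ C).Nonempty

/-- The Strong Reflection Principle (SRP): suppose `λ ≥ ℵ₂` and `Z ⊆ P_{ω₁}(λ)` is such that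
for each stationary `T ⊆ ω₁` the set `{σ ∈ Z : σ ∩ ω₁ ∈ T}` is stationary in `P_{ω₁}(λ)`;
then for every `X ⊆ λ` of cardinality `ℵ₁` there is `Y ⊆ λ` with `X ⊆ Y`, `|Y| = ℵ₁`,
and `Z ∩ P_{ω₁}(Y)` containing a club of `P_{ω₁}(Y)`.  (Here `λ` is identified with the set of
ordinals below `λ.ord`, and `σ ∩ ω₁ ∈ T` means that `σ ∩ ω₁` is an ordinal `δ ∈ T`, i.e.
`σ ∩ ω₁ = Iio δ`.) -/
def SRP : Prop :=
  ∀ lam : Cardinal.{u}, Cardinal.aleph 2 ≤ lam →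
    ∀ Z : Set (Set Ordinal.{u}),
      (∀ σ ∈ Z, σ ⊆ Set.Iio lam.ord ∧ σ.Countable) →
      (∀ T : Set Ordinal.{u}, OrdStationary omega1 T →
        StationaryOn (Set.Iio lam.ord)
          {σ ∈ Z | ∃ δ ∈ T, σ ∩ Set.Iio omega1 = Set.Iio δ}) →
      ∀ X : Set Ordinal.{u}, X ⊆ Set.Iio lam.ord → Cardinal.mk X = Cardinal.aleph 1 →
        ∃ Y : Set Ordinal.{u}, X ⊆ Y ∧ Y ⊆ Set.Iio lam.ord ∧
          Cardinal.mk Y = Cardinal.aleph 1 ∧ ∃ D ⊆ Z, ClubOn Y D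

/-!
Say that a set `Z` of countable subsets of `L` is projective stationary if it satisfies the
hypothesis of SRP. Then SRP yields an injection `π : ω₁ → L` such that `π '' ξ ∈ Z` for club many
`ξ < ω₁`.

Call a countable model `N` trace maximal if every proper extension of the form `N[a]` contains a new
countable ordinal. The models that are trace maximal or have no trace maximal extension with the
same countable ordinals are projective stationary. Since the models `π '' ξ` given by SRP are almost
never trace maximal, they can be enlarged again and again without adding countable ordinals. Hence
every algebra on `ω₂` has an uncountable subalgebra `V` for which `V ∩ ω₁` is a member of a
prescribed stationary set `T`.

Now let `S i`, `i < ω₁`, be disjoint stationary sets and `h : ω₁ → ω₁`. In a subalgebra `V ⊆ ω₂` of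
order type `ω₁`, the initial segments with trace `δ = V ∩ ω₁` have order type in `S (h δ)`
stationarily often, so the countable sets `σ ⊆ ω₂` whose order type lies in `S (h (σ ∩ ω₁))` are
projective stationary. For the injection `π h : ω₁ → ω₂` given by SRP, the order type of
`π h '' η` therefore determines `h η` for club many `η`.

The range of `π h` has an order type below `ω₂`, which determines `h` on a club; hence
`2 ^ ℵ₁ ≤ ℵ₂`. On the other hand, `h η` is determined by the pattern of `π h` below `η`. If
`2 ^ ℵ₀ = ℵ₁`, that pattern can be encoded by a countable ordinal, which is again a function of `η`
to be predicted. Repeating this `ω` times, `f : ω₁ → ω₁` is recovered from countably many countable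
ordinals, as in the theorem of Devlin and Shelah, and `2 ^ ℵ₁ ≤ ℵ₁ ^ ℵ₀ = ℵ₁` is a contradiction.
-/

namespace StrongReflection

open Set Cardinal Order

/-! ### Countable ordinals -/

/-- The type of countable ordinals. -/
abbrev Ω₁ : Type u := (aleph 1).ord.ToType

/-- The type of ordinals of cardinality at most `ℵ₁`. -/
abbrev Ω₂ : Type u := (aleph 2).ord.ToType

theorem countable_iff_mk_lt_aleph_one {A : Type u} : Countable A ↔ #A < aleph 1 := by
  rw [← mk_le_aleph0_iff, ← lt_succ_iff, succ_aleph0]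

theorem not_countable_iff_aleph_one_le_mk {A : Type u} {s : Set A} :
    ¬ s.Countable ↔ aleph 1 ≤ #s := by
  rw [← not_lt, ← countable_iff_mk_lt_aleph_one, countable_coe_iff]

noncomputable instance : Inhabited Ω₁.{u} :=
  Classical.inhabited_of_nonempty (mk_ne_zero_iff.1 (by simp [(aleph_pos _).ne']))

noncomputable instance : Inhabited Ω₂.{u} :=
  Classical.inhabited_of_nonempty (mk_ne_zero_iff.1 (by simp [(aleph_pos _).ne']))

theorem countable_Iio (x : Ω₁.{u}) : (Iio x).Countable :=
  countable_coe_iff.1 <| countable_iff_mk_lt_aleph_one.2 <|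
    (mk_Iio_lt x (by simp)).trans_eq (mk_ord_toType _)

theorem countable_Iic (x : Ω₁.{u}) : (Iic x).Countable :=
  Iio_insert (a := x) ▸ (countable_Iio x).insert x

theorem not_countable_univ : ¬ (univ : Set Ω₁.{u}).Countable := by
  simp [not_countable_iff_aleph_one_le_mk]

theorem exists_forall_lt_of_countable {s : Set Ω₁.{u}} (hs : s.Countable) :
    ∃ b, ∀ x ∈ s, x < b := by
  by_contra! h
  refine not_countable_univ ((hs.biUnion fun x _ => countable_Iic x).mono fun b _ => ?_)
  simpa using h b

theorem cof_ne_aleph0 : cof Ω₁.{u} ≠ ℵ₀ := by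
  simp [Ordinal.cof_toType, aleph0_lt_aleph_one.ne']

theorem exists_eq_Iio_of_countable {s : Set Ω₁.{u}} (hs : s.Countable) (hlow : IsLowerSet s) :
    ∃ ξ, s = Iio ξ :=
  hlow.eq_univ_or_Iio.resolve_left fun h => not_countable_univ (h ▸ hs)

/-! ### Sets closed under finitary operations -/

/-- `s` is a subalgebra of the algebra with underlying set `A` and operations `G · i` for `i : I`,
each of which accepts argument lists of every length. -/
def ClosedUnder {A I : Type*} (G : List A → I → A) (s : Set A) : Prop :=
  ∀ l, (∀ x ∈ l, x ∈ s) → ∀ i, G l i ∈ s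

section ClosedUnder

variable {A I : Type*} {G : List A → I → A}

theorem ClosedUnder.sUnion {K : Set (Set A)} (hne : K.Nonempty) (hd : DirectedOn (· ⊆ ·) K)
    (hK : ∀ k ∈ K, ClosedUnder G k) : ClosedUnder G (⋃₀ K) := by
  intro l hl i
  obtain ⟨k, hk, hlk⟩ :=
    hd.exists_mem_subset_of_finite_of_subset_sUnion hne (List.finite_toSet l) hl
  exact ⟨k, hk, hK k hk l hlk i⟩

theorem ClosedUnder.sInter {K : Set (Set A)} (hK : ∀ k ∈ K, ClosedUnder G k) :
    ClosedUnder G (⋂₀ K) :=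
  fun l hl i k hk => hK k hk l (fun x hx => hl x hx k hk) i

/-- The subalgebra generated by a set. -/
def algClosure (G : List A → I → A) : ClosureOperator (Set A) :=
  .ofCompletePred (ClosedUnder G) fun _ => ClosedUnder.sInter

theorem closedUnder_algClosure (s : Set A) : ClosedUnder G (algClosure G s) :=
  (algClosure G).isClosed_closure s

theorem algClosure_subset {s t : Set A} (h : s ⊆ t) (ht : ClosedUnder G t) : algClosure G s ⊆ t :=
  ClosureOperator.closure_min h ht

theorem exists_finite_mem_algClosure {s t : Set A} {z : A} (hz : z ∈ algClosure G (s ∪ t)) :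
    ∃ u ⊆ t, u.Finite ∧ z ∈ algClosure G (s ∪ u) := by
  let K : Set (Set A) := (fun u => algClosure G (s ∪ u)) '' {u | u ⊆ t ∧ u.Finite}
  have hmem {u : Set A} (hut : u ⊆ t) (hu : u.Finite) : algClosure G (s ∪ u) ∈ K :=
    mem_image_of_mem _ ⟨hut, hu⟩
  have hK : ClosedUnder G (⋃₀ K) := by
    refine .sUnion ⟨_, hmem (empty_subset t) finite_empty⟩ ?_
      (forall_mem_image.2 fun u _ => closedUnder_algClosure _)
    rintro _ ⟨u, ⟨hut, hu⟩, rfl⟩ _ ⟨v, ⟨hvt, hv⟩, rfl⟩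
    refine ⟨_, hmem (union_subset hut hvt) (hu.union hv), ?_, ?_⟩ <;>
      exact (algClosure G).monotone (union_subset_union_right _ (by simp))
  have hst : s ∪ t ⊆ ⋃₀ K := by
    rintro x (hx | hx)
    · exact ⟨_, hmem (empty_subset t) finite_empty, (algClosure G).le_closure _ (.inl hx)⟩
    · exact ⟨_, hmem (singleton_subset_iff.2 hx) (finite_singleton x),
        (algClosure G).le_closure _ (.inr rfl)⟩
  obtain ⟨_, ⟨u, ⟨hut, hu⟩, rfl⟩, hzu⟩ := algClosure_subset hst hK hz
  exact ⟨u, hut, hu, hzu⟩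

theorem isOfFiniteCharacter_setOf_preimage_algClosure_subset {B B' : Type*}
    (G : List A → I → A) {g : B → A} (hg : Function.Injective g) (e : B' → A) (s : Set A)
    (t : Set B') : IsOfFiniteCharacter {u | e ⁻¹' algClosure G (s ∪ g '' u) ⊆ t} := by
  refine fun u => ⟨fun hu v hvu _ => ?_, fun hu i hi => ?_⟩
  · exact (preimage_mono ((algClosure G).monotone (union_subset_union_right s
      (image_mono hvu)))).trans hu
  · obtain ⟨w, hwu, hw, hiw⟩ := exists_finite_mem_algClosure hi
    obtain ⟨v, hvu, rfl⟩ := subset_image_iff.1 hwu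
    exact hu v hvu (hw.of_finite_image hg.injOn) hiw

theorem countable_setOf_list_mem {s : Set A} (hs : s.Countable) :
    {l : List A | ∀ x ∈ l, x ∈ s}.Countable := by
  have : Countable s := hs
  exact range_list_map_coe s ▸ countable_range _

theorem exists_list_map_eq_of_forall_mem_image {B : Type*} {f : A → B} {s : Set A} {l : List B}
    (hl : ∀ b ∈ l, b ∈ f '' s) : ∃ l' : List A, (∀ a ∈ l', a ∈ s) ∧ l'.map f = l := by
  obtain ⟨l', rfl⟩ : l ∈ range (List.map fun x : s => f x) := by
    rwa [range_list_map, ← image_eq_range]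
  exact ⟨l'.map (↑), by simp +contextual, by simp⟩

theorem countable_algClosure [Countable I] {s : Set A} (hs : s.Countable) :
    (algClosure G s).Countable := by
  let next (t : Set A) : Set A := t ∪ ⋃ l ∈ {l : List A | ∀ x ∈ l, x ∈ t}, range (G l)
  let T (n : ℕ) : Set A := next^[n] s
  have hT (n : ℕ) : T (n + 1) = next (T n) := Function.iterate_succ_apply' _ _ _
  have hc (n : ℕ) : (T n).Countable := by
    induction n with
    | zero => exact hs
    | succ n ih =>
      rw [hT]
      exact ih.union ((countable_setOf_list_mem ih).biUnion fun l _ => countable_range _)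
  have hmono : Monotone T := monotone_nat_of_le_succ fun n => hT n ▸ subset_union_left
  refine (countable_iUnion hc).mono (algClosure_subset (subset_iUnion T 0) fun l hl i => ?_)
  obtain ⟨_, ⟨n, rfl⟩, hln⟩ :=
    hmono.directed_le.directedOn_range.exists_mem_subset_of_finite_of_subset_sUnion
      (range_nonempty T) (List.finite_toSet l) (sUnion_range T ▸ hl)
  refine mem_iUnion.2 ⟨n + 1, hT n ▸ .inr ?_⟩
  exact mem_biUnion (show l ∈ {l : List A | ∀ x ∈ l, x ∈ T n} from hln) (mem_range_self i)

end ClosedUnder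

/-! ### Clubs and stationary sets of countable ordinals -/

theorem sUnion_image_Iio_of_isLUB {d : Set Ω₁.{u}} {a : Ω₁.{u}} (ha : IsLUB d a) :
    ⋃₀ (Iio '' d) = Iio a := by
  ext x
  simp [lt_isLUB_iff ha]

theorem directedOn_image_Iio (d : Set Ω₁.{u}) : DirectedOn (· ⊆ ·) (Iio '' d) :=
  directedOn_image.2 ((DirectedOn.of_linearOrder d).mono fun _ _ => Iio_subset_Iio)

theorem isClub_setOf_closedUnder_Iio {I : Type*} [Countable I] (G : List Ω₁.{u} → I → Ω₁.{u}) :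
    IsClub {ξ | ClosedUnder G (Iio ξ)} where
  dirSupClosed d hd hne _ a ha := by
    rw [mem_ofPred_eq, ← sUnion_image_Iio_of_isLUB ha]
    exact .sUnion (hne.image _) (directedOn_image_Iio d) (forall_mem_image.2 hd)
  isCofinal a := by
    choose e he using fun b : Ω₁.{u} => (countable_Iic b).exists_eq_range nonempty_Iic
    let G' (l : List Ω₁.{u}) : I ⊕ ℕ → Ω₁.{u} := Sum.elim (G l) (e (l.headD default))
    have hcl := closedUnder_algClosure (G := G') (Iic a)
    have hlow : IsLowerSet (algClosure G' (Iic a)) := by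
      intro b c hcb hb
      obtain ⟨n, rfl⟩ : c ∈ range (e b) := he b ▸ hcb
      exact hcl [b] (by simpa using hb) (.inr n)
    obtain ⟨ξ, hξ⟩ := exists_eq_Iio_of_countable (countable_algClosure (countable_Iic a)) hlow
    refine ⟨ξ, fun l hl i => ?_, ?_⟩
    · exact hξ ▸ hcl l (hξ ▸ hl) (.inl i)
    · exact (hξ ▸ (algClosure G').le_closure _ (mem_Iic.2 le_rfl) : a ∈ Iio ξ).le

theorem isClub_Ioi (a : Ω₁.{u}) : IsClub (Ioi a) where
  dirSupClosed _ hd hne _ _ hb :=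
    let ⟨_, hx⟩ := hne
    (hd hx).trans_le (hb.1 hx)
  isCofinal b :=
    let ⟨c, hc⟩ := exists_forall_lt_of_countable (toFinite {a, b}).countable
    ⟨c, hc a (by simp), (hc b (by simp)).le⟩

theorem exists_isClub_closedUnder_image_Iio {A I : Type*} [Countable I] {G : List A → I → A}
    {π : Ω₁.{u} → A} (hG : ClosedUnder G (range π)) :
    ∃ C, IsClub C ∧ ∀ ξ ∈ C, ClosedUnder G (π '' Iio ξ) := by
  choose p hp using fun (l : List Ω₁.{u}) i => hG (l.map π) (by simp) i
  refine ⟨_, isClub_setOf_closedUnder_Iio p, fun ξ hξ l hl i => ?_⟩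
  obtain ⟨l', hl', rfl⟩ := exists_list_map_eq_of_forall_mem_image hl
  exact ⟨_, hξ l' hl' i, hp l' i⟩

theorem exists_isClub_preimage_image_Iio {A : Type*} {π e : Ω₁.{u} → A}
    (hπ : Function.Injective π) (he : Function.Injective e) (h : range e ⊆ range π) :
    ∃ C, IsClub C ∧ ∀ ξ ∈ C, e ⁻¹' (π '' Iio ξ) = Iio ξ := by
  choose p hp using fun i => h (mem_range_self i)
  have hpinj : Function.Injective p := fun i j hij => he (by rw [← hp, hij, hp])
  let G (l : List Ω₁.{u}) (b : Bool) : Ω₁.{u} :=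
    (l.map (if b then p else Function.invFun p)).headD default
  refine ⟨_, isClub_setOf_closedUnder_Iio G, fun ξ hξ => Subset.antisymm ?_ fun i hi => ?_⟩
  · rintro i ⟨x, hx, hxi⟩
    obtain rfl : x = p i := hπ (hxi.trans (hp i).symm)
    simpa [G, Function.leftInverse_invFun hpinj i] using hξ [p i] (by simpa using hx) false
  · exact ⟨p i, by simpa [G] using hξ [i] (by simpa using hi) true, hp i⟩

/-- Ulam's theorem for `ω₁`. -/
theorem exists_pairwise_disjoint_isStationary :
    ∃ S : Ω₁.{u} → Set Ω₁.{u},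
      (∀ i, IsStationary (S i)) ∧ Pairwise (Function.onFun Disjoint S) := by
  choose e he using fun b : Ω₁.{u} => countable_iff_exists_injOn.1 (countable_Iio b)
  let U (n : ℕ) (a : Ω₁.{u}) : Set Ω₁.{u} := {b | a < b ∧ e b a = n}
  have hrow (a : Ω₁.{u}) : ∃ n, IsStationary (U n a) := by
    rw [← isStationary_iUnion_iff_of_countable cof_ne_aleph0]
    exact ((isClub_Ioi a).isStationary cof_ne_aleph0).mono fun b hb => mem_iUnion.2 ⟨e b a, hb, rfl⟩
  choose n hn using hrow
  obtain ⟨k, hk⟩ : ∃ k, ¬ (n ⁻¹' {k}).Countable := by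
    by_contra! h
    exact not_countable_univ ((countable_iUnion h).mono fun a _ => by simp)
  rw [not_countable_iff_aleph_one_le_mk, ← mk_ord_toType (aleph 1), Cardinal.le_def] at hk
  obtain ⟨φ⟩ := hk
  refine ⟨fun i => U k (φ i), fun i => ?_, fun i j hij => ?_⟩
  · have hi : n (φ i) = k := (φ i).2
    simpa only [hi] using hn (φ i)
  · refine disjoint_left.2 fun x hxi hxj => hij (φ.injective (Subtype.ext ?_))
    exact he x hxi.1 hxj.1 (hxi.2.trans hxj.2.symm)

theorem exists_isClub_forall_lt (g : Ω₁.{u} → Ω₁.{u}) :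
    ∃ C, IsClub C ∧ ∀ ξ ∈ C, (Iio ξ).Nonempty ∧ ∀ x < ξ, g x < ξ := by
  refine ⟨_, isClub_setOf_closedUnder_Iio fun l (_ : Unit) => (l.map g).headD default,
    fun ξ hξ => ⟨⟨_, hξ [] (by simp) ()⟩, fun x hx => ?_⟩⟩
  simpa using hξ [x] (by simpa using hx) ()

theorem exists_countable_closedUnder_of_isStationary {A I : Type*} [Countable I] {T : Set Ω₁.{u}}
    (hT : IsStationary T) (G : List A → I → A) {e : Ω₁.{u} → A} (he : Function.Injective e)
    {s : Set A} (hs : s.Countable) :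
    ∃ N : Set A, N.Countable ∧ s ⊆ N ∧ ClosedUnder G N ∧ ∃ δ ∈ T, e ⁻¹' N = Iio δ := by
  let M (x : Ω₁.{u}) : Set A := algClosure G (s ∪ e '' Iic x)
  have hMc (x : Ω₁.{u}) : (M x).Countable :=
    countable_algClosure (hs.union ((countable_Iic x).image e))
  have hmono : Monotone M := fun x y h => (algClosure G).monotone
    (union_subset_union_right _ (image_mono (Iic_subset_Iic.2 h)))
  choose g hg using fun x => exists_forall_lt_of_countable ((hMc x).preimage he)
  obtain ⟨C, hC, hgC⟩ := exists_isClub_forall_lt g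
  obtain ⟨δ, hδT, hδC⟩ := hT hC
  obtain ⟨⟨x₀, hx₀⟩, hgδ⟩ := hgC δ hδC
  refine ⟨⋃₀ (M '' Iio δ), ?_, ?_, ?_, δ, hδT, Subset.antisymm ?_ fun i hi => ?_⟩
  · exact ((countable_Iio δ).image M).sUnion (forall_mem_image.2 fun x _ => hMc x)
  · exact fun x hx => ⟨M x₀, ⟨x₀, hx₀, rfl⟩, (algClosure G).le_closure _ (.inl hx)⟩
  · exact .sUnion ⟨_, x₀, hx₀, rfl⟩
      (directedOn_image.2 ((DirectedOn.of_linearOrder _).mono fun _ _ h => hmono h))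
      (forall_mem_image.2 fun x _ => closedUnder_algClosure _)
  · rintro i ⟨_, ⟨x, hx, rfl⟩, hi⟩
    exact (hg x i hi).trans (hgδ x hx)
  · exact ⟨M i, ⟨i, hi, rfl⟩, (algClosure G).le_closure _ (.inr ⟨i, mem_Iic.2 le_rfl, rfl⟩)⟩

/-! ### Clubs of countable sets -/

section ClubOn

variable {A B : Type*} {Y : Set A} {D : Set (Set A)}

theorem exists_increasing_family_of_clubOn (hD : ClubOn Y D) (hY : Y.Nonempty) :
    ∃ F : List A → Set A, (∀ l, F l ∈ D) ∧ (∀ l, (F l).Nonempty) ∧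
      (∀ a l, F l ⊆ F (a :: l)) ∧ ∀ a ∈ Y, ∀ l, a ∈ F (a :: l) := by
  obtain ⟨hsub, hcof, -⟩ := hD
  have hext (c : D) (a : A) : ∃ c' : D, (c ∪ Y ∩ {a} : Set A) ⊆ c' := by
    obtain ⟨c', hc', h⟩ := hcof (c ∪ Y ∩ {a}) (union_subset (hsub c c.2).1 inter_subset_left)
      ((hsub c c.2).2.union ((countable_singleton a).mono inter_subset_right))
    exact ⟨⟨c', hc'⟩, h⟩
  choose ext hext using hext
  obtain ⟨y, hy⟩ := hY
  obtain ⟨c₀, hc₀, hyc₀⟩ := hcof {y} (singleton_subset_iff.2 hy) (countable_singleton y)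
  let F (l : List A) : D := l.foldr (fun a c => ext c a) ⟨c₀, hc₀⟩
  have hmono (a : A) (l : List A) : (F l : Set A) ⊆ F (a :: l) :=
    subset_union_left.trans (hext (F l) a)
  refine ⟨fun l => F l, fun l => (F l).2, fun l => ⟨y, ?_⟩, hmono,
    fun a ha l => hext (F l) a (.inr ⟨ha, rfl⟩)⟩
  induction l with
  | nil => exact hyc₀ rfl
  | cons a l ih => exact hmono a l ih

/-- Kueker's theorem. -/
theorem exists_closedUnder_imp_mem_of_clubOn (hD : ClubOn Y D) (hY : Y.Nonempty) :
    ∃ G : List A → ℕ → A, ClosedUnder G Y ∧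
      ∀ s ⊆ Y, s.Countable → ClosedUnder G s → s ∈ D := by
  obtain ⟨F, hFD, hFne, hFmono, hFmem⟩ := exists_increasing_family_of_clubOn hD hY
  choose G hG using fun l => (hD.1 _ (hFD l)).2.exists_eq_range (hFne l)
  refine ⟨G, fun l _ i => (hD.1 _ (hFD l)).1 (hG l ▸ mem_range_self i), fun s hsY hsc hs => ?_⟩
  obtain ⟨f, rfl⟩ := hsc.exists_eq_range ⟨_, hs [] (by simp) 0⟩
  let ls (n : ℕ) : List A := ((List.range n).map f).reverse
  have hls (n : ℕ) : ls (n + 1) = f n :: ls n := by simp [ls, List.range_succ]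
  have hunion : ⋃ n, F (ls n) = range f := by
    refine Subset.antisymm (iUnion_subset fun n => ?_) (range_subset_iff.2 fun n => ?_)
    · rw [hG]
      exact range_subset_iff.2 fun i => hs (ls n) (by simp [ls]) i
    · exact mem_iUnion.2 ⟨n + 1, hls n ▸ hFmem (f n) (hsY (mem_range_self n)) (ls n)⟩
  rw [← hunion]
  exact hD.2.2 _ (fun n => hFD _) (monotone_nat_of_le_succ fun n => hls n ▸ hFmono _ _)

theorem clubOn_preimage_image {j : B → A} (hj : Function.Injective j) {X : Set B}
    (hD : ClubOn (j '' X) D) : ClubOn X {s | j '' s ∈ D} := by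
  refine ⟨fun s hs => ?_, fun s hsX hs => ?_, fun f hf hmono => ?_⟩
  · exact ⟨(image_subset_image_iff hj).1 (hD.1 _ hs).1,
      countable_of_injective_of_countable_image hj.injOn (hD.1 _ hs).2⟩
  · obtain ⟨c, hc, hsc⟩ := hD.2.1 (j '' s) (image_mono hsX) (hs.image j)
    obtain ⟨t, -, rfl⟩ := subset_image_iff.1 (hD.1 c hc).1
    exact ⟨t, hc, (image_subset_image_iff hj).1 hsc⟩
  · rw [mem_ofPred_eq, image_iUnion]
    exact hD.2.2 _ hf fun m n hmn => image_mono (hmono hmn)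

theorem exists_isClub_image_Iio_mem {π : Ω₁.{u} → A} (hD : ClubOn (range π) D) :
    ∃ C, IsClub C ∧ ∀ ξ ∈ C, π '' Iio ξ ∈ D := by
  obtain ⟨G, hG, hGD⟩ := exists_closedUnder_imp_mem_of_clubOn hD (range_nonempty π)
  obtain ⟨C, hC, hCG⟩ := exists_isClub_closedUnder_image_Iio hG
  exact ⟨C, hC, fun ξ hξ => hGD _ (image_subset_range π _) ((countable_Iio ξ).image π) (hCG ξ hξ)⟩

end ClubOn

/-! ### Projective stationary sets -/

/-- Projective stationarity of a set `Z` of subsets of `A`, in the sense of Feng and Jech. The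
injection `e` plays the role of the inclusion `ω₁ ⊆ λ`, so that `e ⁻¹' σ = Iio δ` stands for
`σ ∩ ω₁ = δ`. -/
def IsProjectiveStationary {A : Type u} (e : Ω₁.{u} → A) (Z : Set (Set A)) : Prop :=
  ∀ T, IsStationary T → StationaryOn univ {σ ∈ Z | ∃ δ ∈ T, e ⁻¹' σ = Iio δ}

theorem isProjectiveStationary_of_exists_closedUnder {A : Type u} {e : Ω₁.{u} → A}
    {Z : Set (Set A)}
    (h : ∀ (G : List A → ℕ → A) (T : Set Ω₁.{u}), IsStationary T →
      ∃ σ ∈ Z, σ.Countable ∧ ClosedUnder G σ ∧ ∃ δ ∈ T, e ⁻¹' σ = Iio δ) :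
    IsProjectiveStationary e Z := by
  intro T hT D hD
  obtain ⟨G, -, hG⟩ := exists_closedUnder_imp_mem_of_clubOn hD ⟨e default, mem_univ _⟩
  obtain ⟨σ, hσZ, hσc, hσG, hσT⟩ := h G T hT
  exact ⟨σ, ⟨hσZ, hσT⟩, hG σ (subset_univ σ) hσc hσG⟩

/-- The ordinal represented by an element of `Ω₁`. -/
noncomputable def toOrd : Ω₁.{u} ↪o Ordinal.{u} :=
  Ordinal.ToType.mk.symm.toOrderEmbedding.trans (OrderEmbedding.subtype _)

theorem range_toOrd : range toOrd.{u} = Iio omega1 := by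
  ext o
  exact ⟨fun ⟨i, hi⟩ => hi ▸ (Ordinal.ToType.mk.symm i).2,
    fun ho => ⟨Ordinal.ToType.mk ⟨o, ho⟩, by simp [toOrd]⟩⟩

theorem image_toOrd_Iio (i : Ω₁.{u}) : toOrd '' Iio i = Iio (toOrd i) :=
  toOrd.image_Iio (range_toOrd ▸ isLowerSet_Iio _) i

theorem ordClub_image_toOrd {C : Set Ω₁.{u}} (hC : IsClub C) :
    OrdClub omega1 (toOrd '' C) := by
  refine ⟨range_toOrd ▸ image_subset_range _ _, fun o ho => ?_, fun o ho hne hlim => ?_⟩ <;>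
    obtain ⟨i, rfl⟩ : o ∈ range toOrd := range_toOrd ▸ ho
  · obtain ⟨c, hc, hic⟩ := hC.isCofinal i
    exact ⟨_, mem_image_of_mem _ hc, toOrd.le_iff_le.2 hic⟩
  · have hlim' (b) (hb : b < toOrd i) : ∃ c ∈ C ∩ Iio i, b < toOrd c := by
      obtain ⟨_, ⟨c, hc, rfl⟩, hbc, hci⟩ := hlim b hb
      exact ⟨c, ⟨hc, toOrd.lt_iff_lt.1 hci⟩, hbc⟩
    refine mem_image_of_mem _ (hC.isLUB_mem (t := C ∩ Iio i) inter_subset_left ?_ ?_)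
    · obtain ⟨c, hc, -⟩ := hlim' 0 (pos_iff_ne_zero.2 hne)
      exact ⟨c, hc⟩
    · refine ⟨fun c hc => hc.2.le, fun x hx => le_of_not_gt fun hxi => ?_⟩
      obtain ⟨c, hc, hxc⟩ := hlim' (toOrd x) (toOrd.lt_iff_lt.2 hxi)
      exact (hx hc).not_gt (toOrd.lt_iff_lt.1 hxc)

theorem isStationary_preimage_toOrd {T : Set Ordinal.{u}} (hT : OrdStationary omega1 T) :
    IsStationary (toOrd ⁻¹' T) := by
  intro C hC
  obtain ⟨_, hi, ⟨i, hiC, rfl⟩⟩ := hT.2 _ (ordClub_image_toOrd hC)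
  exact ⟨i, hi, hiC⟩

theorem exists_injective_extending_toOrd {L : Type u} (hL : aleph 1 < #L) {e : Ω₁.{u} → L}
    (he : Function.Injective e) :
    ∃ j : L → Ordinal.{u}, Function.Injective j ∧ range j = Iio (#L).ord ∧ j ∘ e = toOrd := by
  have hmem (i : Ω₁.{u}) : toOrd i ∈ Iio (#L).ord :=
    Iio_subset_Iio (ord_le_ord.2 hL.le) (range_toOrd ▸ mem_range_self i)
  let f : range e ↪ Iio (#L).ord :=
    (Equiv.ofInjective e he).symm.toEmbedding.trans
      (toOrd.toEmbedding.codRestrict _ hmem)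
  have hcard : #(range e) < #L := by rwa [mk_range_eq e he, mk_ord_toType]
  obtain ⟨φ⟩ : Nonempty (L ≃ (#L).ord.ToType) := by rw [← Cardinal.eq, mk_ord_toType]
  obtain ⟨g, hg⟩ :=
    extend_function_of_lt f hcard ⟨φ.trans Ordinal.ToType.mk.symm.toEquiv⟩
  refine ⟨(↑) ∘ g, Subtype.val_injective.comp g.injective, ?_, funext fun i => ?_⟩
  · rw [g.surjective.range_comp, Subtype.range_coe]
  · simpa [f] using congrArg Subtype.val (hg ⟨e i, mem_range_self i⟩)

theorem isProjectiveStationary_image {L : Type u} {e : Ω₁.{u} → L} {Z : Set (Set L)}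
    (hZ : IsProjectiveStationary e Z) {j : L → Ordinal.{u}} (hj : Function.Injective j)
    (hje : j ∘ e = toOrd) {T : Set Ordinal.{u}} (hT : OrdStationary omega1 T) :
    StationaryOn (range j) {σ ∈ image j '' {s ∈ Z | s.Countable} |
      ∃ δ ∈ T, σ ∩ Iio omega1 = Iio δ} := by
  intro D hD
  have hD' := clubOn_preimage_image hj (image_univ ▸ hD)
  obtain ⟨s, ⟨hsZ, δ, hδT, hsδ⟩, hsD⟩ := hZ _ (isStationary_preimage_toOrd hT) _ hD'
  refine ⟨j '' s, ⟨⟨s, ⟨hsZ, (hD'.1 s hsD).2⟩, rfl⟩, toOrd δ, hδT, ?_⟩, hsD⟩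
  calc j '' s ∩ Iio omega1 = j '' (s ∩ range e) := by
        rw [image_inter hj, ← range_comp, hje, range_toOrd]
    _ = j ∘ e '' (e ⁻¹' s) := by rw [image_comp, image_preimage_eq_inter_range]
    _ = Iio (toOrd δ) := by rw [hje, hsδ, image_toOrd_Iio]

theorem mk_insert_Iio_omega1 (o : Ordinal.{u}) : #(insert o (Iio omega1) : Set _) = aleph 1 := by
  have hIio : #(Iio omega1.{u}) = aleph 1 := by simp [omega1, -ord_aleph]
  refine le_antisymm ?_ (hIio ▸ mk_le_mk_of_subset (subset_insert _ _))
  exact mk_insert_le.trans_eq (by rw [hIio, add_one_eq (aleph0_le_aleph 1)])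

theorem exists_clubOn (hSRP : SRP.{u}) {L : Type u} (hL : aleph 2 ≤ #L) {e : Ω₁.{u} → L}
    (he : Function.Injective e) {Z : Set (Set L)} (hZ : IsProjectiveStationary e Z) (x : L) :
    ∃ Y : Set L, x ∈ Y ∧ range e ⊆ Y ∧ #Y = aleph 1 ∧ ∃ D ⊆ Z, ClubOn Y D := by
  have hL' : aleph 1 < #L := (aleph_lt_aleph.2 one_lt_two).trans_le hL
  obtain ⟨j, hj, hjr, hje⟩ := exists_injective_extending_toOrd hL' he
  have hX : insert (j x) (Iio omega1) ⊆ range j :=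
    insert_subset (mem_range_self x) (range_toOrd ▸ hje ▸ range_comp_subset_range e j)
  obtain ⟨Y, hXY, hY, hYc, D, hDZ, hD⟩ :=
    hSRP #L hL (image j '' {s ∈ Z | s.Countable})
      (by
        rintro _ ⟨s, hs, rfl⟩
        exact ⟨hjr ▸ image_subset_range j s, hs.2.image j⟩)
      (fun T hT => hjr ▸ isProjectiveStationary_image hZ hj hje hT)
      _ (hjr ▸ hX) (mk_insert_Iio_omega1 _)
  obtain ⟨Y, rfl⟩ := subset_range_iff_exists_image_eq.1 (hjr ▸ hY)
  rw [insert_subset_iff, ← range_toOrd, ← hje, range_comp, image_subset_image_iff hj,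
    hj.mem_set_image] at hXY
  refine ⟨Y, hXY.1, hXY.2, ?_, _, fun s hs => ?_, clubOn_preimage_image hj hD⟩
  · have := mk_image_eq_lift j Y hj
    simpa [hYc] using this.symm
  · obtain ⟨t, ⟨ht, -⟩, hts⟩ := hDZ hs
    exact image_injective.2 hj hts ▸ ht

theorem exists_isClub_image_Iio_mem_of_isProjectiveStationary (hSRP : SRP.{u}) {L : Type u}
    (hL : aleph 2 ≤ #L) {e : Ω₁.{u} → L} (he : Function.Injective e) {Z : Set (Set L)}
    (hZ : IsProjectiveStationary e Z) (x : L) :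
    ∃ π : Ω₁.{u} → L, Function.Injective π ∧ x ∈ range π ∧
      ∃ C, IsClub C ∧ ∀ ξ ∈ C, π '' Iio ξ ∈ Z ∧ e ⁻¹' (π '' Iio ξ) = Iio ξ := by
  obtain ⟨Y, hxY, heY, hYc, D, hDZ, hD⟩ := exists_clubOn hSRP hL he hZ x
  obtain ⟨φ⟩ : Nonempty (Ω₁.{u} ≃ Y) := by rw [← Cardinal.eq, hYc, mk_ord_toType]
  let π : Ω₁.{u} → L := (↑) ∘ φ
  have hπ : Function.Injective π := Subtype.val_injective.comp φ.injective
  have hπY : range π = Y := by rw [φ.surjective.range_comp, Subtype.range_coe]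
  obtain ⟨C, hC, hCD⟩ := exists_isClub_image_Iio_mem (hπY ▸ hD)
  obtain ⟨C', hC', hCe⟩ := exists_isClub_preimage_image_Iio hπ he (hπY ▸ heY)
  exact ⟨π, hπ, hπY ▸ hxY, C ∩ C', hC.inter cof_ne_aleph0 hC',
    fun ξ hξ => ⟨hDZ (hCD ξ hξ.1), hCe ξ hξ.2⟩⟩

/-! ### Codes of functions and models without new countable ordinals -/

/-- A code for an operation that takes a list of functions and a natural number to a function,
depending on infinitely many parameters from `A`. The parameters serve as de Bruijn variables that
make it possible to adjoin a generic element of `A` to a set of codes. -/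
abbrev Code (A : Type u) : Type u :=
  Stream' A → List (A → A) → ℕ → A → A

namespace Code

variable {A : Type u}

/-- The code of a function. -/
def ofFun (f : A → A) : Code A := fun _ _ _ => f

/-- The code of an element, viewed as a constant function. -/
def ofElem (a : A) : Code A := ofFun (Function.const A a)

/-- The code `x` with the element `a` substituted for the variable `0`. -/
def subst (a : A) (x : Code A) : Code A := fun s => x (s.cons a)

variable [Inhabited A]

/-- The function obtained by evaluating a code at default arguments. -/
def toFun (x : Code A) : A → A := x (Stream'.const default) [] 0

theorem ofFun_injective : Function.Injective (ofFun (A := A)) :=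
  Function.LeftInverse.injective (g := toFun) fun _ => rfl

theorem ofElem_injective : Function.Injective (ofElem (A := A)) :=
  ofFun_injective.comp Function.const_injective

end Code

/-- Names for the basic operations on codes. -/
inductive OpName
  | weaken
  | var
  | graph
  | eval (n : ℕ)
  | lift (i : OpName)
  deriving Countable

section Op

open Code

variable {A : Type u} {ι : Ω₁.{u} → A} {N : Set (Code A)}

/-- The model `N[a]`, consisting of the values at `a` of the codes in `N`. -/
def adjoin (N : Set (Code A)) (a : A) : Set (Code A) := subst a '' N

/-- No element outside `N` can be adjoined to `N` by means of `adjoin` without adding new members of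
the range of `ι`. -/
def IsTraceMaximal (ι : Ω₁.{u} → A) (N : Set (Code A)) : Prop :=
  ∀ a, ofElem a ∉ N → ∃ f, ofFun f ∈ N ∧ ∃ i, f a = ι i ∧ ofElem (ι i) ∉ N

theorem IsTraceMaximal.congr {M : Set (Code A)} (hN : IsTraceMaximal ι N)
    (h : ∀ f, ofFun f ∈ M ↔ ofFun f ∈ N) : IsTraceMaximal ι M := by
  simpa only [IsTraceMaximal, ofElem, h] using hN

variable [Inhabited A]

/-- The basic operations on codes. They are applied to a list of codes, of which all but `eval` and
`lift` look at most at the first entry: `weaken` shifts the variables, `var` is the variable `0`,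
`graph` turns a code in the variable `0` into the function taking that variable to its value,
`eval` applies the first code to the functions coded by the others, and `lift` lets an operation
act on the result of substituting the variable `0`. -/
def op (l : List (Code A)) : OpName → Code A
  | .weaken => fun s => l.headD default s.tail
  | .var => fun s => ofElem s.head s.tail
  | .graph => ofFun fun a => toFun ((l.headD default).subst a) default
  | .eval n => ofFun (l.headD default (Stream'.const default) (l.tail.map toFun) n)
  | .lift i => fun s => op (l.map (subst s.head)) i s.tail

theorem closedUnder_adjoin (hN : ClosedUnder op N) (a : A) : ClosedUnder op (adjoin N a) := by
  intro l hl i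
  obtain ⟨l', hl', rfl⟩ := exists_list_map_eq_of_forall_mem_image hl
  exact ⟨_, hN l' hl' (.lift i), rfl⟩

theorem subset_adjoin (hN : ClosedUnder op N) (a : A) : N ⊆ adjoin N a :=
  fun x hx => ⟨_, hN [x] (by simpa using hx) .weaken, rfl⟩

theorem ofElem_mem_adjoin (hN : ClosedUnder op N) (a : A) : ofElem a ∈ adjoin N a :=
  ⟨_, hN [] (by simp) .var, rfl⟩

theorem exists_ofFun_mem_of_ofElem_mem_adjoin (hN : ClosedUnder op N) {a b : A}
    (h : ofElem b ∈ adjoin N a) :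
    ∃ f, ofFun f ∈ N ∧ f a = b := by
  obtain ⟨x, hx, hxb⟩ := h
  exact ⟨_, hN [x] (by simpa using hx) .graph, congrArg (toFun · default) hxb⟩

theorem ofFun_eval_mem (hN : ClosedUnder op N) {c : Code A} (hc : c ∈ N) {l : List (A → A)}
    (hl : ∀ f ∈ l, ofFun f ∈ N) (n : ℕ) : ofFun (c (Stream'.const default) l n) ∈ N := by
  have hmap : (l.map ofFun).map toFun = l := by
    rw [List.map_map]
    exact List.map_id l
  simpa only [op, List.headD_cons, List.tail_cons, hmap] using
    hN (c :: l.map ofFun) (by simpa [hc] using hl) (.eval n)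

theorem exists_code_ofFun_mem_of_mem_algClosure {I : Type*} [Countable I]
    (H : List (Code A) → I → Code A) :
    ∃ c : Code A, ∀ N, ClosedUnder op N → c ∈ N →
      ∀ f, ofFun f ∈ algClosure H (ofFun '' (ofFun ⁻¹' N)) → ofFun f ∈ N := by
  have henum (l : List (A → A)) :
      ∃ E : ℕ → A → A, ofFun ⁻¹' algClosure H (ofFun '' {f | f ∈ l}) ⊆ range E :=
    countable_iff_exists_subset_range.1 <| (countable_algClosure <|
      (List.finite_toSet l).countable.image ofFun).preimage ofFun_injective
  choose E hE using henum
  refine ⟨fun _ => E, fun N hN hc f hf => ?_⟩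
  rw [← empty_union (ofFun '' _)] at hf
  obtain ⟨u, hu, hufin, hfu⟩ := exists_finite_mem_algClosure hf
  obtain ⟨v, hv, rfl⟩ := subset_image_iff.1 hu
  lift v to Finset (A → A) using hufin.of_finite_image ofFun_injective.injOn
  obtain ⟨n, rfl⟩ := hE v.toList (by simpa using hfu)
  exact ofFun_eval_mem hN hc (fun g hg => hv (by simpa using hg)) n

/-- The set of models that either are trace maximal or have no trace maximal countable extension
with the same trace on the range of `ι`. -/
def traceDeciding (ι : Ω₁.{u} → A) : Set (Set (Code A)) :=
  {N | ClosedUnder op N ∧ (IsTraceMaximal ι N ∨ ∀ N', N ⊆ N' → N'.Countable → ClosedUnder op N' →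
    ofElem ∘ ι ⁻¹' N' = ofElem ∘ ι ⁻¹' N → ¬ IsTraceMaximal ι N')}

theorem isProjectiveStationary_traceDeciding (hι : Function.Injective ι) :
    IsProjectiveStationary (ofElem ∘ ι) (traceDeciding ι) := by
  refine isProjectiveStationary_of_exists_closedUnder fun G T hT => ?_
  let H (l : List (Code A)) : OpName ⊕ ℕ → Code A := Sum.elim (op l) (G l)
  have hop {s} (hs : ClosedUnder H s) : ClosedUnder op s := fun l hl i => hs l hl (.inl i)
  have hG {s} (hs : ClosedUnder H s) : ClosedUnder G s := fun l hl i => hs l hl (.inr i)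
  obtain ⟨c, hc⟩ := exists_code_ofFun_mem_of_mem_algClosure H
  obtain ⟨N, hNc, hcN, hN, δ, hδT, hδ⟩ := exists_countable_closedUnder_of_isStationary hT H
    (ofElem_injective.comp hι) (countable_singleton c)
  by_cases hmax : ∀ N', N ⊆ N' → N'.Countable → ClosedUnder op N' →
    ofElem ∘ ι ⁻¹' N' = ofElem ∘ ι ⁻¹' N → ¬ IsTraceMaximal ι N'
  · exact ⟨N, ⟨hop hN, .inr hmax⟩, hNc, hG hN, δ, hδT, hδ⟩
  push Not at hmax
  obtain ⟨N', hNN', hN'c, hN', htrace, hN'max⟩ := hmax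
  let M : Set (Code A) := algClosure H (ofFun '' (ofFun ⁻¹' N'))
  have hM : ClosedUnder H M := closedUnder_algClosure _
  have hMN' (f : A → A) : ofFun f ∈ M ↔ ofFun f ∈ N' :=
    ⟨hc N' hN' (hNN' (hcN rfl)) f, fun hf => (algClosure H).le_closure _ (mem_image_of_mem _ hf)⟩
  have hMtrace : ofElem ∘ ι ⁻¹' M = ofElem ∘ ι ⁻¹' N' := ext fun i => hMN' _
  exact ⟨M, ⟨hop hM, .inl (hN'max.congr hMN')⟩,
    countable_algClosure (hN'c.mono (image_preimage_subset _ _)), hG hM,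
    δ, hδT, hMtrace.trans (htrace.trans hδ)⟩

theorem exists_not_countable_of_forall_not_isTraceMaximal {N : Set (Code A)} (hNc : N.Countable)
    (hN : ∀ N', N ⊆ N' → N'.Countable → ClosedUnder op N' →
      ofElem ∘ ι ⁻¹' N' = ofElem ∘ ι ⁻¹' N → ¬ IsTraceMaximal ι N') (hNop : ClosedUnder op N) :
    ∃ U, N ⊆ U ∧ ClosedUnder op U ∧ ofElem ∘ ι ⁻¹' U = ofElem ∘ ι ⁻¹' N ∧
      ¬ (ofElem ⁻¹' U).Countable := by
  let M (s : Set A) : Set (Code A) := algClosure op (N ∪ ofElem '' s)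
  have hM (s) : ClosedUnder op (M s) := closedUnder_algClosure _
  have hle (s) : N ∪ ofElem '' s ⊆ M s := (algClosure op).le_closure _
  let F : Set (Set A) := {s | ofElem ∘ ι ⁻¹' M s ⊆ ofElem ∘ ι ⁻¹' N}
  have hF : IsOfFiniteCharacter F :=
    isOfFiniteCharacter_setOf_preimage_algClosure_subset op ofElem_injective _ _ _
  have hempty : ∅ ∈ F := preimage_mono (algClosure_subset (by simp) hNop)
  obtain ⟨s, -, hsF, hsmax⟩ := hF.exists_maximal hempty
  have hNs : N ⊆ M s := subset_union_left.trans (hle s)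
  have htrace : ofElem ∘ ι ⁻¹' M s = ofElem ∘ ι ⁻¹' N := hsF.antisymm (preimage_mono hNs)
  refine ⟨M s, hNs, hM s, htrace, fun hc => ?_⟩
  have hsc : s.Countable := hc.mono (image_subset_iff.1 (subset_union_right.trans (hle s)))
  have hMs := hN (M s) hNs (countable_algClosure (hNc.union (hsc.image _))) (hM s) htrace
  simp only [IsTraceMaximal, not_forall, not_exists, not_and, not_not] at hMs
  obtain ⟨a, ha, haM⟩ := hMs
  have hadj : M (insert a s) ⊆ adjoin (M s) a := by
    refine algClosure_subset ?_ (closedUnder_adjoin (hM s) a)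
    rw [image_insert_eq, union_insert]
    exact insert_subset (ofElem_mem_adjoin (hM s) a) ((hle s).trans (subset_adjoin (hM s) a))
  have hins : insert a s ∈ F := fun i hi =>
    let ⟨f, hf, hfa⟩ := exists_ofFun_mem_of_ofElem_mem_adjoin (hM s) (hadj hi)
    hsF (haM f hf i hfa)
  have has : a ∈ s := hsmax hins (subset_insert a s) (mem_insert a s)
  exact ha (hle s (.inr (mem_image_of_mem _ has)))

theorem exists_isClub_not_isTraceMaximal (hι : Function.Injective ι) {π : Ω₁.{u} → Code A} {a : A}
    (ha : ofElem a ∉ range π) :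
    ∃ C, IsClub C ∧ ∀ ξ ∈ C, ofElem ∘ ι ⁻¹' (π '' Iio ξ) = Iio ξ →
      ¬ IsTraceMaximal ι (π '' Iio ξ) := by
  obtain ⟨C, hC, hCφ⟩ := exists_isClub_forall_lt fun x => Function.invFun ι (toFun (π x) a)
  refine ⟨C, hC, fun ξ hξ htrace hmax => ?_⟩
  obtain ⟨f, ⟨x, hx, hxf⟩, i, hfi, hi⟩ := hmax a fun h => ha (image_subset_range π _ h)
  have hφ : Function.invFun ι (toFun (π x) a) = i := by
    rw [hxf, ← Function.leftInverse_invFun hι i, ← hfi]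
    rfl
  have hlt : i ∈ Iio ξ := hφ ▸ (hCφ ξ hξ).2 x hx
  rw [← htrace] at hlt
  exact hi hlt

end Op

open Code in
/-- A form of the strong Chang conjecture. -/
theorem exists_not_countable_closedUnder (hSRP : SRP.{u}) {A : Type u} (hA : aleph 2 ≤ #A)
    {ι : Ω₁.{u} → A} (hι : Function.Injective ι) (G : List A → ℕ → A) {T : Set Ω₁.{u}}
    (hT : IsStationary T) :
    ∃ V : Set A, ¬ V.Countable ∧ ClosedUnder G V ∧ ∃ δ ∈ T, ι ⁻¹' V = Iio δ := by
  let _ : Inhabited A := ⟨ι default⟩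
  let c : Code A := fun _ l n => Function.const A (G (l.map (· default)) n)
  obtain ⟨π, -, ⟨x, hx⟩, C, hC, hCZ⟩ := exists_isClub_image_Iio_mem_of_isProjectiveStationary hSRP
    (hA.trans (mk_le_of_injective ofElem_injective)) (ofElem_injective.comp hι)
    (isProjectiveStationary_traceDeciding hι) c
  obtain ⟨a, ha⟩ : ∃ a, ofElem a ∉ range π := by
    by_contra! h
    have hle : #A ≤ #(range π) :=
      mk_le_of_injective (f := fun a => ⟨_, h a⟩) fun a b hab =>
        ofElem_injective (by simpa using hab)
    have hlt := (hA.trans (hle.trans mk_range_le)).trans_eq (mk_ord_toType _)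
    exact hlt.not_gt (aleph_lt_aleph.2 one_lt_two)
  obtain ⟨D, hD, hDmax⟩ := exists_isClub_not_isTraceMaximal hι ha
  obtain ⟨ξ, hξT, ⟨hξC, hξD⟩, hxξ⟩ :=
    hT ((hC.inter cof_ne_aleph0 hD).inter cof_ne_aleph0 (isClub_Ioi x))
  obtain ⟨⟨hop, hdec⟩, htrace⟩ := hCZ ξ hξC
  obtain ⟨U, hNU, hU, hUtrace, hUc⟩ := exists_not_countable_of_forall_not_isTraceMaximal
    ((countable_Iio ξ).image π) (hdec.resolve_left (hDmax ξ hξD htrace)) hop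
  refine ⟨ofElem ⁻¹' U, hUc, fun l hl n => ?_, ξ, hξT, hUtrace.trans htrace⟩
  have hmap : (l.map (Function.const A)).map (· default) = l := by
    rw [List.map_map]
    exact List.map_id l
  have heval : ofElem (G ((l.map (Function.const A)).map (· default)) n) ∈ U :=
    ofFun_eval_mem hU (hNU ⟨x, hxξ, hx⟩) (by simpa [ofElem] using hl) n
  rwa [hmap] at heval

/-! ### Coding functions by order types -/

theorem nonempty_orderIso_of_countable_Iio {A : Type u} [LinearOrder A] [WellFoundedLT A]
    (hA : ¬ Countable A) (h : ∀ a : A, (Iio a).Countable) : Nonempty (Ω₁.{u} ≃o A) := by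
  have htype : Ordinal.type (α := A) (· < ·) = (aleph 1).ord := by
    refine le_antisymm (le_of_forall_lt fun o ho => ?_) (ord_le.2 ?_)
    · obtain ⟨a, rfl⟩ := Ordinal.typein_surj _ ho
      rw [lt_ord, Ordinal.card_typein]
      exact countable_iff_mk_lt_aleph_one.1 (h a)
    · rwa [Ordinal.card_type, ← not_lt, ← countable_iff_mk_lt_aleph_one]
  rw [← Ordinal.type_toType (aleph 1).ord, Ordinal.type_eq] at htype
  exact htype.map fun e => OrderIso.ofRelIsoLT e.symm

theorem exists_injOn_Iio (β : Ω₂.{u}) : ∃ j : Ω₂.{u} → Ω₁.{u}, InjOn j (Iio β) := by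
  have hβ : #(Iio β) ≤ #Ω₁.{u} := by
    rw [mk_ord_toType, ← lt_succ_iff, succ_aleph, one_add_one_eq_two]
    exact (mk_Iio_lt β (by simp)).trans_eq (mk_ord_toType _)
  obtain ⟨f⟩ := hβ
  refine ⟨Function.extend (↑) f default, injOn_iff_injective.2 ?_⟩
  exact (Function.extend_comp Subtype.val_injective f default).symm.subst f.injective

theorem nonempty_orderIso_image {A B C : Type*} [PartialOrder B] [PartialOrder C] {f : A → B}
    {g : A → C} {s : Set A} (h : ∀ x ∈ s, ∀ y ∈ s, f x ≤ f y ↔ g x ≤ g y) :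
    Nonempty (f '' s ≃o g '' s) := by
  choose p hps hp using fun b : f '' s => b.2
  let φ : f '' s ↪o g '' s := .ofMapLEIff (fun b => ⟨g (p b), mem_image_of_mem g (hps b)⟩)
    fun b b' => by simp [← h _ (hps b) _ (hps b'), hp]
  refine ⟨.ofSurjective φ ?_⟩
  rintro ⟨_, x, hx, rfl⟩
  have hpx := hp ⟨f x, mem_image_of_mem f hx⟩
  exact ⟨_, Subtype.ext <| le_antisymm ((h _ (hps _) x hx).1 hpx.le) ((h x hx _ (hps _)).1 hpx.ge)⟩

theorem exists_orderEmbedding_closedUnder (hSRP : SRP.{u}) {ι : Ω₁.{u} → Ω₂.{u}}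
    (hι : Function.Injective ι) (G : List Ω₂.{u} → ℕ → Ω₂.{u}) {T : Set Ω₁.{u}}
    (hT : IsStationary T) :
    ∃ ψ : Ω₁.{u} ↪o Ω₂.{u}, ClosedUnder G (range ψ) ∧ ∃ δ ∈ T, ι ⁻¹' range ψ = Iio δ := by
  choose j hj using exists_injOn_Iio.{u}
  let G' (l : List Ω₂.{u}) : ℕ → Ω₂.{u}
    | 0 => ι (j (l.headD default) (l.tail.headD default))
    | n + 1 => G l n
  obtain ⟨V, hVc, hV, δ, hδT, hδ⟩ :=
    exists_not_countable_closedUnder hSRP (mk_ord_toType _).ge hι G' hT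
  have hVIio (β : V) : (Iio β).Countable := by
    have hmaps : MapsTo (fun x : V => j β x) (Iio β) (Iio δ) := fun x _ => by
      rw [← hδ]
      exact hV [β, x] (by simp) 0
    exact hmaps.countable_of_injOn (fun x hx y hy hxy => Subtype.ext (hj β hx hy hxy))
      (countable_Iio δ)
  obtain ⟨e⟩ := nonempty_orderIso_of_countable_Iio hVc hVIio
  let ψ : Ω₁.{u} ↪o Ω₂.{u} := e.toOrderEmbedding.trans (OrderEmbedding.subtype V)
  have hψ : range ψ = V := by
    change range (Subtype.val ∘ e) = V
    rw [e.surjective.range_comp, Subtype.range_val]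
  rw [← hψ] at hV hδ
  exact ⟨ψ, fun l hl n => hV l hl (n + 1), δ, hδT, hδ⟩

theorem isProjectiveStationary_setOf_orderIso_Iio (hSRP : SRP.{u}) {ι : Ω₁.{u} → Ω₂.{u}}
    (hι : Function.Injective ι) {S : Ω₁.{u} → Set Ω₁.{u}} (hS : ∀ i, IsStationary (S i)) :
    IsProjectiveStationary ι
      {σ | ∃ δ, ι ⁻¹' σ = Iio δ ∧ ∃ ξ ∈ S δ, Nonempty (σ ≃o Iio ξ)} := by
  refine isProjectiveStationary_of_exists_closedUnder fun G T hT => ?_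
  obtain ⟨ψ, hψ, δ, hδT, hδ⟩ := exists_orderEmbedding_closedUnder hSRP hι G hT
  obtain ⟨C, hC, hCG⟩ := exists_isClub_closedUnder_image_Iio hψ
  obtain ⟨b, hb⟩ := exists_forall_lt_of_countable
    (((countable_Iio δ).image ι).preimage ψ.injective)
  obtain ⟨ξ, hξS, hξC, hbξ⟩ := hS δ (hC.inter cof_ne_aleph0 (isClub_Ioi b))
  have htrace : ι ⁻¹' (ψ '' Iio ξ) = Iio δ := by
    refine Subset.antisymm (hδ ▸ preimage_mono (image_subset_range _ _)) fun i hi => ?_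
    obtain ⟨x, hx⟩ : ι i ∈ range ψ := by rwa [← mem_preimage, hδ]
    exact ⟨x, (hb x ⟨i, hi, hx.symm⟩).trans hbξ, hx⟩
  have e := ((ψ.strictMono.strictMonoOn (Iio ξ)).orderIso ψ).symm
  exact ⟨_, ⟨δ, htrace, ξ, hξS, ⟨e⟩⟩, (countable_Iio ξ).image ψ, hCG ξ hξC, δ, hδT, htrace⟩

/-- An assignment of injections `ω₁ → ω₂` to the functions `h : ω₁ → ω₁` such that `h η` can be
recovered from the order type of the image of `η`, for all `η` in a club depending on `h`. -/
structure OrderTypeCoding where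
  /-- The injection assigned to a function. -/
  inj (h : Ω₁.{u} → Ω₁.{u}) : Ω₁.{u} → Ω₂.{u}
  injective_inj h : Function.Injective (inj h)
  /-- The club on which a function can be recovered. -/
  club (h : Ω₁.{u} → Ω₁.{u}) : Set Ω₁.{u}
  isClub_club h : IsClub (club h)
  eq_of_orderIso {h h' η} : η ∈ club h → η ∈ club h' → inj h '' Iio η ≃o inj h' '' Iio η →
    h η = h' η

theorem nonempty_orderTypeCoding (hSRP : SRP.{u}) : Nonempty OrderTypeCoding.{u} := by
  obtain ⟨ι⟩ : #Ω₁.{u} ≤ #Ω₂.{u} := by simp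
  obtain ⟨S, hS, hdisj⟩ := exists_pairwise_disjoint_isStationary.{u}
  choose π hπ _ C hC hCZ using fun h : Ω₁.{u} → Ω₁.{u} =>
    exists_isClub_image_Iio_mem_of_isProjectiveStationary hSRP (mk_ord_toType _).ge ι.injective
      (isProjectiveStationary_setOf_orderIso_Iio hSRP ι.injective fun δ => hS (h δ)) default
  have hotp {h η} (hη : η ∈ C h) : ∃ ξ ∈ S (h η), Nonempty (π h '' Iio η ≃o Iio ξ) := by
    obtain ⟨⟨δ, hδ, hξ⟩, htrace⟩ := hCZ h η hη
    rwa [Iio_injective (hδ.symm.trans htrace)] at hξ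
  refine ⟨⟨π, hπ, C, hC, fun {h h' η} hη hη' e => ?_⟩⟩
  obtain ⟨ξ, hξ, ⟨i⟩⟩ := hotp hη
  obtain ⟨ξ', hξ', ⟨i'⟩⟩ := hotp hη'
  have hξξ' : ξ = ξ' := PrincipalSeg.top_eq ((i.symm.trans e).trans i').toRelIsoLT
    (principalSegIio ξ) (principalSegIio ξ')
  by_contra hne
  exact disjoint_left.1 (hdisj hne) hξ (hξξ' ▸ hξ')

theorem OrderTypeCoding.exists_isClub_eqOn (c : OrderTypeCoding.{u}) {h h' : Ω₁.{u} → Ω₁.{u}}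
    (e : range (c.inj h) ≃o range (c.inj h')) : ∃ C, IsClub C ∧ EqOn h h' C := by
  let f (x : Ω₁.{u}) : Ω₂.{u} := e ⟨c.inj h x, mem_range_self x⟩
  have hf : Function.Injective f := fun x y hxy =>
    c.injective_inj h (congrArg Subtype.val (e.injective (Subtype.ext hxy)))
  have hfsurj : range (c.inj h') ⊆ range f := fun y hy => by
    obtain ⟨⟨_, x, rfl⟩, hx⟩ := e.surjective ⟨y, hy⟩
    exact ⟨x, congrArg Subtype.val hx⟩
  obtain ⟨D, hD, hDf⟩ := exists_isClub_preimage_image_Iio (c.injective_inj h') hf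
    (range_subset_iff.2 fun x => (e _).2)
  refine ⟨_, ((c.isClub_club h).inter cof_ne_aleph0 (c.isClub_club h')).inter cof_ne_aleph0 hD,
    fun η ⟨⟨hη, hη'⟩, hηD⟩ => ?_⟩
  have himage : f '' Iio η = c.inj h' '' Iio η := by
    conv_lhs => rw [← hDf η hηD]
    exact image_preimage_eq_of_subset ((image_subset_range _ _).trans hfsurj)
  obtain ⟨i⟩ := nonempty_orderIso_image (f := c.inj h) (g := f) (s := Iio η) fun x _ y _ =>
    (e.le_iff_le (x := ⟨_, mem_range_self x⟩) (y := ⟨_, mem_range_self y⟩)).symm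
  exact c.eq_of_orderIso hη hη' (i.trans (OrderIso.setCongr _ _ himage))

theorem exists_eq_of_eqOn_isClub :
    ∃ k : Set Ω₁.{u} → Ω₁.{u} → Ω₁.{u}, ∀ A B C, IsClub C → EqOn (k A) (k B) C → A = B := by
  classical
  obtain ⟨S, hS, hdisj⟩ := exists_pairwise_disjoint_isStationary.{u}
  obtain ⟨b, hb⟩ := exists_forall_lt_of_countable (countable_singleton (default : Ω₁.{u}))
  let k (A : Set Ω₁.{u}) (η : Ω₁.{u}) : Ω₁.{u} := if ∃ i ∈ A, η ∈ S i then default else b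
  have hk {A : Set Ω₁.{u}} {i η : Ω₁.{u}} (hη : η ∈ S i) : k A η = default ↔ i ∈ A := by
    have hiA : (∃ j ∈ A, η ∈ S j) ↔ i ∈ A := by
      refine ⟨fun ⟨j, hj, hηj⟩ => ?_, fun hi => ⟨i, hi, hη⟩⟩
      by_contra hi
      exact disjoint_left.1 (hdisj (ne_of_mem_of_not_mem hj hi)) hηj hη
    simp [k, hiA, (hb default rfl).ne']
  refine ⟨k, fun A B C hC hAB => ext fun i => ?_⟩
  obtain ⟨η, hηS, hηC⟩ := hS i hC
  rw [← hk hηS, hAB hηC, hk hηS]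

theorem OrderTypeCoding.two_power_aleph_one_le (c : OrderTypeCoding.{u}) :
    (2 : Cardinal.{u}) ^ aleph 1 ≤ aleph 2 := by
  obtain ⟨k, hk⟩ := exists_eq_of_eqOn_isClub.{u}
  let otp (h : Ω₁.{u} → Ω₁.{u}) : Ordinal.{u} := Ordinal.type (α := range (c.inj h)) (· < ·)
  have hotp (h) : otp h < (aleph 2).ord := by
    rw [lt_ord, Ordinal.card_type, mk_range_eq _ (c.injective_inj h), mk_ord_toType]
    exact aleph_lt_aleph.2 one_lt_two
  let F (A : Set Ω₁.{u}) : Ω₂.{u} := Ordinal.ToType.mk ⟨otp (k A), hotp (k A)⟩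
  have hF : Function.Injective F := fun A B hAB => by
    obtain ⟨e⟩ := Ordinal.type_eq.1 (congrArg Subtype.val (Ordinal.ToType.mk.injective hAB))
    obtain ⟨C, hC, hCk⟩ := c.exists_isClub_eqOn (OrderIso.ofRelIsoLT e)
    exact hk A B C hC hCk
  simpa only [mk_set, mk_ord_toType] using mk_le_of_injective hF

/-! ### Predictable functions -/

theorem exists_isLUB_of_bddAbove {A : Type*} [LinearOrder A] [WellFoundedLT A] {s : Set A}
    (hs : BddAbove s) : ∃ a, IsLUB s a :=
  ⟨_, wellFounded_lt.min_mem _ hs, fun _ hb => not_lt.1 (wellFounded_lt.not_lt_min _ hb)⟩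

/-- The least element of the club `D` above `η`. -/
noncomputable def next {D : Set Ω₁.{u}} (hD : IsClub D) (η : Ω₁.{u}) : Ω₁.{u} :=
  wellFounded_lt.min (D ∩ Ioi η) (hD.inter cof_ne_aleph0 (isClub_Ioi η)).nonempty

section next

variable {D D' : Set Ω₁.{u}} (hD : IsClub D) (hD' : IsClub D') (η : Ω₁.{u})

theorem next_mem : next hD η ∈ D :=
  (wellFounded_lt.min_mem (D ∩ Ioi η) _).1

theorem lt_next : η < next hD η :=
  (wellFounded_lt.min_mem (D ∩ Ioi η) _).2

theorem next_le_next (h : D' ⊆ D) : next hD η ≤ next hD' η :=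
  not_lt.1 (wellFounded_lt.not_lt_min (D ∩ Ioi η) ⟨h (next_mem hD' η), lt_next hD' η⟩)

end next

/-- A coherent prediction of the functions `h : ω₁ → K`: the restriction of `h` to `η`, together
with the values at ordinals below `η` of an auxiliary function `trace h`, determines `h η` for all
`η` in a club depending on `h`. The existence of such a prediction negates the weak diamond
principle of Devlin and Shelah. -/
structure ClubPrediction (K : Type u) (X : Ω₁.{u} → Type u) where
  /-- The auxiliary function assigned to `h`. -/
  trace (h : Ω₁.{u} → K) (x : Ω₁.{u}) : X x
  /-- The club on which `h` is predicted. -/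
  club (h : Ω₁.{u} → K) : Set Ω₁.{u}
  isClub_club h : IsClub (club h)
  apply_eq {h h' η} : η ∈ club h → η ∈ club h' →
    (∀ x < η, h x = h' x ∧ trace h x = trace h' x) → h η = h' η

namespace ClubPrediction

variable {K : Type u} {X : Ω₁.{u} → Type u} (p : ClubPrediction K X)

/-- Two functions look the same to the prediction `p` below `η`. -/
def EqBelow (h h' : Ω₁.{u} → K) (η : Ω₁.{u}) : Prop :=
  ∀ x < η, h x = h' x ∧ p.trace h x = p.trace h' x

/-- `code h ν` determines `ν` and everything that the prediction `p` sees of `h` below `ν`. -/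
def IsCoding (code : (Ω₁.{u} → K) → Ω₁.{u} → K) : Prop :=
  ∀ h h' ν ν', code h ν = code h' ν' → ν = ν' ∧ p.EqBelow h h' ν

theorem exists_isCoding (hX : ∀ x, #(X x) ≤ #K) (hK : aleph 1 ≤ #K) (hpow : #K ^ ℵ₀ ≤ #K) :
    ∃ code, p.IsCoding code := by
  have hinf : ℵ₀ ≤ #K := (aleph0_le_aleph 1).trans hK
  have hprod (x : Ω₁.{u}) : #(K × X x) ≤ #K := by
    rw [mk_prod, lift_id, lift_id]
    exact (mul_le_mul_right (hX x) _).trans (mul_eq_self hinf).le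
  have hpi (ν : Ω₁.{u}) : #(∀ x : Iio ν, K × X x) ≤ #K := calc
    #(∀ x : Iio ν, K × X x) ≤ #K ^ #(Iio ν) := by
      rw [mk_pi, ← prod_const']
      exact prod_le_prod _ _ fun x => hprod x
    _ ≤ #K ^ ℵ₀ := power_le_power_left (aleph0_pos.trans_le hinf).ne' (countable_Iio ν).le_aleph0
    _ ≤ #K := hpow
  obtain ⟨i⟩ : #(Σ ν : Ω₁.{u}, ∀ x : Iio ν, K × X x) ≤ #K := by
    rw [mk_sigma]
    refine (sum_le_sum _ _ hpi).trans ?_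
    rw [sum_const', mk_ord_toType]
    exact (mul_le_mul_left hK _).trans (mul_eq_self hinf).le
  refine ⟨fun h ν => i ⟨ν, fun x => (h x, p.trace h x)⟩, fun h h' ν ν' hi => ?_⟩
  obtain ⟨rfl, heq⟩ := Sigma.mk.inj (i.injective hi)
  exact ⟨rfl, fun x hx => Prod.mk.inj (congrFun (eq_of_heq heq) ⟨x, hx⟩)⟩

/-- The sequence of functions `h₀ = f, h₁, h₂, …` and of decreasing clubs `D₀, D₁, D₂, …`, where
`hₙ` is predicted on `Dₙ` and `hₙ₊₁ η` encodes `hₙ` up to the next element of `Dₙ` above `η`. -/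
noncomputable def tower (code : (Ω₁.{u} → K) → Ω₁.{u} → K) (f : Ω₁.{u} → K) :
    ℕ → (Ω₁.{u} → K) × {D : Set Ω₁.{u} // IsClub D}
  | 0 => (f, ⟨p.club f, p.isClub_club f⟩)
  | n + 1 =>
    let t := tower code f n
    let h := fun η => code t.1 (next t.2.2 η)
    (h, ⟨t.2 ∩ p.club h, t.2.2.inter cof_ne_aleph0 (p.isClub_club h)⟩)

variable {p} {code : (Ω₁.{u} → K) → Ω₁.{u} → K} {f f' : Ω₁.{u} → K}

theorem tower_subset_club (n : ℕ) :
    ((p.tower code f n).2 : Set Ω₁.{u}) ⊆ p.club (p.tower code f n).1 := by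
  cases n with
  | zero => exact Subset.rfl
  | succ n => exact inter_subset_right

theorem antitone_tower : Antitone fun n => ((p.tower code f n).2 : Set Ω₁.{u}) :=
  antitone_nat_of_succ_le fun _ => inter_subset_left

theorem eqBelow_tower_of_le (hcode : p.IsCoding code) {k n : ℕ} (hkn : k ≤ n)
    {μ : Ω₁.{u}} (h : p.EqBelow (p.tower code f n).1 (p.tower code f' n).1 μ) :
    p.EqBelow (p.tower code f k).1 (p.tower code f' k).1 μ := by
  induction n, hkn using Nat.le_induction with
  | base => exact h
  | succ n _ ih => exact ih fun x hx => (hcode _ _ _ _ (h x hx).1).2 x (lt_next _ x)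

/-- The common members `η` of all clubs of the towers over `f` and `f'` below which all functions
of the two towers agree. -/
def agreeSet (p : ClubPrediction K X) (code : (Ω₁.{u} → K) → Ω₁.{u} → K) (f f' : Ω₁.{u} → K) :
    Set Ω₁.{u} :=
  {η | ∀ n, η ∈ (p.tower code f n).2.1 ∧ η ∈ (p.tower code f' n).2.1 ∧
    p.EqBelow (p.tower code f n).1 (p.tower code f' n).1 η}

theorem dirSupClosed_agreeSet : DirSupClosed (p.agreeSet code f f') := by
  intro d hd hne hdir a ha n
  refine ⟨(p.tower code f n).2.2.dirSupClosed (fun x hx => (hd hx n).1) hne hdir ha,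
    (p.tower code f' n).2.2.dirSupClosed (fun x hx => (hd hx n).2.1) hne hdir ha, fun x hx => ?_⟩
  obtain ⟨y, hy, hxy⟩ := (lt_isLUB_iff ha).1 hx
  exact (hd hy n).2.2 x hxy

theorem exists_gt_mem_agreeSet (hcode : p.IsCoding code) {η : Ω₁.{u}}
    (hη : η ∈ p.agreeSet code f f') : ∃ ν ∈ p.agreeSet code f f', η < ν := by
  let a (n : ℕ) : Ω₁.{u} := next (p.tower code f n).2.2 η
  have hval (n : ℕ) : (p.tower code f n).1 η = (p.tower code f' n).1 η :=
    p.apply_eq (tower_subset_club n (hη n).1) (tower_subset_club n (hη n).2.1) (hη n).2.2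
  have hstep (n : ℕ) : a n = next (p.tower code f' n).2.2 η ∧
      p.EqBelow (p.tower code f n).1 (p.tower code f' n).1 (a n) :=
    hcode _ _ _ _ (hval (n + 1))
  have hmono : Monotone a := fun _ _ h => next_le_next _ _ η (antitone_tower h)
  obtain ⟨b, hb⟩ := exists_forall_lt_of_countable (countable_range a)
  obtain ⟨ν, hν⟩ := exists_isLUB_of_bddAbove ⟨b, fun x hx => (hb x hx).le⟩
  refine ⟨ν, fun k => ?_, (lt_next _ η).trans_le (hν.1 (mem_range_self 0))⟩
  have hνk : IsLUB (a '' Ici k) ν := by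
    refine hν.of_isCofinalFor (image_subset_range a _) ?_
    rintro _ ⟨n, rfl⟩
    exact ⟨a (max k n), mem_image_of_mem a (le_max_left k n), hmono (le_max_right k n)⟩
  have hνD {D : Set Ω₁.{u}} (hD : IsClub D) (ha : ∀ n, k ≤ n → a n ∈ D) : ν ∈ D :=
    hD.isLUB_mem (image_subset_iff.2 ha) (nonempty_Ici.image a) hνk
  refine ⟨hνD (p.tower code f k).2.2 fun n hn => antitone_tower hn (next_mem _ η),
    hνD (p.tower code f' k).2.2 fun n hn => ?_, fun x hx => ?_⟩
  · exact (hstep n).1 ▸ antitone_tower hn (next_mem _ η)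
  · obtain ⟨_, ⟨n, hn, rfl⟩, hxn⟩ := (lt_isLUB_iff hνk).1 hx
    exact eqBelow_tower_of_le hcode hn (hstep n).2 x hxn

theorem eq_of_mem_agreeSet (hcode : p.IsCoding code) {η : Ω₁.{u}}
    (hη : η ∈ p.agreeSet code f f') : f = f' := by
  have hunb : ¬ BddAbove (p.agreeSet code f f') := fun hbdd => by
    obtain ⟨m, hm⟩ := exists_isLUB_of_bddAbove hbdd
    obtain ⟨ν, hν, hmν⟩ := exists_gt_mem_agreeSet hcode
      (dirSupClosed_agreeSet subset_rfl ⟨η, hη⟩ (.of_linearOrder _) hm)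
    exact (hm.1 hν).not_gt hmν
  funext x
  obtain ⟨y, hy, hxy⟩ := not_bddAbove_iff.1 hunb x
  exact ((hy 0).2.2 x hxy).1

theorem mk_power_aleph_one_le (p : ClubPrediction K X) (hX : ∀ x, #(X x) ≤ #K)
    (hK : aleph 1 ≤ #K) (hpow : #K ^ ℵ₀ ≤ #K) : #K ^ aleph 1 ≤ #K := by
  obtain ⟨code, hcode⟩ := p.exists_isCoding hX hK hpow
  choose η hη using fun f => (IsClub.iInter_of_countable cof_ne_aleph0
    fun n => (p.tower code f n).2.2).nonempty
  simp only [mem_iInter] at hη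
  let F (f : Ω₁.{u} → K) (n : ULift.{u} ℕ) : K := code (p.tower code f n.down).1 (η f)
  have hF : Function.Injective F := fun f f' hff' => by
    have hn (n : ℕ) := hcode _ _ _ _ (congrFun hff' ⟨n⟩)
    exact eq_of_mem_agreeSet hcode fun n => ⟨hη f n, (hn n).1 ▸ hη f' n, (hn n).2⟩
  calc #K ^ aleph 1 = #(Ω₁.{u} → K) := by rw [← power_def, mk_ord_toType]
    _ ≤ #(ULift.{u} ℕ → K) := mk_le_of_injective hF
    _ = #K ^ ℵ₀ := by rw [← power_def, mk_uLift, mk_nat, lift_aleph0]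
    _ ≤ #K := hpow

end ClubPrediction

/-- The prediction which knows of `h` the order type of `OrderTypeCoding.inj h '' Iio η`, by
recording which values of `inj h` lie below `inj h y`. -/
def OrderTypeCoding.clubPrediction (c : OrderTypeCoding.{u}) :
    ClubPrediction Ω₁.{u} fun y => Set (Iio y) where
  trace h y := {x | c.inj h x < c.inj h y}
  club := c.club
  isClub_club := c.isClub_club
  apply_eq {h h' η} hη hη' heq := by
    have hlt {x y : Ω₁.{u}} (hy : y < η) (hxy : x < y) :
        c.inj h x < c.inj h y ↔ c.inj h' x < c.inj h' y :=
      Set.ext_iff.1 (heq y hy).2 ⟨x, hxy⟩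
    have hle (x) (hx : x ∈ Iio η) (y) (hy : y ∈ Iio η) :
        c.inj h x ≤ c.inj h y ↔ c.inj h' x ≤ c.inj h' y := by
      rcases lt_trichotomy x y with hxy | rfl | hxy
      · rw [((c.injective_inj h).ne hxy.ne).le_iff_lt, ((c.injective_inj h').ne hxy.ne).le_iff_lt,
          hlt hy hxy]
      · simp only [le_rfl]
      · rw [← not_lt, ← not_lt, hlt hx hxy]
    exact (nonempty_orderIso_image hle).elim (c.eq_of_orderIso hη hη')

theorem OrderTypeCoding.aleph_two_le_two_power_aleph0 (c : OrderTypeCoding.{u}) :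
    aleph 2 ≤ (2 : Cardinal.{u}) ^ ℵ₀ := by
  by_contra! hlt
  have hCH : (2 : Cardinal.{u}) ^ ℵ₀ ≤ aleph 1 := by
    rwa [← lt_succ_iff, succ_aleph, one_add_one_eq_two]
  have hpow : aleph.{u} 1 ^ ℵ₀ ≤ aleph 1 := calc
    aleph.{u} 1 ^ ℵ₀ ≤ (2 ^ ℵ₀) ^ ℵ₀ := power_le_power_right aleph_one_le_continuum
    _ = 2 ^ ℵ₀ := by rw [← power_mul, aleph0_mul_aleph0]
    _ ≤ aleph 1 := hCH
  have hSet (y : Ω₁.{u}) : #(Set (Iio y)) ≤ aleph 1 := by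
    rw [mk_set]
    exact (power_le_power_left two_ne_zero (countable_Iio y).le_aleph0).trans hCH
  have hle := c.clubPrediction.mk_power_aleph_one_le (by simpa only [mk_ord_toType] using hSet)
    (mk_ord_toType _).ge (by rwa [mk_ord_toType])
  rw [mk_ord_toType] at hle
  exact (cantor (aleph 1)).not_ge
    ((power_le_power_right (ofNat_le_aleph0.trans (aleph0_le_aleph 1))).trans hle)

end StrongReflection

/-- SRP implies `2^{ℵ₀} = 2^{ℵ₁} = ℵ₂`. -/
theorem srp_implies_continuum_aleph_two (hSRP : SRP.{u}) :
    (2 : Cardinal.{u}) ^ (Cardinal.aleph 0) = Cardinal.aleph 2 ∧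
    (2 : Cardinal.{u}) ^ (Cardinal.aleph 1) = Cardinal.aleph 2 := by
  obtain ⟨c⟩ := StrongReflection.nonempty_orderTypeCoding hSRP
  have hupper : (2 : Cardinal.{u}) ^ Cardinal.aleph 1 ≤ Cardinal.aleph 2 :=
    c.two_power_aleph_one_le
  have hlower : Cardinal.aleph 2 ≤ (2 : Cardinal.{u}) ^ Cardinal.aleph 0 := by
    simpa only [Cardinal.aleph_zero] using c.aleph_two_le_two_power_aleph0
  have hmono : (2 : Cardinal.{u}) ^ Cardinal.aleph 0 ≤ 2 ^ Cardinal.aleph 1 :=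
    Cardinal.power_le_power_left two_ne_zero (Cardinal.aleph_le_aleph.2 zero_le_one)
  exact ⟨le_antisymm (hmono.trans hupper) hlower, le_antisymm hupper (hlower.trans hmono)⟩
end

section
/- Assume the Strong Reflection Principle (SRP). Then Axiom R holds: if X is a set, Σ ⊆ [X]^{<ω₁} is stationary, and Γ ⊆ [X]^{<ω₂} is tight and unbounded (cofinal in [X]^{<ω₂}), then there is Y ∈ Γ such that 𝒫(Y) ∩ Σ is stationary in [Y]^{<ω₁}. -/
universe u

/-- `Γ ⊆ [X]^{<ω₂}` is tight: whenever `{f α : α < δ}` is an increasing sequence from `Γ`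
with `ω < cf(δ) < ω₂`, its union is in `Γ`. -/
def Tight {X : Type u} (Γ : Set (Set X)) : Prop :=
  ∀ (δ : Ordinal.{u}) (f : Ordinal.{u} → Set X),
    (∀ α < δ, f α ∈ Γ) →
    (∀ α β : Ordinal.{u}, α ≤ β → β < δ → f α ⊆ f β) →
    Cardinal.aleph 0 < δ.cof → δ.cof < Cardinal.aleph 2 →
    (⋃ α ∈ Set.Iio δ, f α) ∈ Γ

/-- Axiom R: if `Σ ⊆ [X]^{<ω₁}` is stationary and `Γ ⊆ [X]^{<ω₂}` is tight and unbounded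
(cofinal in `[X]^{<ω₂}`), then there is `Y ∈ Γ` such that `𝒫(Y) ∩ Σ` is stationary
in `[Y]^{<ω₁}`. -/
def AxiomR : Prop :=
  ∀ (X : Type u) (Sig Γ : Set (Set X)),
    (∀ s ∈ Sig, s.Countable) →
    StationaryOn (Set.univ : Set X) Sig →
    (∀ c ∈ Γ, Cardinal.mk c ≤ Cardinal.aleph 1) →
    Tight Γ →
    (∀ s : Set X, Cardinal.mk s ≤ Cardinal.aleph 1 → ∃ c ∈ Γ, s ⊆ c) →
    ∃ Y ∈ Γ, StationaryOn Y {s ∈ Sig | s ⊆ Y}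

/-!
Code the points of `X`, the subsets of `ω₁` and a cofinal part of `Γ` by ordinals below some `κ`,
and apply SRP at `κ⁺⁺` to the set of countable models `M` that meet a requirement depending only on
the cell of `M ∩ ω₁` in a partition of `ω₁` into stationary sets. Each cell enforces one property of
the reflecting set `Y`.

* In the first cell, the trace of `M` on `X` must lie in `Σ`, unless `M` knows a set containing
  `M ∩ ω₁` over which the traces in `Σ` are not stationary. Since the partition can be chosen with
  `Σ` stationary over this cell, normality of the nonstationary ideal turns a club of such models
  in `Y` into stationarity of `𝒫(Y) ∩ Σ`.
* In two further cells, `sup (M ∩ ν)` must have one of two contradictory colours for every regular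
  `ν ∈ M` above `ω₁`. Hence no countable subset of `Y` is cofinal in such a `Y ∩ ν`, and `Y`
  contains the suprema of its countable subsets that it bounds.
* In the last cell, the colour of `sup (M ∩ κ⁺)` must code a member of `Γ` covering `M ∩ κ`. That
  supremum lies in `Y`, so the countable parts of `Y` are covered by members of `Γ` coded in `Y`,
  and an increasing `ω₁`-chain of those, whose union is in `Γ` by tightness, exhausts the trace of
  `Y`.

That every requirement can be met over every stationary subset of `ω₁` is mutual stationarity for
ordinals of countable cofinality: a model is built from a finite approximation without a winning
strategy for player I in an open game in which I names ordinals below the suprema of the model.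
-/

open Cardinal Set

section Operations

universe v w

variable {α : Type v} {ι : Type w} {κ : Type*}

/-- `M` is closed under the finitary operations `F i`. An operation is applied to lists of every
length, so that a single `F i` also encodes constants and operations of each finite arity. -/
def ClosedUnder (F : ι → List α → α) (M : Set α) : Prop :=
  ∀ i l, (∀ x ∈ l, x ∈ M) → F i l ∈ M

theorem closedUnder_sumElim {F : ι → List α → α} {G : κ → List α → α} {M : Set α} :
    ClosedUnder (Sum.elim F G) M ↔ ClosedUnder F M ∧ ClosedUnder G M :=
  ⟨fun h => ⟨fun i => h (.inl i), fun j => h (.inr j)⟩, fun h => Sum.rec h.1 h.2⟩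

theorem ClosedUnder.iUnion {σ : Type*} [Nonempty σ] {F : ι → List α → α} {s : σ → Set α}
    (hs : Directed (· ⊆ ·) s) (h : ∀ j, ClosedUnder F (s j)) : ClosedUnder F (⋃ j, s j) := by
  classical
  intro i l hl
  obtain ⟨j, hj⟩ := hs.exists_mem_subset_of_finset_subset_biUnion (s := l.toFinset)
    fun x hx => hl x (List.mem_toFinset.1 hx)
  exact mem_iUnion.2 ⟨j, h j i l fun x hx => hj (List.mem_toFinset.2 hx)⟩

/-- The least set containing `S` and closed under the operations `F`. -/
def hull (F : ι → List α → α) : ClosureOperator (Set α) :=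
  .ofCompletePred (ClosedUnder F) fun _ h i l hl M hM => h M hM i l fun x hx => hl x hx M hM

variable {F : ι → List α → α} {S : Set α}

theorem subset_hull : S ⊆ hull F S :=
  (hull F).le_closure S

theorem closedUnder_hull : ClosedUnder F (hull F S) :=
  (hull F).isClosed_closure S

theorem hull_subset {M : Set α} (h : S ⊆ M) (hM : ClosedUnder F M) : hull F S ⊆ M :=
  (hull F).closure_min h hM

theorem hull_iUnion {σ : Type*} [Nonempty σ] {s : σ → Set α} (hs : Directed (· ⊆ ·) s) :
    hull F (⋃ j, s j) = ⋃ j, hull F (s j) := by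
  refine (hull_subset (iUnion_mono fun j => subset_hull) ?_).antisymm
    (iUnion_subset fun j => (hull F).monotone (subset_iUnion s j))
  exact .iUnion (hs.mono_comp _ (hull F).monotone) fun j => closedUnder_hull

theorem mk_hull_le [Countable ι] : #(hull F S) ≤ max ℵ₀ #S := by
  let arity : S ⊕ ι × ℕ → ℕ := Sum.elim (fun _ => 0) Prod.snd
  let eval : WType (fun a => Fin (arity a)) → α := WType.elim α fun
    | ⟨.inl x, _⟩ => x
    | ⟨.inr (i, _), f⟩ => F i (List.ofFn f)
  have hull_le : hull F S ⊆ range eval := by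
    refine hull_subset (fun x hx => ⟨.mk (.inl ⟨x, hx⟩) Fin.elim0, rfl⟩) fun i l hl => ?_
    choose t ht using fun k : Fin l.length => hl (l.get k) (l.get_mem k)
    refine ⟨.mk (.inr (i, l.length)) t, ?_⟩
    change F i (List.ofFn fun k => eval (t k)) = F i l
    simp only [ht, List.ofFn_get]
  have terms_le : #(WType fun a => Fin (arity a)) ≤ lift.{w} (max ℵ₀ #S) := by
    refine WType.cardinalMk_le_max_aleph0_of_finite'.trans (max_le ?_ (by simp))
    rw [mk_sum, lift_add, lift_max, lift_aleph0]
    refine add_le_of_le (le_max_left _ _) ?_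
      ((lift_le_aleph0.2 (lift_le_aleph0.2 mk_le_aleph0)).trans (le_max_left _ _))
    simp
  have : lift.{max v w} #(hull F S) ≤ lift.{v} #(WType fun a => Fin (arity a)) :=
    (lift_le.2 (mk_le_mk_of_subset hull_le)).trans mk_range_le_lift
  rw [lift_umax, lift_id'.{v, w}] at this
  exact lift_le.1 (this.trans terms_le)

theorem countable_hull [Countable ι] (hS : S.Countable) : (hull F S).Countable := by
  rw [← le_aleph0_iff_set_countable] at *
  exact mk_hull_le.trans (max_le le_rfl hS)

/-- A sequence listing the elements of a nonempty countable set. -/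
noncomputable def enumerate [Nonempty α] (S : Set α) : ℕ → α :=
  Classical.epsilon fun f => S = range f

theorem range_enumerate [Nonempty α] (hS : S.Countable) (hne : S.Nonempty) :
    range (enumerate S) = S :=
  (Classical.epsilon_spec (hS.exists_eq_range hne)).symm

end Operations

section Ordinals

/-- The regular uncountable cardinals, seen as initial ordinals. -/
def UncountableRegular (ν : Ordinal.{u}) : Prop :=
  Ordinal.omega0 < ν ∧ ν.cof.ord = ν

theorem uncountableRegular_ord {c : Cardinal.{u}} (hc : c.IsRegular)
    (h : ℵ₀ < c) : UncountableRegular c.ord :=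
  ⟨by rwa [← ord_aleph0, ord_lt_ord], congrArg ord hc.cof_ord⟩

namespace UncountableRegular

variable {ν : Ordinal.{u}}

theorem isSuccLimit (h : UncountableRegular ν) : Order.IsSuccLimit ν :=
  h.2 ▸ isSuccLimit_ord (ord_le_ord.1 (by rw [ord_aleph0, h.2]; exact h.1.le))

theorem succ_lt (h : UncountableRegular ν) {x : Ordinal.{u}} (hx : x < ν) : x + 1 < ν :=
  h.isSuccLimit.succ_lt hx

theorem pos (h : UncountableRegular ν) : 0 < ν :=
  Ordinal.omega0_pos.trans h.1

theorem aleph0_lt_mk_Iio (h : UncountableRegular ν) : ℵ₀ < #(Iio ν) := by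
  rw [mk_Iio_ordinal, ← h.2, card_ord, aleph0_lt_lift, ← ord_lt_ord, ord_aleph0, h.2]
  exact h.1

theorem mk_Iio_lt (h : UncountableRegular ν) {γ : Ordinal.{u}} (hγ : γ < ν) :
    #(Iio γ) < #(Iio ν) := by
  rw [mk_Iio_ordinal, mk_Iio_ordinal, Cardinal.lift_lt]
  rw [← h.2] at hγ ⊢
  rw [card_ord]
  exact lt_ord.1 hγ

theorem exists_bound (h : UncountableRegular ν) {S : Set Ordinal.{u}} (hS : S ⊆ Iio ν)
    (hc : #S < #(Iio ν)) : ∃ b < ν, S ⊆ Iio b := by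
  have : Small.{u} S := small_subset hS
  refine ⟨sSup ((fun x => x + 1) '' S), Ordinal.sSup_add_one_lt_of_lt_cof ?_ hS, fun x hx => ?_⟩
  · rw [← Ordinal.lift_cof]
    rwa [mk_Iio_ordinal, ← h.2, card_ord] at hc
  · exact (lt_add_one x).trans_le (le_csSup Ordinal.bddAbove_of_small (mem_image_of_mem _ hx))

theorem exists_bound_of_countable (h : UncountableRegular ν) {S : Set Ordinal.{u}}
    (hS : S ⊆ Iio ν) (hc : S.Countable) : ∃ b < ν, S ⊆ Iio b :=
  h.exists_bound hS (hc.le_aleph0.trans_lt h.aleph0_lt_mk_Iio)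

theorem exists_limit_iterate (h : UncountableRegular ν) {f : Ordinal.{u} → Ordinal.{u}}
    (hf : ∀ x < ν, x < f x ∧ f x < ν) {o : Ordinal.{u}} (ho : o < ν) :
    ∃ γ < ν, (∀ n, f^[n] o < γ) ∧ ∀ x < γ, ∃ n, x < f^[n] o := by
  have lt_ν : ∀ n, f^[n] o < ν := by
    intro n
    induction n with
    | zero => exact ho
    | succ n ih => rw [Function.iterate_succ_apply']; exact (hf _ ih).2
  obtain ⟨b, hb, hlt⟩ :=
    h.exists_bound_of_countable (range_subset_iff.2 lt_ν) (countable_range _)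
  refine ⟨⨆ n, f^[n] o, (ciSup_le' fun n => (hlt (mem_range_self n)).le).trans_lt hb,
    fun n => ?_, fun x hx => Ordinal.lt_iSup_iff.1 hx⟩
  calc f^[n] o < f^[n + 1] o := by
        rw [Function.iterate_succ_apply']
        exact (hf _ (lt_ν n)).1
    _ ≤ ⨆ n, f^[n] o := Ordinal.le_iSup (fun n => f^[n] o) (n + 1)

end UncountableRegular

theorem uncountableRegular_omega1 : UncountableRegular omega1.{u} :=
  uncountableRegular_ord isRegular_aleph_one aleph0_lt_aleph_one

end Ordinals

section Stationary

variable {ν : Ordinal.{u}} {S T C B : Set Ordinal.{u}}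
  {ι : Type*} {F : ι → List Ordinal.{u} → Ordinal.{u}}

theorem exists_mem_hull_union_Iio {K : Set Ordinal.{u}} {γ x : Ordinal.{u}} (hne : K.Nonempty)
    (hK : ∀ x < γ, ∃ c ∈ K, x < c) (hx : x ∈ hull F (B ∪ Iio γ)) :
    ∃ c ∈ K, x ∈ hull F (B ∪ Iio c) := by
  have := hne.to_subtype
  have hmono : Monotone fun c : K => B ∪ Iio (c : Ordinal.{u}) :=
    fun c d h => union_subset_union_right _ (Iio_subset_Iio h)
  have hsub : B ∪ Iio γ ⊆ ⋃ c : K, B ∪ Iio (c : Ordinal.{u}) := by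
    rintro y (hy | hy)
    · exact mem_iUnion.2 ⟨Classical.arbitrary _, .inl hy⟩
    · obtain ⟨c, hc, hyc⟩ := hK y hy
      exact mem_iUnion.2 ⟨⟨c, hc⟩, .inr hyc⟩
  have hx' := (hull F).monotone hsub hx
  rw [hull_iUnion hmono.directed_le] at hx'
  obtain ⟨c, hc⟩ := mem_iUnion.1 hx'
  exact ⟨c, c.2, hc⟩

/-- The ordinals below `ν` to which the hull with countably many parameters adds nothing below
`ν`. -/
def hullPoints (ν : Ordinal.{u}) (F : ι → List Ordinal.{u} → Ordinal.{u})
    (B : Set Ordinal.{u}) : Set Ordinal.{u} :=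
  {γ | γ < ν ∧ hull F (B ∪ Iio γ) ∩ Iio ν ⊆ Iio γ}

theorem exists_bound_hull [Countable ι] (h : UncountableRegular ν) (hB : B.Countable)
    {γ : Ordinal.{u}} (hγ : γ < ν) : ∃ b < ν, hull F (B ∪ Iio γ) ∩ Iio ν ⊆ Iio b := by
  refine h.exists_bound inter_subset_right ((mk_le_mk_of_subset inter_subset_left).trans_lt
    (mk_hull_le.trans_lt (max_lt h.aleph0_lt_mk_Iio ((mk_union_le _ _).trans_lt ?_))))
  exact add_lt_of_lt h.aleph0_lt_mk_Iio.le (hB.le_aleph0.trans_lt h.aleph0_lt_mk_Iio)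
    (h.mk_Iio_lt hγ)

theorem exists_hullPoint_ge [Countable ι] (h : UncountableRegular ν) (hB : B.Countable)
    {o : Ordinal.{u}} (ho : o < ν) : ∃ γ ∈ hullPoints ν F B, o ≤ γ := by
  choose! b hbν hb using fun γ (hγ : γ < ν) => exists_bound_hull (F := F) h hB hγ
  obtain ⟨γ, hγ, hlt, hcof⟩ := h.exists_limit_iterate (f := fun γ => max (b γ) (γ + 1))
    (fun x hx => ⟨lt_max_of_lt_right (lt_add_one x), max_lt (hbν x hx) (h.succ_lt hx)⟩) ho
  refine ⟨γ, ⟨hγ, fun x hx => ?_⟩, (hlt 0).le⟩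
  obtain ⟨_, ⟨n, rfl⟩, hxn⟩ := exists_mem_hull_union_Iio (range_nonempty _)
    (fun x hx => (hcof x hx).imp' _ fun n hn => ⟨mem_range_self n, hn⟩) hx.1
  have hn := hlt (n + 1)
  rw [Function.iterate_succ_apply'] at hn
  exact (hb _ ((hlt n).trans hγ) ⟨hxn, hx.2⟩).trans ((le_max_left _ _).trans_lt hn)

theorem ordClub_hullPoints [Countable ι] (h : UncountableRegular ν) (hB : B.Countable) :
    OrdClub ν (hullPoints ν F B) := by
  refine ⟨fun γ hγ => hγ.1, fun o ho => exists_hullPoint_ge h hB ho, fun o ho ho0 hlim => ?_⟩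
  refine ⟨ho, fun x hx => ?_⟩
  obtain ⟨c, ⟨hc, hco⟩, hxc⟩ := exists_mem_hull_union_Iio (K := hullPoints ν F B ∩ Iio o)
    ((hlim 0 (pos_iff_ne_zero.2 ho0)).imp fun c hc => ⟨hc.1, hc.2.2⟩)
    (fun x hx => (hlim x hx).imp fun c hc => ⟨⟨hc.1, hc.2.2⟩, hc.2.1⟩) hx.1
  exact (mem_Iio.1 (hc.2 ⟨hxc, hx.2⟩)).trans hco

theorem OrdClub.exists_gt (hC : OrdClub ν C) (h : UncountableRegular ν) {x : Ordinal.{u}}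
    (hx : x < ν) : ∃ c ∈ C, x < c :=
  (hC.2.1 (x + 1) (h.succ_lt hx)).imp fun _ hc => ⟨hc.1, Order.add_one_le_iff.1 hc.2⟩

namespace OrdStationary

theorem mono (hS : OrdStationary ν S) (h : S ⊆ T) (hT : T ⊆ Iio ν) : OrdStationary ν T :=
  ⟨hT, fun C hC => (hS.2 C hC).mono (inter_subset_inter_left _ h)⟩

theorem nonempty (hS : OrdStationary ν S) : S.Nonempty :=
  (hS.2 (Iio ν) ⟨Subset.rfl, fun o ho => ⟨o, ho, le_rfl⟩, fun _ ho _ _ => ho⟩).left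

theorem exists_hullPoint [Countable ι] (hS : OrdStationary ν S) (h : UncountableRegular ν)
    (F : ι → List Ordinal.{u} → Ordinal.{u}) (hB : B.Countable) : ∃ γ ∈ S, γ ∈ hullPoints ν F B :=
  hS.2 _ (ordClub_hullPoints h hB)

theorem exists_mem_diagonal (hS : OrdStationary ν S) (h : UncountableRegular ν)
    {C : Ordinal.{u} → Set Ordinal.{u}} (hC : ∀ i < ν, OrdClub ν (C i)) {b : Ordinal.{u}}
    (hb : b < ν) : ∃ γ ∈ S, b < γ ∧ ∀ i < γ, γ ∈ C i := by
  choose! next next_mem lt_next using fun i (hi : i < ν) x (hx : x < ν) => (hC i hi).exists_gt h hx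
  let F : Unit → List Ordinal.{u} → Ordinal.{u} := fun _ l => next (l.getD 0 0) (l.getD 1 0)
  obtain ⟨γ, hγS, hγν, hγ⟩ := hS.exists_hullPoint h F (countable_singleton b)
  have hbγ : b < γ := hγ ⟨subset_hull (.inl rfl), hb⟩
  refine ⟨γ, hγS, hbγ, fun i hi => (hC i (hi.trans hγν)).2.2 γ hγν hbγ.ne_bot fun x hx => ?_⟩
  have hmem := next_mem i (hi.trans hγν) x (hx.trans hγν)
  refine ⟨next i x, hmem, lt_next i (hi.trans hγν) x (hx.trans hγν),
    hγ ⟨closedUnder_hull (F := F) () [i, x] ?_, (hC i (hi.trans hγν)).1 hmem⟩⟩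
  simp only [List.mem_cons, List.not_mem_nil, or_false, forall_eq_or_imp, forall_eq]
  exact ⟨subset_hull (.inr hi), subset_hull (.inr hx)⟩

theorem inter_Ioi (hS : OrdStationary ν S) (h : UncountableRegular ν) {b : Ordinal.{u}}
    (hb : b < ν) : OrdStationary ν (S ∩ Ioi b) := by
  refine ⟨inter_subset_left.trans hS.1, fun C hC => ?_⟩
  obtain ⟨γ, hγ, hbγ, hγC⟩ := hS.exists_mem_diagonal h (C := fun _ => C) (fun _ _ => hC) hb
  exact ⟨γ, ⟨hγ, hbγ⟩, hγC b hbγ⟩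

theorem fodor (hS : OrdStationary ν S) (h : UncountableRegular ν) {b : Ordinal.{u}} (hb : b < ν)
    {g : Ordinal.{u} → Ordinal.{u}} (hg : ∀ γ ∈ S, b < γ → g γ < γ) :
    ∃ η < ν, OrdStationary ν {γ ∈ S | g γ = η} := by
  by_contra! hc
  have avoid : ∀ η < ν, ∃ C, OrdClub ν C ∧ ¬({γ ∈ S | g γ = η} ∩ C).Nonempty := fun η hη => by
    by_contra! hall
    exact hc η hη ⟨fun γ hγ => hS.1 hγ.1, hall⟩
  choose! C hC hdisj using avoid
  obtain ⟨γ, hγ, hbγ, hdiag⟩ := hS.exists_mem_diagonal h hC hb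
  have hlt := hg γ hγ hbγ
  exact hdisj (g γ) (hlt.trans (hS.1 hγ)) ⟨γ, ⟨hγ, rfl⟩, hdiag _ hlt⟩

theorem exists_of_countable_cover {σ : Type*} [Countable σ] (hS : OrdStationary ν S)
    (h : UncountableRegular ν) {P : σ → Set Ordinal.{u}} (hP : ∀ γ ∈ S, ∃ i, γ ∈ P i) :
    ∃ i, OrdStationary ν (S ∩ P i) := by
  obtain ⟨f, hf⟩ := exists_injective_nat σ
  have : Nonempty σ := let ⟨γ, hγ⟩ := hS.nonempty; (hP γ hγ).nonempty
  choose! g hg using hP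
  obtain ⟨η, -, hη⟩ := hS.fodor h h.1 (g := fun γ => (f (g γ) : Ordinal.{u}))
    fun γ _ hγ => (Ordinal.natCast_lt_omega0 _).trans hγ
  obtain ⟨γ, -, hγ⟩ := hη.nonempty
  refine ⟨g γ, hη.mono (fun x hx => ⟨hx.1, ?_⟩) (inter_subset_left.trans hS.1)⟩
  rw [← hf (Nat.cast_injective (hx.2.trans hγ.symm))]
  exact hg x hx.1

end OrdStationary

/-- `a` is a countable cofinal subset of the ordinal `γ`; a witness for `cf γ ≤ ω`. -/
def CountableCofinal (a : Set Ordinal.{u}) (γ : Ordinal.{u}) : Prop :=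
  a.Countable ∧ a ⊆ Iio γ ∧ ∀ x < γ, ∃ y ∈ a, x ≤ y

/-- The ordinals below `ν` of countable cofinality. -/
def countableCof (ν : Ordinal.{u}) : Set Ordinal.{u} :=
  {γ | γ < ν ∧ ∃ a, CountableCofinal a γ}

theorem ordStationary_countableCof (h : UncountableRegular ν) :
    OrdStationary ν (countableCof ν) := by
  refine ⟨fun x hx => hx.1, fun C hC => ?_⟩
  choose! next next_mem lt_next using fun x (hx : x < ν) => hC.exists_gt h hx
  obtain ⟨γ, hγ, hlt, hcof⟩ :=
    h.exists_limit_iterate (fun x hx => ⟨lt_next x hx, hC.1 (next_mem x hx)⟩) h.pos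
  refine ⟨γ, ⟨hγ, _, countable_range fun n => next^[n] 0, range_subset_iff.2 hlt, fun x hx =>
    (hcof x hx).imp' _ fun n hn => ⟨mem_range_self n, hn.le⟩⟩,
    hC.2.2 γ hγ (hlt 0).ne_bot fun x hx => ?_⟩
  obtain ⟨n, hn⟩ := hcof x hx
  have hnν := (hlt n).trans hγ
  refine ⟨next (next^[n] 0), next_mem _ hnν, hn.trans (lt_next _ hnν), ?_⟩
  rw [← Function.iterate_succ_apply' next]
  exact hlt (n + 1)

theorem exists_ladder : ∃ g : Ordinal.{u} → ℕ → Ordinal.{u}, ∀ γ ∈ countableCof ν, 0 < γ →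
    (∀ n, g γ n < γ) ∧ ∀ x < γ, ∃ n, x ≤ g γ n := by
  have ladder : ∀ γ ∈ countableCof ν, 0 < γ → ∃ g : ℕ → Ordinal.{u},
      (∀ n, g n < γ) ∧ ∀ x < γ, ∃ n, x ≤ g n := by
    rintro γ ⟨-, a, ha, haγ, hcof⟩ h0
    obtain ⟨g, rfl⟩ := ha.exists_eq_range ((hcof 0 h0).imp fun _ hy => hy.1)
    exact ⟨g, range_subset_iff.1 haγ, fun x hx => exists_range_iff.1 (hcof x hx)⟩
  choose! g hg using ladder
  exact ⟨g, hg⟩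

theorem exists_unbounded_coordinate (h : UncountableRegular ν) {g : Ordinal.{u} → ℕ → Ordinal.{u}}
    (hg : ∀ γ ∈ countableCof ν, 0 < γ → ∀ x < γ, ∃ n, x ≤ g γ n) :
    ∃ n, ∀ ξ < ν, OrdStationary ν {γ ∈ countableCof ν | ξ ≤ g γ n} := by
  by_contra! hc
  choose ξ hξν hξ using hc
  obtain ⟨b, hb, hξb⟩ :=
    h.exists_bound_of_countable (range_subset_iff.2 hξν) (countable_range ξ)
  obtain ⟨n, hn⟩ := ((ordStationary_countableCof h).inter_Ioi h hb).exists_of_countable_cover h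
    (P := fun n => {γ | b ≤ g γ n}) fun γ hγ => hg γ hγ.1 (pos_of_gt hγ.2) b hγ.2
  exact hξ n (hn.mono (fun γ hγ => ⟨hγ.1.1, (hξb ⟨n, rfl⟩).le.trans hγ.2⟩) fun γ hγ => hγ.1.1)

theorem mk_stationary_values (h : UncountableRegular ν) {g : Ordinal.{u} → Ordinal.{u}}
    (hg : ∀ γ ∈ countableCof ν, 0 < γ → g γ < γ)
    (hunbdd : ∀ ξ < ν, OrdStationary ν {γ ∈ countableCof ν | ξ ≤ g γ}) :
    #{η | η < ν ∧ OrdStationary ν {γ ∈ countableCof ν | g γ = η}} = #(Iio ν) := by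
  refine (mk_le_mk_of_subset fun η hη => hη.1).antisymm (not_lt.1 fun hlt => ?_)
  obtain ⟨b, hb, hsub⟩ := h.exists_bound (fun η hη => hη.1) hlt
  obtain ⟨η, hη, hstat⟩ := (hunbdd b hb).fodor h h.pos fun γ hγ => hg γ hγ.1
  have hηb : η < b := hsub ⟨hη, hstat.mono (fun γ hγ => ⟨hγ.1.1, hγ.2⟩) fun γ hγ => hγ.1.1⟩
  obtain ⟨γ, ⟨-, hbγ⟩, rfl⟩ := hstat.nonempty
  exact hbγ.not_gt hηb

-- Solovay's splitting theorem for the ordinals of countable cofinality: one coordinate of a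
-- choice of cofinal sequences is unbounded on stationary sets, and by Fodor's lemma it is constant
-- on stationary sets for `ν` many values.
theorem exists_stationary_coloring (h : UncountableRegular ν) :
    ∃ c : Ordinal.{u} → Ordinal.{u},
      ∀ j < ν, OrdStationary ν {γ ∈ countableCof ν | c γ = j} := by
  obtain ⟨g, hg⟩ := exists_ladder (ν := ν)
  obtain ⟨n, hn⟩ := exists_unbounded_coordinate h fun γ hγ h0 => (hg γ hγ h0).2
  obtain ⟨e⟩ := Cardinal.eq.1
    (mk_stationary_values h (g := (g · n)) (fun γ hγ h0 => (hg γ hγ h0).1 n) hn)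
  classical
  refine ⟨fun γ => if hγ : _ then e ⟨g γ n, hγ⟩ else 0, fun j hj => ?_⟩
  obtain ⟨η, hη⟩ := e.surjective ⟨j, hj⟩
  refine η.2.2.mono (fun γ hγ => ⟨hγ.1, ?_⟩) fun γ hγ => hγ.1.1
  have hγη : (⟨g γ n, hγ.2 ▸ η.2⟩ : {η | _}) = η := Subtype.ext hγ.2
  beta_reduce
  rw [dif_pos (hγ.2 ▸ η.2), hγη, hη]

/-- A colouring each of whose `ν` colours is taken stationarily often on the ordinals below `ν` of
countable cofinality. -/
noncomputable def stationaryColor (ν : Ordinal.{u}) : Ordinal.{u} → Ordinal.{u} :=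
  Classical.epsilon fun c => ∀ j < ν, OrdStationary ν {γ ∈ countableCof ν | c γ = j}

theorem ordStationary_stationaryColor (h : UncountableRegular ν) {j : Ordinal.{u}} (hj : j < ν) :
    OrdStationary ν {γ ∈ countableCof ν | stationaryColor ν γ = j} :=
  Classical.epsilon_spec (exists_stationary_coloring h) j hj

end Stationary

section Countable

variable {α : Type*} {A : Set α} {C : Set (Set α)}

theorem ClubOn.exists_list_family (hC : ClubOn A C) (hA : A.Nonempty) :
    ∃ c : List α → Set α, (∀ l, c l ∈ C ∧ (c l).Nonempty) ∧
      ∀ a l, c l ⊆ c (a :: l) ∧ (a ∈ A → a ∈ c (a :: l)) := by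
  obtain ⟨a₀, ha₀⟩ := hA
  obtain ⟨c₀, hc₀, ha₀c₀⟩ := hC.2.1 {a₀} (singleton_subset_iff.2 ha₀) (countable_singleton a₀)
  have extend : ∀ (s : C) (a : α), ∃ s' : C, s.1 ⊆ s'.1 ∧ (a ∈ A → a ∈ s'.1) := by
    intro s a
    obtain ⟨c, hc, hsub⟩ := hC.2.1 (s.1 ∪ ({a} ∩ A))
      (union_subset (hC.1 _ s.2).1 inter_subset_right)
      ((hC.1 _ s.2).2.union ((countable_singleton a).mono inter_subset_left))
    exact ⟨⟨c, hc⟩, fun x hx => hsub (.inl hx), fun ha => hsub (.inr ⟨rfl, ha⟩)⟩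
  choose e subset_e mem_e using extend
  let c : List α → C := fun l => l.foldr (fun a s => e s a) ⟨c₀, hc₀⟩
  refine ⟨fun l => c l, fun l => ⟨(c l).2, a₀, ?_⟩, fun a l => ⟨subset_e _ a, mem_e _ a⟩⟩
  induction l with
  | nil => exact ha₀c₀ rfl
  | cons a l ih => exact subset_e (c l) a ih

theorem ClubOn.iUnion_list_mem (hC : ClubOn A C) {c : List α → Set α} (hc : ∀ l, c l ∈ C)
    (hcons : ∀ a l, c l ⊆ c (a :: l) ∧ (a ∈ A → a ∈ c (a :: l))) {M : Set α} (hM : M.Countable)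
    (hne : M.Nonempty) (hMA : M ⊆ A) (hcl : ∀ l, (∀ x ∈ l, x ∈ M) → c l ⊆ M) : M ∈ C := by
  obtain ⟨m, rfl⟩ := hM.exists_eq_range hne
  let l : ℕ → List α := fun n => n.rec [] fun k l => m k :: l
  have hl : ∀ n, ∀ x ∈ l n, x ∈ range m := by
    intro n
    induction n with
    | zero => exact fun x hx => absurd hx List.not_mem_nil
    | succ n ih => exact List.forall_mem_cons.2 ⟨mem_range_self n, ih⟩
  have hunion : ⋃ n, c (l n) = range m := by
    refine (iUnion_subset fun n => hcl _ (hl n)).antisymm (range_subset_iff.2 fun n => ?_)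
    exact mem_iUnion.2 ⟨n + 1, (hcons (m n) (l n)).2 (hMA ⟨n, rfl⟩)⟩
  rw [← hunion]
  exact hC.2.2 _ (fun n => hc _) (monotone_nat_of_le_succ fun n => (hcons _ _).1)

-- Kueker's theorem: every club contains the closed sets of countably many operations.
theorem ClubOn.exists_operations (hC : ClubOn A C) (hA : A.Nonempty) :
    ∃ F : ℕ → List α → α, (∀ n l, F n l ∈ A) ∧
      ∀ M : Set α, M.Countable → M ⊆ A → ClosedUnder F M → M ∈ C := by
  have := hA.to_type
  obtain ⟨c, hc, hcons⟩ := hC.exists_list_family hA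
  have hrange : ∀ l, range (enumerate (c l)) = c l := fun l =>
    range_enumerate (hC.1 _ (hc l).1).2 (hc l).2
  have hmem : ∀ n l, enumerate (c l) n ∈ c l := fun n l => (hrange l).subset ⟨n, rfl⟩
  refine ⟨fun n l => enumerate (c l) n, fun n l => (hC.1 _ (hc l).1).1 (hmem n l),
    fun M hM hMA hcl => hC.iUnion_list_mem (fun l => (hc l).1) hcons hM
      ⟨_, hcl 0 [] fun x hx => absurd hx List.not_mem_nil⟩ hMA fun l hl => ?_⟩
  rw [← hrange l]
  exact range_subset_iff.2 fun n => hcl n l hl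

theorem countable_Iio_of_lt_omega1 {δ : Ordinal.{u}} (h : δ < omega1) : (Iio δ).Countable := by
  rw [← le_aleph0_iff_set_countable, mk_Iio_ordinal, lift_le_aleph0, ← Order.lt_succ_iff,
    succ_aleph0]
  exact lt_ord.1 h

theorem ClubOn.exists_superset_inter_omega1 {A : Set Ordinal.{u}} {D : Set (Set Ordinal.{u})}
    (hD : ClubOn A D) (hA : Iio omega1 ⊆ A) {T : Set Ordinal.{u}} (hT : OrdStationary omega1 T)
    {a : Set Ordinal.{u}} (haA : a ⊆ A) (ha : a.Countable) :
    ∃ M ∈ D, a ⊆ M ∧ ∃ δ ∈ T, M ∩ Iio omega1 = Iio δ := by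
  obtain ⟨F, hFA, hF⟩ := hD.exists_operations ⟨0, hA uncountableRegular_omega1.pos⟩
  obtain ⟨δ, hδT, hδ, hsub⟩ := hT.exists_hullPoint uncountableRegular_omega1 F ha
  refine ⟨_, hF (hull F (a ∪ Iio δ)) (countable_hull (ha.union (countable_Iio_of_lt_omega1 hδ)))
    (hull_subset (union_subset haA ((Iio_subset_Iio hδ.le).trans hA)) fun n l _ => hFA n l)
    closedUnder_hull, subset_union_left.trans subset_hull, δ, hδT, hsub.antisymm fun x hx => ?_⟩
  exact ⟨subset_hull (.inr hx), lt_trans hx hδ⟩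

end Countable

section Game

variable {ι : Type*} {F : ι → List Ordinal.{u} → Ordinal.{u}} {R : Set Ordinal.{u}}
  {t : List Ordinal.{u}}

theorem UncountableRegular.exists_bound_range {ν : Ordinal.{u}} (h : UncountableRegular ν)
    {σ : Type (u + 1)} (hσ : #σ < #(Iio ν)) (f : σ → Ordinal.{u}) :
    ∃ b < ν, ∀ j, f j < ν → f j < b := by
  obtain ⟨b, hb, hfb⟩ := h.exists_bound (S := range f ∩ Iio ν) inter_subset_right
    ((mk_le_mk_of_subset inter_subset_left).trans_lt (mk_range_le.trans_lt hσ))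
  exact ⟨b, hb, fun j hj => hfb ⟨mem_range_self j, hj⟩⟩

/-- Rules of an infinite game in which a list of ordinals, the position, is built. In each round
player I chooses some `ν ∈ R` in the hull of the position and some `ξ ∈ moves ν`, and player II
adds to the position an ordinal `η` with `ξ < η < ν`. Player II has to keep the hull of every
position `ok`. -/
structure Rules : Type (u + 1) where
  moves : Ordinal.{u} → Set Ordinal.{u}
  ok : Set Ordinal.{u} → Prop

/-- `m = (ν, ξ)` is a move of player I at the position `t`. -/
def Legal (F : ι → List Ordinal.{u} → Ordinal.{u}) (R : Set Ordinal.{u}) (G : Rules.{u})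
    (t : List Ordinal.{u}) (m : Ordinal.{u} × Ordinal.{u}) : Prop :=
  m.1 ∈ hull F {x | x ∈ t} ∧ m.1 ∈ R ∧ m.2 ∈ G.moves m.1

/-- The strategy `τ` leads player I from the position `t` in finitely many rounds to a position
that is not `ok`. -/
inductive WinsWith (F : ι → List Ordinal.{u} → Ordinal.{u}) (R : Set Ordinal.{u}) (G : Rules.{u})
    (τ : List Ordinal.{u} → Ordinal.{u} × Ordinal.{u}) : List Ordinal.{u} → Prop
  | bad {t : List Ordinal.{u}} : ¬ G.ok (hull F {x | x ∈ t}) → WinsWith F R G τ t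
  | play {t : List Ordinal.{u}} : Legal F R G t (τ t) →
      (∀ η, (τ t).2 < η → η < (τ t).1 → WinsWith F R G τ (η :: t)) → WinsWith F R G τ t

/-- Player I has no winning strategy from the position `t`. -/
def Alive (F : ι → List Ordinal.{u} → Ordinal.{u}) (R : Set Ordinal.{u}) (G : Rules.{u})
    (t : List Ordinal.{u}) : Prop :=
  ∀ τ, ¬ WinsWith F R G τ t

/-- Inside `N`, player II can answer the moves under the rules `G'` by answering moves under `G`: a
move under `G'` is a move in `N` under `G`, or `ν` is unrestricted under `G` and of cofinality
larger than `c`, so that `c` many moves can be exceeded at once. -/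
def Rules.SimulatedBy (R N : Set Ordinal.{u}) (c : Cardinal.{u + 1})
    (G' G : Rules.{u}) : Prop :=
  (∀ S ⊆ N, G.ok S → G'.ok S) ∧ ∀ ν ∈ N, ν ∈ R → ∀ ξ ∈ G'.moves ν,
    (ξ ∈ N ∧ ξ ∈ G.moves ν) ∨ (G.moves ν = Iio ν ∧ ξ < ν ∧ c < #(Iio ν))

variable {G : Rules.{u}}

theorem WinsWith.congr {τ τ' : List Ordinal.{u} → Ordinal.{u} × Ordinal.{u}}
    (h : WinsWith F R G τ t) (heq : ∀ t', t <:+ t' → τ t' = τ' t') : WinsWith F R G τ' t := by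
  induction h with
  | bad hbad => exact .bad hbad
  | @play t hlegal _ ih =>
    have hτ := heq t List.suffix_rfl
    exact .play (hτ ▸ hlegal) fun η h₁ h₂ => ih η (hτ ▸ h₁) (hτ ▸ h₂) fun t' ht' =>
      heq t' ((List.suffix_cons η t).trans ht')

namespace Alive

theorem ok (h : Alive F R G t) : G.ok (hull F {x | x ∈ t}) :=
  not_not.1 fun hbad => h (fun _ => 0) (.bad hbad)

-- Winning strategies after the single replies would combine to a winning strategy at `t`.
theorem exists_reply (h : Alive F R G t) {m : Ordinal.{u} × Ordinal.{u}}
    (hm : Legal F R G t m) : ∃ η, m.2 < η ∧ η < m.1 ∧ Alive F R G (η :: t) := by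
  classical
  by_contra! hwin
  simp only [Alive, not_forall, not_not] at hwin
  choose! τ hτ using hwin
  let σ : List Ordinal.{u} → Ordinal.{u} × Ordinal.{u} := fun t' =>
    if h : ∃ η, η :: t <:+ t' then τ h.choose t' else m
  have σ_start : σ t = m := dif_neg fun ⟨η, hη⟩ => absurd hη.length_le (by simp)
  have σ_after : ∀ η t', η :: t <:+ t' → τ η t' = σ t' := fun η t' ht' => by
    have hex : ∃ η, η :: t <:+ t' := ⟨η, ht'⟩
    have heq := (List.suffix_of_suffix_length_le ht' hex.choose_spec le_rfl).eq_of_length rfl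
    simp only [σ, dif_pos hex, ← (List.cons.inj heq).1]
  refine h σ (.play (σ_start ▸ hm) fun η h₁ h₂ => ?_)
  rw [σ_start] at h₁ h₂
  exact (hτ η h₁ h₂).congr (σ_after η)

-- If player I had a winning strategy under each of the rules `G' j`, then player II, answering at
-- unrestricted `ν` the supremum of the moves of all these strategies, would survive one of them.
theorem transfer (hR : ∀ ν ∈ R, UncountableRegular ν) (h : Alive F R G t)
    {σ : Type (u + 1)} (G' : σ → Rules.{u})
    (H : ∀ Q : ι ⊕ Bool → List Ordinal.{u} → Ordinal.{u}, ∃ j N, ClosedUnder Q N ∧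
      (∀ x ∈ t, x ∈ N) ∧ (G' j).SimulatedBy R N #σ G) :
    ∃ j, Alive F R (G' j) t := by
  by_contra! hwin
  simp only [Alive, not_forall, not_not] at hwin
  choose τ hτ using hwin
  choose! reply hreply using fun t' (ht' : Alive F R G t') m (hm : Legal F R G t' m) =>
    ht'.exists_reply hm
  choose! bound hbound using fun t' ν (hν : ν ∈ R) (hσ : #σ < #(Iio ν)) =>
    (hR ν hν).exists_bound_range hσ fun j => (τ j t').2
  obtain ⟨j, N, hN, htN, hok, hmoves⟩ := H (Sum.elim F fun
    | true, ν :: ξ :: t' => reply t' (ν, ξ)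
    | false, ν :: t' => bound t' ν
    | _, _ => 0)
  have hNF : ClosedUnder F N := (closedUnder_sumElim.1 hN).1
  have dead : ∀ t', WinsWith F R (G' j) (τ j) t' → (∀ x ∈ t', x ∈ N) → ¬ Alive F R G t' := by
    intro t' hwin
    induction hwin with
    | bad hbad => exact fun ht' halive => hbad (hok _ (hull_subset ht' hNF) halive.ok)
    | @play t' hlegal _ ih =>
      intro ht' halive
      have hνN : (τ j t').1 ∈ N := hull_subset ht' hNF hlegal.1
      obtain ⟨ξ, hξN, hξ, hle⟩ : ∃ ξ ∈ N, ξ ∈ G.moves (τ j t').1 ∧ (τ j t').2 ≤ ξ := by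
        rcases hmoves _ hνN hlegal.2.1 _ hlegal.2.2 with hmem | ⟨hfree, hlt, hσ⟩
        · exact ⟨_, hmem.1, hmem.2, le_rfl⟩
        · obtain ⟨hlt_ν, hlt_bound⟩ := hbound t' _ hlegal.2.1 hσ
          exact ⟨bound t' (τ j t').1, hN (.inr false) (_ :: t') (List.forall_mem_cons.2 ⟨hνN, ht'⟩),
            hfree ▸ hlt_ν, (hlt_bound j hlt).le⟩
      obtain ⟨h₁, h₂, h₃⟩ := hreply t' halive (_, ξ) ⟨hlegal.1, hlegal.2.1, hξ⟩
      refine ih _ (hle.trans_lt h₁) h₂ (List.forall_mem_cons.2 ⟨?_, ht'⟩) h₃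
      exact hN (.inr true) (_ :: ξ :: t')
        (List.forall_mem_cons.2 ⟨hνN, List.forall_mem_cons.2 ⟨hξN, ht'⟩⟩)
  exact dead t (hτ j) htN h

end Alive

/-- The additional requirement on player II that the hull of the position meets `K` inside `A`. -/
def Rules.confine (G : Rules.{u}) (K A : Set Ordinal.{u}) : Rules.{u} :=
  ⟨G.moves, fun S => G.ok S ∧ S ∩ K ⊆ A⟩

/-- The rules after the supremum of the final model below `ν` has been fixed to be `γ`: player I
only chooses `ξ` from a cofinal subset `a` of `γ`. -/
def Rules.settle (G : Rules.{u}) (ν γ : Ordinal.{u}) (a : Set Ordinal.{u}) : Rules.{u} :=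
  open Classical in ⟨Function.update G.moves ν a, (G.confine (Iio ν) (Iio γ)).ok⟩

/-- The moves of player I at those `ν` that are not unrestricted. -/
def Rules.settledMoves (R : Set Ordinal.{u}) (G : Rules.{u}) : Set Ordinal.{u} :=
  ⋃ ν ∈ {ν ∈ R | G.moves ν ≠ Iio ν}, G.moves ν

namespace Rules

/-- The rules without any restrictions. -/
def free : Rules.{u} :=
  ⟨Iio, fun _ => True⟩

variable {ν γ : Ordinal.{u}} {a : Set Ordinal.{u}}

theorem settle_moves_self : (G.settle ν γ a).moves ν = a :=
  Function.update_self ..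

theorem settle_moves_of_ne {ν' : Ordinal.{u}} (h : ν' ≠ ν) :
    (G.settle ν γ a).moves ν' = G.moves ν' :=
  Function.update_of_ne h ..

theorem settled_settle_subset : {ν' ∈ R | (G.settle ν γ a).moves ν' ≠ Iio ν'} ⊆
    insert ν {ν' ∈ R | G.moves ν' ≠ Iio ν'} :=
  fun _ h => or_iff_not_imp_left.2 fun hne => ⟨h.1, settle_moves_of_ne hne ▸ h.2⟩

theorem settled_settle_free_subset : {ν' ∈ R | (free.settle ν γ a).moves ν' ≠ Iio ν'} ⊆ {ν} :=
  fun _ h => (settled_settle_subset h).resolve_right fun h => h.2 rfl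

end Rules

namespace Alive

theorem free (hR : ∀ ν ∈ R, UncountableRegular ν) : Alive F R .free t := by
  intro τ hwin
  induction hwin with
  | bad hbad => exact hbad trivial
  | play hlegal _ ih => exact ih _ (lt_add_one _) ((hR _ hlegal.2.1).succ_lt hlegal.2.2)

theorem settle [Countable ι] (hR : ∀ ν ∈ R, UncountableRegular ν) (h : Alive F R G t)
    (hG : (G.settledMoves R).Countable) {ν : Ordinal.{u}} (hν : ν ∈ R) (hfree : G.moves ν = Iio ν)
    {E : Set Ordinal.{u}} (hE : OrdStationary ν E) {a : Ordinal.{u} → Set Ordinal.{u}}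
    (ha : ∀ γ ∈ E, a γ ⊆ Iio γ) : ∃ γ ∈ E, Alive F R (G.settle ν γ (a γ)) t := by
  refine (h.transfer hR (fun γ : E => G.settle ν γ (a γ)) fun Q => ?_).elim
    fun γ hγ => ⟨γ, γ.2, hγ⟩
  obtain ⟨γ, hγE, hγν, hsub⟩ := hE.exists_hullPoint (hR ν hν) Q
    ((List.finite_toSet t).countable.union hG)
  refine ⟨⟨γ, hγE⟩, hull Q ({x | x ∈ t} ∪ G.settledMoves R ∪ Iio γ), closedUnder_hull,
    fun x hx => subset_hull (.inl (.inl hx)),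
    fun S hS hok => ⟨hok, (inter_subset_inter_left _ hS).trans hsub⟩,
    fun ν' hν'N hν'R ξ hξ => ?_⟩
  rcases eq_or_ne ν' ν with rfl | hne
  · have hξγ : ξ < γ := ha γ hγE (by simpa only [Rules.settle_moves_self] using hξ)
    exact .inl ⟨subset_hull (.inr hξγ), hfree ▸ hξγ.trans hγν⟩
  have hξ' : ξ ∈ G.moves ν' := by rwa [Rules.settle_moves_of_ne hne] at hξ
  by_cases hfree' : G.moves ν' = Iio ν'
  · have hξν' : ξ < ν' := by rwa [hfree'] at hξ'
    rcases hne.lt_or_gt with hlt | hgt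
    · exact .inl ⟨subset_hull (.inr (hξν'.trans (hsub ⟨hν'N, hlt⟩))), hξ'⟩
    · exact .inr ⟨hfree', hξν',
        (mk_le_mk_of_subset hE.1).trans_lt ((hR ν' hν'R).mk_Iio_lt hgt)⟩
  · exact .inl ⟨subset_hull (.inl (.inr (mem_biUnion ⟨hν'R, hfree'⟩ hξ'))), hξ'⟩

theorem confine [Countable ι] (hR : ∀ ν ∈ R, UncountableRegular ν) (h : Alive F R G t)
    (hG : (G.settledMoves R).Countable) {σ : Type (u + 1)}
    (hσ : ∀ ν ∈ R, G.moves ν = Iio ν → #σ < #(Iio ν)) {K : Set Ordinal.{u}}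
    {A : σ → Set Ordinal.{u}} (hA : ∀ b ⊆ K, b.Countable → ∃ j, b ⊆ A j) :
    ∃ j, Alive F R (G.confine K (A j)) t := by
  refine h.transfer hR (fun j => G.confine K (A j)) fun Q => ?_
  have hcount : (hull Q ({x | x ∈ t} ∪ G.settledMoves R)).Countable :=
    countable_hull ((List.finite_toSet t).countable.union hG)
  obtain ⟨j, hj⟩ := hA (hull Q ({x | x ∈ t} ∪ G.settledMoves R) ∩ K) inter_subset_right
    (hcount.mono inter_subset_left)
  refine ⟨j, _, closedUnder_hull, fun x hx => subset_hull (.inl hx),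
    fun S hS hok => ⟨hok, (inter_subset_inter_left _ hS).trans hj⟩, fun ν _ hνR ξ hξ => ?_⟩
  change ξ ∈ G.moves ν at hξ
  by_cases hfree : G.moves ν = Iio ν
  · exact .inr ⟨hfree, by rwa [hfree] at hξ, hσ ν hνR hfree⟩
  · exact .inl ⟨subset_hull (.inr (mem_biUnion ⟨hνR, hfree⟩ hξ)), hξ⟩

end Alive

end Game

section Generic

variable {P : Type*}

/-- The sequence of conditions in which step `n + 1` performs the task with number
`n.unpair.2` of step `n.unpair.1`. -/
noncomputable def schedule (next : P → Set P → P) (task : P → ℕ → Set P) (p₀ : P) : ℕ → P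
  | 0 => p₀
  | n + 1 => next (schedule next task p₀ n) (task (schedule next task p₀ n.unpair.1) n.unpair.2)
decreasing_by
  · exact Nat.lt_succ_self n
  · exact Nat.lt_succ_of_le (Nat.unpair_left_le n)

theorem exists_generic_sequence [Preorder P] {tasks : P → Set (Set P)}
    (hcount : ∀ p, (tasks p).Countable)
    (hdense : ∀ p, ∀ D ∈ tasks p, ∀ q ≥ p, ∃ r ≥ q, r ∈ D) (p₀ : P) :
    ∃ p : ℕ → P, p 0 = p₀ ∧ Monotone p ∧ ∀ n, ∀ D ∈ tasks (p n), ∃ m, p m ∈ D := by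
  have extend : ∀ (q : P) (D : Set P), ∃ r ≥ q, (∃ r ≥ q, r ∈ D) → r ∈ D := fun q D => by
    by_cases h : ∃ r ≥ q, r ∈ D
    · exact h.imp fun r hr => ⟨hr.1, fun _ => hr.2⟩
    · exact ⟨q, le_rfl, fun h' => absurd h' h⟩
  choose next le_next next_mem using extend
  let p := schedule next (fun p => enumerate (insert Set.univ (tasks p))) p₀
  have p_succ : ∀ n, p (n + 1) =
      next (p n) (enumerate (insert Set.univ (tasks (p n.unpair.1))) n.unpair.2) := fun n => by
    simp only [p, schedule]
  have hmono : Monotone p := monotone_nat_of_le_succ fun n => p_succ n ▸ le_next _ _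
  refine ⟨p, by simp only [p, schedule], hmono, fun n D hD => ?_⟩
  obtain ⟨k, rfl⟩ := (range_enumerate ((hcount (p n)).insert Set.univ) (insert_nonempty _ _)).ge
    (mem_insert_of_mem Set.univ hD)
  refine ⟨Nat.pair n k + 1, ?_⟩
  have hext := hdense (p n) _ hD _ (hmono (Nat.left_le_pair n k))
  rw [p_succ, Nat.unpair_pair]
  exact next_mem _ _ hext

end Generic

section MutualStationarity

variable {ι : Type*} {F : ι → List Ordinal.{u} → Ordinal.{u}} {R : Set Ordinal.{u}}
  {E : Ordinal.{u} → Set Ordinal.{u}}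

/-- `γ < ν` is the supremum of `M ∩ ν`, and it is not attained. -/
def StrictSup (M : Set Ordinal.{u}) (ν γ : Ordinal.{u}) : Prop :=
  γ < ν ∧ M ∩ Iio ν ⊆ Iio γ ∧ ∀ x < γ, ∃ y ∈ M ∩ Iio ν, x < y

namespace StrictSup

variable {M : Set Ordinal.{u}} {ν γ : Ordinal.{u}}

theorem inter_Iio {μ : Ordinal.{u}} (h : StrictSup M ν γ) (hν : ν ≤ μ) :
    StrictSup (M ∩ Iio μ) ν γ :=
  ⟨h.1, fun _ hx => h.2.1 ⟨hx.1.1, hx.2⟩, fun x hx =>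
    let ⟨y, hy, hxy⟩ := h.2.2 x hx
    ⟨y, ⟨⟨hy.1, hy.2.trans_le hν⟩, hy.2⟩, hxy⟩⟩

theorem inter_Iio_eq (h : StrictSup M ν γ)
    (hIio : ∀ x ∈ M, x < ν → Iio x ⊆ M) : M ∩ Iio ν = Iio γ :=
  h.2.1.antisymm fun x hx =>
    let ⟨_, hy, hxy⟩ := h.2.2 x hx
    ⟨hIio _ hy.1 hy.2 hxy, lt_trans hx h.1⟩

theorem isLUB (h : StrictSup M ν γ) : IsLUB (M ∩ Iio ν) γ :=
  ⟨fun _ hx => (h.2.1 hx).le, fun z hz => not_lt.1 fun hlt =>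
    let ⟨_, hy, hzy⟩ := h.2.2 z hlt
    hzy.not_ge (hz hy)⟩

end StrictSup

/-- A finite approximation to a model `M` that is closed under `F` and whose supremum below each
`ν ∈ M ∩ R` lies in `E ν`: a position without a winning strategy for player I in a game in which
countably many of these suprema have been fixed. -/
structure Stage (F : ι → List Ordinal.{u} → Ordinal.{u}) (R : Set Ordinal.{u})
    (E : Ordinal.{u} → Set Ordinal.{u}) extends Rules.{u} where
  pos : List Ordinal.{u}
  alive : Alive F R toRules pos
  free_or_settled : ∀ ν ∈ R, moves ν = Iio ν ∨
    ∃ γ ∈ E ν, CountableCofinal (moves ν) γ ∧ ∀ S, ok S → S ∩ Iio ν ⊆ Iio γ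
  countable_settled : {ν ∈ R | moves ν ≠ Iio ν}.Countable

namespace Stage

instance : Preorder (Stage F R E) where
  le s s' := (∀ x ∈ s.pos, x ∈ s'.pos) ∧ (∀ S, s'.ok S → s.ok S) ∧
    ∀ ν, s.moves ν ≠ Iio ν → s'.moves ν = s.moves ν
  le_refl s := ⟨fun _ => id, fun _ => id, fun _ _ => rfl⟩
  le_trans s₁ s₂ s₃ h h' := ⟨fun x hx => h'.1 x (h.1 x hx), fun S hS => h.2.1 S (h'.2.1 S hS),
    fun ν hν => (h'.2.2 ν (by rwa [h.2.2 ν hν])).trans (h.2.2 ν hν)⟩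

/-- The hull of the position of a stage. -/
def model (s : Stage F R E) : Set Ordinal.{u} :=
  hull F {x | x ∈ s.pos}

theorem model_mono : Monotone (model : Stage F R E → Set Ordinal.{u}) :=
  fun _ _ h => (hull F).monotone h.1

theorem countable_model [Countable ι] (s : Stage F R E) : s.model.Countable :=
  countable_hull (List.finite_toSet _).countable

theorem exists_settled_spec (s : Stage F R E) {ν : Ordinal.{u}} (hν : ν ∈ R)
    (h : s.moves ν ≠ Iio ν) :
    ∃ γ ∈ E ν, CountableCofinal (s.moves ν) γ ∧ ∀ S, s.ok S → S ∩ Iio ν ⊆ Iio γ :=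
  (s.free_or_settled ν hν).resolve_left h

theorem countable_moves (s : Stage F R E) {ν : Ordinal.{u}} (hν : ν ∈ R)
    (h : s.moves ν ≠ Iio ν) : (s.moves ν).Countable :=
  let ⟨_, _, hcof, _⟩ := s.exists_settled_spec hν h
  hcof.1

theorem countable_settledMoves (s : Stage F R E) : (s.settledMoves R).Countable :=
  s.countable_settled.biUnion fun _ hν => s.countable_moves hν.1 hν.2

theorem exists_ge_settled [Countable ι] (hR : ∀ ν ∈ R, UncountableRegular ν)
    (hE : ∀ ν ∈ R, OrdStationary ν (E ν) ∧ E ν ⊆ countableCof ν) (s : Stage F R E)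
    {ν : Ordinal.{u}} (hν : ν ∈ R) : ∃ s' ≥ s, s'.moves ν ≠ Iio ν := by
  by_cases hfree : s.moves ν = Iio ν
  swap
  · exact ⟨s, le_rfl, hfree⟩
  choose! a ha using fun γ (hγ : γ ∈ E ν) => ((hE ν hν).2 hγ).2
  obtain ⟨γ, hγ, halive⟩ := s.alive.settle hR s.countable_settledMoves hν hfree (hE ν hν).1
    fun γ hγ => (ha γ hγ).2.1
  have a_ne : a γ ≠ Iio ν := fun h =>
    lt_irrefl γ ((ha γ hγ).2.1 (h ▸ (mem_Iio.2 ((hE ν hν).1.1 hγ))))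
  let s' : Stage F R E :=
    { toRules := s.settle ν γ (a γ)
      pos := s.pos
      alive := halive
      free_or_settled := fun ν' hν' => by
        rcases eq_or_ne ν' ν with rfl | hne
        · exact .inr ⟨γ, hγ, by rw [Rules.settle_moves_self]; exact ha γ hγ, fun S hS => hS.2⟩
        · rw [Rules.settle_moves_of_ne hne]
          exact (s.free_or_settled ν' hν').imp_right fun ⟨γ', hγ', hcof, hok⟩ =>
            ⟨γ', hγ', hcof, fun S hS => hok S hS.1⟩
      countable_settled := (s.countable_settled.insert ν).mono Rules.settled_settle_subset }
  refine ⟨s', ⟨fun _ => id, fun S hS => hS.1, fun ν' hν' => Rules.settle_moves_of_ne ?_⟩, ?_⟩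
  · rintro rfl
    exact hν' hfree
  · exact Rules.settle_moves_self.trans_ne a_ne

theorem exists_ge_reply (s : Stage F R E) {ν ξ : Ordinal.{u}} (hmem : ν ∈ s.model) (hν : ν ∈ R)
    (hξ : ξ ∈ s.moves ν) : ∃ s' ≥ s, ∃ η ∈ s'.pos, ξ < η ∧ η < ν :=
  let ⟨η, hlt, hην, halive⟩ := s.alive.exists_reply (m := (ν, ξ)) ⟨hmem, hν, hξ⟩
  ⟨{ s with pos := η :: s.pos, alive := halive },
    ⟨fun _ => List.mem_cons_of_mem η, fun _ => id, fun _ _ => rfl⟩, η, List.mem_cons_self, hlt, hην⟩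

/-- The tasks arising at a stage `s`: fix the supremum below `ν`, and answer the move `(ν, ξ)`. -/
def tasks (s : Stage F R E) : Set (Set (Stage F R E)) :=
  (fun ν => {s' | s'.moves ν ≠ Iio ν}) '' (s.model ∩ R) ∪
    ⋃ ν ∈ s.model ∩ {ν ∈ R | s.moves ν ≠ Iio ν},
      (fun ξ => {s' | ∃ η ∈ s'.pos, ξ < η ∧ η < ν}) '' s.moves ν

theorem countable_tasks [Countable ι] (s : Stage F R E) : s.tasks.Countable :=
  ((s.countable_model.mono inter_subset_left).image _).union <|
    (s.countable_model.mono inter_subset_left).biUnion fun _ hν =>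
      (s.countable_moves hν.2.1 hν.2.2).image _

theorem tasks_dense [Countable ι] (hR : ∀ ν ∈ R, UncountableRegular ν)
    (hE : ∀ ν ∈ R, OrdStationary ν (E ν) ∧ E ν ⊆ countableCof ν) (s : Stage F R E) :
    ∀ D ∈ s.tasks, ∀ s' ≥ s, ∃ s'' ≥ s', s'' ∈ D := by
  rintro D (⟨ν, ⟨-, hν⟩, rfl⟩ | hD) s' hs'
  · exact s'.exists_ge_settled hR hE hν
  · obtain ⟨ν, ⟨hmem, hν, hsettled⟩, ξ, hξ, rfl⟩ := mem_iUnion₂.1 hD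
    exact s'.exists_ge_reply (model_mono hs' hmem) hν (hs'.2.2 ν hsettled ▸ hξ)

variable {p : ℕ → Stage F R E}

theorem exists_strictSup_iUnion (hmono : Monotone p)
    (hp : ∀ n, ∀ D ∈ (p n).tasks, ∃ m, p m ∈ D) {ν : Ordinal.{u}} (hν : ν ∈ R) {n : ℕ}
    (hmem : ν ∈ (p n).model) (hγν : E ν ⊆ Iio ν) : ∃ γ ∈ E ν, StrictSup (⋃ n, (p n).model) ν γ := by
  obtain ⟨m, hm⟩ := hp n _ (.inl ⟨ν, ⟨hmem, hν⟩, rfl⟩)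
  obtain ⟨k, hnk, hmk⟩ : ∃ k, n ≤ k ∧ m ≤ k := ⟨max n m, le_max_left _ _, le_max_right _ _⟩
  have hmemk := model_mono (hmono hnk) hmem
  have settledk : (p k).moves ν ≠ Iio ν := ((hmono hmk).2.2 ν hm).trans_ne hm
  obtain ⟨γ, hγ, hcof, hok⟩ := (p k).exists_settled_spec hν settledk
  refine ⟨γ, hγ, hγν hγ, fun x ⟨hx, hxν⟩ => ?_, fun x hx => ?_⟩
  · obtain ⟨i, hi⟩ := mem_iUnion.1 hx
    have hokl := (hmono (le_max_left k i)).2.1 _ (p (max k i)).alive.ok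
    exact hok _ hokl ⟨model_mono (hmono (le_max_right k i)) hi, hxν⟩
  · obtain ⟨ξ, hξ, hxξ⟩ := hcof.2.2 x hx
    obtain ⟨l, η, hη, hξη, hην⟩ :=
      hp k _ (.inr (mem_biUnion ⟨hmemk, hν, settledk⟩ (mem_image_of_mem _ hξ)))
    exact ⟨η, ⟨mem_iUnion.2 ⟨l, subset_hull hη⟩, hην⟩, hxξ.trans_lt hξη⟩

theorem exists_limit [Countable ι] (hR : ∀ ν ∈ R, UncountableRegular ν)
    (hE : ∀ ν ∈ R, OrdStationary ν (E ν) ∧ E ν ⊆ countableCof ν) (s : Stage F R E) :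
    ∃ M : Set Ordinal.{u}, M.Countable ∧ ClosedUnder F M ∧ (∀ x ∈ s.pos, x ∈ M) ∧
      (∀ x ∈ M, ∃ S, s.ok S ∧ x ∈ S) ∧ ∀ ν ∈ M ∩ R, ∃ γ ∈ E ν, StrictSup M ν γ := by
  obtain ⟨p, rfl, hmono, hp⟩ := exists_generic_sequence countable_tasks (tasks_dense hR hE) s
  refine ⟨⋃ n, (p n).model, countable_iUnion fun n => (p n).countable_model,
    .iUnion (model_mono.comp hmono).directed_le fun n => closedUnder_hull,
    fun x hx => mem_iUnion.2 ⟨0, subset_hull hx⟩, fun x hx => ?_, fun ν ⟨hx, hν⟩ => ?_⟩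
  · obtain ⟨n, hn⟩ := mem_iUnion.1 hx
    exact ⟨_, (hmono n.zero_le).2.1 _ (p n).alive.ok, hn⟩
  · obtain ⟨n, hn⟩ := mem_iUnion.1 hx
    exact exists_strictSup_iUnion hmono hp hν hn (hE ν hν).1.1

end Stage

-- Mutual stationarity of sets of ordinals of countable cofinality.
theorem exists_model [Countable ι] (F : ι → List Ordinal.{u} → Ordinal.{u})
    (hR : ∀ ν ∈ R, UncountableRegular ν)
    (hE : ∀ ν ∈ R, OrdStationary ν (E ν) ∧ E ν ⊆ countableCof ν) (t : List Ordinal.{u}) :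
    ∃ M : Set Ordinal.{u}, M.Countable ∧ ClosedUnder F M ∧ (∀ x ∈ t, x ∈ M) ∧
      ∀ ν ∈ M ∩ R, ∃ γ ∈ E ν, StrictSup M ν γ := by
  let s : Stage F R E :=
    { toRules := .free
      pos := t
      alive := .free hR
      free_or_settled := fun _ _ => .inl rfl
      countable_settled := by simp [Rules.free] }
  obtain ⟨M, hM, hcl, ht, -, hsup⟩ := s.exists_limit hR hE
  exact ⟨M, hM, hcl, ht, hsup⟩

theorem countableCofinal_Iio {δ : Ordinal.{u}} (h : δ < omega1) : CountableCofinal (Iio δ) δ :=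
  ⟨countable_Iio_of_lt_omega1 h, Subset.rfl, fun x hx => ⟨x, hx, le_rfl⟩⟩

section Cover

variable [Countable ι] (F : ι → List Ordinal.{u} → Ordinal.{u}) {κ ℓ : Ordinal.{u}}
  {T : Set Ordinal.{u}} {S A : Ordinal.{u} → Set Ordinal.{u}}

theorem forall_uncountableRegular_pair (hℓ : UncountableRegular ℓ) :
    ∀ ν ∈ ({omega1, ℓ} : Set Ordinal.{u}), UncountableRegular ν := by
  rintro ν (rfl | rfl)
  exacts [uncountableRegular_omega1, hℓ]

-- Once the supremum below `ω₁` is fixed, `κ` many moves below `ℓ` can be exceeded at once.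
theorem exists_alive_cover (hℓ : UncountableRegular ℓ) (hω₁ : omega1 < ℓ) (hκ : κ < ℓ)
    (hT : OrdStationary omega1 T) (hA : ∀ b ⊆ Iio κ, b.Countable → ∃ ρ < κ, b ⊆ A ρ) :
    ∃ δ ∈ T, ∃ ρ < κ, Alive F {omega1, ℓ}
      ((Rules.free.settle omega1 δ (Iio δ)).confine (Iio κ) (A ρ)) [omega1, ℓ] := by
  have hR := forall_uncountableRegular_pair hℓ
  obtain ⟨δ, hδT, halive⟩ := (Alive.free (F := F) (t := [omega1, ℓ]) hR).settle hR
    (by simp [Rules.settledMoves, Rules.free]) (.inl rfl) rfl hT (a := Iio) fun _ _ => Subset.rfl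
  have hδ : δ < omega1 := hT.1 hδT
  have hcount : ((Rules.free.settle omega1 δ (Iio δ)).settledMoves {omega1, ℓ}).Countable := by
    refine ((countable_singleton omega1).mono Rules.settled_settle_free_subset).biUnion ?_
    intro ν hν
    obtain rfl := Rules.settled_settle_free_subset hν
    rw [Rules.settle_moves_self]
    exact countable_Iio_of_lt_omega1 hδ
  obtain ⟨⟨ρ, hρ⟩, hρalive⟩ := halive.confine hR hcount (K := Iio κ) (A := fun ρ : Iio κ => A ρ)
    (by
      rintro ν (rfl | rfl) hfree
      · exact absurd (Iio_injective (Rules.settle_moves_self.symm.trans hfree)) hδ.ne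
      · exact hℓ.mk_Iio_lt hκ)
    (fun b hb hbc => let ⟨ρ, hρ, h⟩ := hA b hb hbc; ⟨⟨ρ, hρ⟩, h⟩)
  exact ⟨δ, hδT, ρ, hρ, hρalive⟩

theorem exists_model_of_cover (hℓ : UncountableRegular ℓ) (hω₁ : omega1 < ℓ) (hκ : κ < ℓ)
    (hT : OrdStationary omega1 T) (hS : ∀ ρ < κ, OrdStationary ℓ (S ρ) ∧ S ρ ⊆ countableCof ℓ)
    (hA : ∀ b ⊆ Iio κ, b.Countable → ∃ ρ < κ, b ⊆ A ρ) :
    ∃ M : Set Ordinal.{u}, M.Countable ∧ ClosedUnder F M ∧ (∃ δ ∈ T, StrictSup M omega1 δ) ∧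
      ∃ ρ < κ, M ∩ Iio κ ⊆ A ρ ∧ ∃ γ ∈ S ρ, StrictSup M ℓ γ := by
  classical
  obtain ⟨δ, hδT, ρ, hρ, halive⟩ := exists_alive_cover F hℓ hω₁ hκ hT hA
  let E : Ordinal.{u} → Set Ordinal.{u} := Function.update (fun _ => S ρ) omega1 T
  have E_omega1 : E omega1 = T := Function.update_self ..
  have E_ℓ : E ℓ = S ρ := Function.update_of_ne hω₁.ne' ..
  let s : Stage F {omega1, ℓ} E :=
    { toRules := (Rules.free.settle omega1 δ (Iio δ)).confine (Iio κ) (A ρ)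
      pos := [omega1, ℓ]
      alive := halive
      free_or_settled := by
        rintro ν (rfl | rfl)
        · exact .inr ⟨δ, E_omega1 ▸ hδT, by
            rw [Rules.confine, Rules.settle_moves_self]
            exact countableCofinal_Iio (hT.1 hδT), fun S hS => hS.1.2⟩
        · exact .inl (Rules.settle_moves_of_ne (γ := δ) hω₁.ne')
      countable_settled :=
        (countable_singleton omega1).mono (Rules.settled_settle_free_subset (γ := δ)) }
  obtain ⟨M, hM, hcl, hpos, hok, hsup⟩ := s.exists_limit (forall_uncountableRegular_pair hℓ) (by
    rintro ν (rfl | rfl)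
    · exact E_omega1 ▸ ⟨hT, fun δ hδ => ⟨hT.1 hδ, _, countableCofinal_Iio (hT.1 hδ)⟩⟩
    · exact E_ℓ ▸ hS ρ hρ)
  have hω₁M := hsup omega1 ⟨hpos _ (by simp [s]), .inl rfl⟩
  have hℓM := hsup ℓ ⟨hpos _ (by simp [s]), .inr rfl⟩
  rw [E_omega1] at hω₁M
  rw [E_ℓ] at hℓM
  refine ⟨M, hM, hcl, hω₁M, ρ, hρ, fun x hx => ?_, hℓM⟩
  obtain ⟨N, hN, hxN⟩ := hok x hx.1
  exact hN.2 ⟨hxN, hx.2⟩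

end Cover

end MutualStationarity

section Lifting

variable {α : Type*} {ι : Type*}

theorem clubOn_closedUnder [Countable ι] (F : ι → List α → α) :
    ClubOn Set.univ {M : Set α | M.Countable ∧ ClosedUnder F M} :=
  ⟨fun M hM => ⟨subset_univ M, hM.1⟩,
    fun _ _ hs => ⟨_, ⟨countable_hull hs, closedUnder_hull⟩, subset_hull⟩,
    fun _ hf hmono => ⟨countable_iUnion fun n => (hf n).1,
      .iUnion hmono.directed_le fun n => (hf n).2⟩⟩

theorem ClosedUnder.inter {F : ι → List α → α} {M A : Set α} (hM : ClosedUnder F M)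
    (hA : ∀ i l, F i l ∈ A) : ClosedUnder F (M ∩ A) :=
  fun i l hl => ⟨hM i l fun x hx => (hl x hx).1, hA i l⟩

theorem exists_operations_preimage {X : Type*} [Nonempty X] {p : X → α}
    (hp : Function.Injective p) (H : ι → List X → X) :
    ∃ F : ι → List α → α, ∀ M, ClosedUnder F M → ClosedUnder H (p ⁻¹' M) := by
  refine ⟨fun i l => p (H i (l.map (Function.invFun p))), fun M hM i l hl => ?_⟩
  have : p (H i ((l.map p).map (Function.invFun p))) ∈ M :=
    hM i (l.map p) (List.forall_mem_map.2 hl)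
  rwa [List.map_map, Function.invFun_comp hp, List.map_id] at this

namespace StationaryOn

theorem exists_closedUnder [Countable ι] {S : Set (Set α)} (hS : StationaryOn Set.univ S)
    (F : ι → List α → α) : ∃ M ∈ S, M.Countable ∧ ClosedUnder F M :=
  hS _ (clubOn_closedUnder F)

theorem of_closedUnder [Nonempty α] {S : Set (Set α)}
    (h : ∀ F : ℕ → List α → α, ∃ M ∈ S, M.Countable ∧ ClosedUnder F M) :
    StationaryOn Set.univ S := by
  intro C hC
  obtain ⟨F, -, hF⟩ := hC.exists_operations univ_nonempty
  obtain ⟨M, hMS, hM, hcl⟩ := h F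
  exact ⟨M, hMS, hF M hM (subset_univ M) hcl⟩

theorem exists_operations_of_not [Nonempty α] (S : Set (Set α)) : ∃ F : ℕ → List α → α,
    ∀ M ∈ S, M.Countable → ClosedUnder F M → StationaryOn Set.univ S := by
  by_cases hS : StationaryOn Set.univ S
  · exact ⟨fun _ _ => Classical.arbitrary α, fun _ _ _ _ => hS⟩
  · by_contra! hc
    exact hS (.of_closedUnder fun F => (hc F).imp fun M hM => ⟨hM.1, hM.2.1, hM.2.2.1⟩)

-- Normality of the nonstationary ideal.
theorem exists_operations_diagonal [Nonempty α] (P : α → Set (Set α)) : ∃ F : ℕ → List α → α,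
    ∀ M, M.Countable → ClosedUnder F M → ∀ τ ∈ M, M ∈ P τ → StationaryOn Set.univ (P τ) := by
  choose F hF using fun τ => exists_operations_of_not (P τ)
  refine ⟨fun n l => l.rec (Classical.arbitrary α) fun τ l _ => F τ n l,
    fun M hM hcl τ hτ hMτ => hF τ M hMτ hM fun n l hl => ?_⟩
  exact hcl n (τ :: l) (List.forall_mem_cons.2 ⟨hτ, hl⟩)

theorem exists_of_countable_cover [Nonempty α] [Countable ι] {S : Set (Set α)}
    (hS : StationaryOn Set.univ S) {P : ι → Set (Set α)} (hP : ∀ M ∈ S, ∃ i, M ∈ P i) :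
    ∃ i, StationaryOn Set.univ (P i) := by
  choose F hF using fun i => exists_operations_of_not (P i)
  obtain ⟨M, hMS, hM, hcl⟩ := hS.exists_closedUnder fun p : ι × ℕ => F p.1 p.2
  obtain ⟨i, hi⟩ := hP M hMS
  exact ⟨i, hF i M hi hM fun n => hcl (i, n)⟩

theorem preimage {X : Type*} [Nonempty α] {p : X → α} (hp : Function.Injective p)
    {Sig : Set (Set X)} (hS : StationaryOn Set.univ Sig) :
    StationaryOn Set.univ {M : Set α | p ⁻¹' M ∈ Sig} := by
  refine .of_closedUnder fun F => ?_
  have hclub : ClubOn Set.univ {s | s.Countable ∧ p ⁻¹' hull F (p '' s) = s} := by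
    refine ⟨fun s hs => ⟨subset_univ s, hs.1⟩, fun s _ hs => ?_, fun f hf hmono => ?_⟩
    · refine ⟨p ⁻¹' hull F (p '' s), ⟨(countable_hull (hs.image p)).preimage hp, ?_⟩,
        fun x hx => subset_hull ⟨x, hx, rfl⟩⟩
      exact (preimage_mono (hull_subset (image_preimage_subset _ _) closedUnder_hull)).antisymm
        fun x hx => subset_hull ⟨x, hx, rfl⟩
    · refine ⟨countable_iUnion fun n => (hf n).1, ?_⟩
      rw [image_iUnion,
        hull_iUnion (s := fun n => p '' f n) (monotone_image.comp hmono).directed_le,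
        preimage_iUnion]
      exact iUnion_congr fun n => (hf n).2
  obtain ⟨s, hs, hsc, heq⟩ := hS _ hclub
  exact ⟨hull F (p '' s), by rwa [mem_ofPred, heq], countable_hull (hsc.image p), closedUnder_hull⟩

end StationaryOn

/-- The sets of ordinals whose intersection with `ω₁` is an ordinal in `T` and whose trace on `X`,
along `p : X → Ordinal`, lies in `Sig`. -/
def lifts {X : Type*} (p : X → Ordinal.{u}) (Sig : Set (Set X)) (T : Set Ordinal.{u}) :
    Set (Set Ordinal.{u}) :=
  {M | p ⁻¹' M ∈ Sig ∧ ∃ δ ∈ T, M ∩ Iio omega1 = Iio δ}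

theorem exists_inter_omega1_eq {M : Set Ordinal.{u}} (hM : M.Countable)
    (hIio : ∀ x ∈ M, x < omega1 → Iio x ⊆ M) : ∃ δ < omega1, M ∩ Iio omega1 = Iio δ := by
  have hlower : IsLowerSet (M ∩ Iio omega1) := fun x y hyx hx => by
    rcases hyx.eq_or_lt with rfl | hlt
    exacts [hx, ⟨hIio x hx.1 hx.2 hlt, hyx.trans_lt hx.2⟩]
  have not_subset : ¬Iio omega1 ⊆ M := fun h =>
    uncountableRegular_omega1.aleph0_lt_mk_Iio.not_ge (hM.mono h).le_aleph0
  obtain huniv | ⟨δ, hδ⟩ := hlower.eq_univ_or_Iio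
  · exact absurd ((subset_univ _).trans (huniv.symm.subset.trans inter_subset_left)) not_subset
  · refine ⟨δ, not_le.1 fun hle => not_subset ?_, hδ⟩
    exact (Iio_subset_Iio hle).trans (hδ.symm.subset.trans inter_subset_left)

theorem exists_operations_Iio_subset : ∃ F : ℕ → List Ordinal.{u} → Ordinal.{u},
    ∀ M : Set Ordinal.{u}, ClosedUnder F M → ∀ x ∈ M, x < omega1 → Iio x ⊆ M := by
  refine ⟨fun n l => enumerate (Iio l.headI) n, fun M hcl x hx hx1 y hy => ?_⟩
  obtain ⟨n, rfl⟩ := (range_enumerate (countable_Iio_of_lt_omega1 hx1) ⟨y, hy⟩).ge hy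
  exact hcl n [x] (by simpa using hx)

theorem stationaryOn_lifts {X : Type*} {p : X → Ordinal.{u}} (hp : Function.Injective p)
    {Sig : Set (Set X)} (hS : StationaryOn Set.univ Sig) :
    StationaryOn Set.univ (lifts p Sig (Iio omega1)) := by
  refine .of_closedUnder fun F => ?_
  obtain ⟨G, hG⟩ := exists_operations_Iio_subset
  obtain ⟨M, hMS, hM, hcl⟩ := (hS.preimage hp).exists_closedUnder (Sum.elim F G)
  rw [closedUnder_sumElim] at hcl
  exact ⟨M, ⟨hMS, exists_inter_omega1_eq hM (hG M hcl.2)⟩, hM, hcl.1⟩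

theorem exists_stationary_partition [Countable ι] [Nonempty ι] {ν : Ordinal.{u}}
    (h : UncountableRegular ν) :
    ∃ c : Ordinal.{u} → ι, ∀ i, OrdStationary ν {γ | γ < ν ∧ c γ = i} := by
  obtain ⟨f, hf⟩ := exists_injective_nat ι
  let e : ι → Ordinal.{u} := fun i => f i
  have he : Function.Injective e := Nat.cast_injective.comp hf
  refine ⟨fun γ => Function.invFun e (stationaryColor ν γ), fun i => ?_⟩
  have hi : e i < ν := (Ordinal.natCast_lt_omega0 _).trans h.1
  exact (ordStationary_stationaryColor h hi).mono
    (fun γ hγ => ⟨hγ.1.1, (congrArg _ hγ.2).trans (Function.leftInverse_invFun he i)⟩)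
    fun γ hγ => hγ.1

theorem exists_partition_stationaryOn_lifts [Countable ι] {X : Type*} {p : X → Ordinal.{u}}
    (hp : Function.Injective p) {Sig : Set (Set X)} (hS : StationaryOn Set.univ Sig) (i₀ : ι) :
    ∃ c : Ordinal.{u} → ι, (∀ i, OrdStationary omega1 {γ | γ < omega1 ∧ c γ = i}) ∧
      StationaryOn Set.univ (lifts p Sig {γ | γ < omega1 ∧ c γ = i₀}) := by
  classical
  have : Nonempty ι := ⟨i₀⟩
  obtain ⟨c, hc⟩ := exists_stationary_partition (ι := ι) uncountableRegular_omega1.{u}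
  obtain ⟨i, hi⟩ := (stationaryOn_lifts hp hS).exists_of_countable_cover
    (P := fun i => lifts p Sig {γ | γ < omega1 ∧ c γ = i})
    fun M ⟨hM, δ, hδ, h⟩ => ⟨c δ, hM, δ, ⟨hδ, rfl⟩, h⟩
  refine ⟨fun γ => Equiv.swap i i₀ (c γ), fun j => ?_, ?_⟩
  · simpa only [Equiv.swap_apply_eq_iff] using hc (Equiv.swap i i₀ j)
  · simpa only [Equiv.swap_apply_eq_iff, Equiv.swap_apply_right] using hi

end Lifting

section Coding

universe w

theorem exists_injective_lt_ord {W : Type w} {c : Cardinal.{u}} (h : lift.{u} #W ≤ lift.{w} c) :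
    ∃ i : W → Ordinal.{u}, Function.Injective i ∧ ∀ x, i x < c.ord := by
  have : lift.{u + 1} #W ≤ lift.{w} #(Iio c.ord) := by
    rw [mk_Iio_ordinal, card_ord, lift_lift]
    simpa using lift_le.{u + 1}.2 h
  obtain ⟨e⟩ := lift_mk_le'.1 this
  exact ⟨fun x => e x, Subtype.val_injective.comp e.injective, fun x => (e x).2⟩

theorem exists_surjOn_Iio_ord {W : Type w} [Nonempty W] {c : Cardinal.{u}}
    (h : lift.{u} #W ≤ lift.{w} c) : ∃ s : Ordinal.{u} → W, ∀ x, ∃ ρ < c.ord, s ρ = x :=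
  let ⟨i, hi, hlt⟩ := exists_injective_lt_ord h
  ⟨Function.invFun i, fun x => ⟨i x, hlt x, Function.leftInverse_invFun hi x⟩⟩

/-- A coding by ordinals below a cardinal `κ > ℵ₁`: `point` codes the points of `X`, `subset`
decodes the subsets of `ω₁`, and `member` decodes a cofinal family of members of `Γ`, with
`element ρ` enumerating `member ρ` in type `ω₁` (possibly with values outside of it). -/
structure Coding {X : Type u} (Γ : Set (Set X)) where
  κ : Cardinal.{u}
  aleph_one_lt : ℵ₁ < κ
  point : X → Ordinal.{u}
  point_injective : Function.Injective point
  point_lt : ∀ x, point x < κ.ord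
  subset : Ordinal.{u} → Set Ordinal.{u}
  exists_subset_eq : ∀ T ⊆ Iio omega1, ∃ τ < κ.ord, subset τ = T
  member : Ordinal.{u} → Set X
  member_mem : ∀ ρ, member ρ ∈ Γ
  mk_member_le : ∀ ρ, #(member ρ) ≤ ℵ₁
  exists_subset_member : ∀ s : Set X, #s ≤ ℵ₁ → ∃ ρ < κ.ord, s ⊆ member ρ
  element : Ordinal.{u} → Ordinal.{u} → X
  member_subset : ∀ ρ, member ρ ⊆ element ρ '' Iio omega1

variable {X : Type u} {Γ : Set (Set X)}

theorem nonempty_coding [Nonempty X] (hΓ : ∀ c ∈ Γ, #c ≤ ℵ₁)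
    (hcof : ∀ s : Set X, #s ≤ ℵ₁ → ∃ c ∈ Γ, s ⊆ c) : Nonempty (Coding Γ) := by
  obtain ⟨point, point_injective, point_lt⟩ :=
    exists_injective_lt_ord (c := 2 ^ max #X ℵ₁)
      (lift_le.2 ((le_max_left _ _).trans (cantor _).le))
  obtain ⟨subset, hsubset⟩ := exists_surjOn_Iio_ord (W := Set (Iio omega1.{u}))
    (c := 2 ^ max #X ℵ₁) (by
      rw [mk_set, mk_Iio_ordinal, omega1, card_ord, lift_two_power, lift_two_power]
      exact power_le_power_left two_ne_zero (by simp))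
  have : Nonempty Γ := let ⟨c, hc, _⟩ := hcof ∅ (by simp); ⟨c, hc⟩
  obtain ⟨member, hmember⟩ := exists_surjOn_Iio_ord (W := Γ) (c := 2 ^ max #X ℵ₁) <| lift_le.2 <|
    (mk_subtype_le Γ).trans (mk_set.trans_le (power_le_power_left two_ne_zero (le_max_left _ _)))
  have enum : ∀ c ∈ Γ, ∃ e : Ordinal.{u} → X, c ⊆ e '' Iio omega1 := fun c hc => by
    obtain ⟨i, hi, hlt⟩ := exists_injective_lt_ord (lift_le.{u}.2 (hΓ c hc))
    exact ⟨Function.extend i Subtype.val fun _ => Classical.arbitrary X,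
      fun x hx => ⟨i ⟨x, hx⟩, hlt _, hi.extend_apply ..⟩⟩
  choose element helement using fun ρ => enum _ (member ρ).2
  exact ⟨{
    κ := 2 ^ max #X ℵ₁
    aleph_one_lt := (le_max_right _ _).trans_lt (cantor _)
    point, point_injective, point_lt
    subset := fun τ => Subtype.val '' subset τ
    exists_subset_eq := fun T hT => by
      obtain ⟨τ, hτ, h⟩ := hsubset (Subtype.val ⁻¹' T)
      exact ⟨τ, hτ, by rw [h, Subtype.image_preimage_coe, inter_eq_right.2 hT]⟩
    member := fun ρ => member ρ
    member_mem := fun ρ => (member ρ).2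
    mk_member_le := fun ρ => hΓ _ (member ρ).2
    exists_subset_member := fun s hs => by
      obtain ⟨c, hc, hsc⟩ := hcof s hs
      obtain ⟨ρ, hρ, h⟩ := hmember ⟨c, hc⟩
      exact ⟨ρ, hρ, hsc.trans_eq (congrArg Subtype.val h).symm⟩
    element, member_subset := helement }⟩

end Coding

section CofinalMap

variable {ζ ξ ξ' x : Ordinal.{u}}

/-- An increasing cofinal map from `cf ζ` to `ζ`; its value is `0` outside of `cf ζ`. -/
noncomputable def cofinalMap (ζ ξ : Ordinal.{u}) : Ordinal.{u} :=
  if h : ξ < ζ.cof.ord then (Ordinal.exists_isFundamentalSeq (o := ζ) rfl).choose ⟨ξ, h⟩ else 0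

theorem cofinalMap_lt (h : ξ < ζ.cof.ord) : cofinalMap ζ ξ < ζ := by
  rw [cofinalMap, dif_pos h]
  exact ((Ordinal.exists_isFundamentalSeq (o := ζ) rfl).choose ⟨ξ, h⟩).2

theorem cofinalMap_le_cofinalMap (h : ξ ≤ ξ') (h' : ξ' < ζ.cof.ord) :
    cofinalMap ζ ξ ≤ cofinalMap ζ ξ' := by
  rw [cofinalMap, cofinalMap, dif_pos h', dif_pos (h.trans_lt h')]
  exact (Ordinal.exists_isFundamentalSeq (o := ζ) rfl).choose_spec.strictMono.monotone h

theorem exists_le_cofinalMap (h : x < ζ) : ∃ ξ < ζ.cof.ord, x ≤ cofinalMap ζ ξ := by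
  obtain ⟨_, ⟨ξ, rfl⟩, hξ⟩ :=
    (Ordinal.exists_isFundamentalSeq (o := ζ) rfl).choose_spec.isCofinal_range ⟨x, h⟩
  refine ⟨ξ, ξ.2, ?_⟩
  rw [cofinalMap, dif_pos (show ξ.1 < _ from ξ.2)]
  exact hξ

/-- The least argument at which `cofinalMap ζ` reaches `x`. -/
noncomputable def cofinalIndex (ζ x : Ordinal.{u}) : Ordinal.{u} :=
  sInf {ξ | ξ < ζ.cof.ord ∧ x ≤ cofinalMap ζ ξ}

theorem cofinalIndex_lt (h : x < ζ) : cofinalIndex ζ x < ζ.cof.ord :=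
  (csInf_mem (exists_le_cofinalMap h)).1

theorem le_cofinalMap_cofinalIndex (h : x < ζ) : x ≤ cofinalMap ζ (cofinalIndex ζ x) :=
  (csInf_mem (exists_le_cofinalMap h)).2

end CofinalMap

section Reflecting

/-- The names of the basic operations of `Coding.op`. -/
inductive Op
  | ell | cof | cofinalMap | cofinalIndex | color | element
  deriving Countable

/-- The requirement imposed on a model through its intersection with `ω₁`, see
`Coding.Admissible`. -/
inductive Role
  | trace | cover | sup (b : Bool)
  deriving Countable

variable {X : Type u} {Γ : Set (Set X)} (d : Coding Γ) {Sig : Set (Set X)}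
  {M Y : Set Ordinal.{u}} {T : Set Ordinal.{u}} {ι : Type*}

namespace Coding

/-- The indices decoded below the `ρ`-th member of `Γ`: the codes of its points, and the indices of
the members of `Γ` that it includes. -/
def covered (ρ : Ordinal.{u}) : Set Ordinal.{u} :=
  {α | (∀ x, d.point x = α → x ∈ d.member ρ) ∧ d.member α ⊆ d.member ρ}

theorem exists_subset_covered {b : Set Ordinal.{u}} (hb : b.Countable) :
    ∃ ρ < d.κ.ord, b ⊆ d.covered ρ := by
  have mk_le : ∀ α, #(d.point ⁻¹' {α} ∪ d.member α : Set X) ≤ ℵ₁ := fun α =>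
    (mk_union_le _ _).trans <| add_le_of_le aleph0_lt_aleph_one.le
      (((countable_singleton α).preimage d.point_injective).le_aleph0.trans aleph0_lt_aleph_one.le)
      (d.mk_member_le α)
  have mk_biUnion_le : lift.{u + 1} #(⋃ α ∈ b, (d.point ⁻¹' {α} ∪ d.member α)) ≤ lift.{u + 1} ℵ₁ :=
    (mk_biUnion_le_lift _ b).trans <| mul_le_of_le (by simp)
      ((lift_le_aleph0.2 hb.le_aleph0).trans (by simp))
      (ciSup_le' fun α => lift_le.2 (mk_le α))
  obtain ⟨ρ, hρ, hsub⟩ := d.exists_subset_member _ (lift_le.1 mk_biUnion_le)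
  exact ⟨ρ, hρ, fun α hα => ⟨fun x hx => hsub (mem_biUnion hα (.inl hx)),
    fun x hx => hsub (mem_biUnion hα (.inr hx))⟩⟩

/-- The initial ordinal `κ⁺`. -/
noncomputable def ℓ : Ordinal.{u} :=
  (Order.succ d.κ).ord

/-- The cardinal `κ⁺⁺`, to which strong reflection is applied. -/
noncomputable def lam : Cardinal.{u} :=
  Order.succ (Order.succ d.κ)

theorem aleph_two_le_lam : ℵ_ 2 ≤ d.lam := by
  rw [← one_add_one_eq_two, ← succ_aleph]
  exact Order.succ_le_succ (d.aleph_one_lt.trans (Order.lt_succ _)).le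

theorem ord_κ_lt_ℓ : d.κ.ord < d.ℓ :=
  ord_lt_ord.2 (Order.lt_succ _)

theorem ℓ_lt_ord_lam : d.ℓ < d.lam.ord :=
  ord_lt_ord.2 (Order.lt_succ _)

theorem ord_κ_lt_ord_lam : d.κ.ord < d.lam.ord :=
  d.ord_κ_lt_ℓ.trans d.ℓ_lt_ord_lam

theorem omega1_lt_ord_κ : omega1 < d.κ.ord :=
  ord_lt_ord.2 d.aleph_one_lt

theorem omega1_lt_ℓ : omega1 < d.ℓ :=
  d.omega1_lt_ord_κ.trans d.ord_κ_lt_ℓ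

theorem uncountableRegular_ℓ : UncountableRegular d.ℓ :=
  uncountableRegular_ord
    (isRegular_succ ((aleph0_lt_aleph_one.trans d.aleph_one_lt).le)) <|
    (aleph0_lt_aleph_one.trans d.aleph_one_lt).trans (Order.lt_succ _)

/-- The basic operations; arguments of the wrong number are sent to `0`. -/
noncomputable def op : Op → List Ordinal.{u} → Ordinal.{u}
  | .ell, [] => d.ℓ
  | .cof, [ζ] => ζ.cof.ord
  | .cofinalMap, [ζ, ξ] => _root_.cofinalMap ζ ξ
  | .cofinalIndex, [ζ, x] => _root_.cofinalIndex ζ x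
  | .color, [γ] => stationaryColor d.ℓ γ
  | .element, [ρ, ξ] => d.point (d.element ρ ξ)
  | _, _ => 0

open Classical in
/-- The basic operations, restricted to values below `κ⁺⁺`. -/
noncomputable def boundedOp (o : Op) (l : List Ordinal.{u}) : Ordinal.{u} :=
  if d.op o l < d.lam.ord then d.op o l else 0

theorem boundedOp_mem (o : Op) (l : List Ordinal.{u}) : d.boundedOp o l ∈ Iio d.lam.ord := by
  rw [boundedOp]
  split_ifs with h
  exacts [h, lt_of_le_of_lt (zero_le) d.ℓ_lt_ord_lam]

variable {d}

theorem op_mem (hM : ClosedUnder d.boundedOp M) (o : Op) {l : List Ordinal.{u}}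
    (hl : ∀ x ∈ l, x ∈ M) (hlt : d.op o l < d.lam.ord) : d.op o l ∈ M := by
  simpa only [boundedOp, if_pos hlt] using hM o l hl

variable (d)

/-- The requirement on a model `M` with `M ∩ ω₁ = δ` in a given role. In the role `trace`, the
second alternative exempts `δ` when it lies in a set whose lifts are nonstationary, as seen by `M`.
The two roles `sup` prescribe different colours to the suprema of `M` below regular cardinals. -/
def Admissible (Sig : Set (Set X)) (M : Set Ordinal.{u}) (δ : Ordinal.{u}) : Role → Prop
  | .trace => d.point ⁻¹' M ∈ Sig ∨ ∃ τ ∈ M, τ < d.κ.ord ∧ δ ∈ d.subset τ ∧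
      ¬StationaryOn Set.univ (lifts d.point Sig (d.subset τ))
  | .cover => ∃ γ, StrictSup M d.ℓ γ ∧ stationaryColor d.ℓ γ < d.κ.ord ∧
      M ∩ Iio d.κ.ord ⊆ d.covered (stationaryColor d.ℓ γ)
  | .sup b => ∀ ν ∈ M, UncountableRegular ν → omega1 < ν →
      ∃ γ, StrictSup M ν γ ∧ stationaryColor ν γ = b.toNat

theorem preimage_point_inter_Iio : d.point ⁻¹' (M ∩ Iio d.lam.ord) = d.point ⁻¹' M :=
  inter_eq_left.2 fun x _ => (d.point_lt x).trans d.ord_κ_lt_ord_lam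

variable {d}

theorem Admissible.inter_Iio {δ : Ordinal.{u}} {r : Role} (h : d.Admissible Sig M δ r) :
    d.Admissible Sig (M ∩ Iio d.lam.ord) δ r := by
  match r, h with
  | .trace, h =>
    exact h.imp (d.preimage_point_inter_Iio.symm ▸ ·) fun ⟨τ, hτM, hτ, hδ⟩ =>
      ⟨τ, ⟨hτM, hτ.trans d.ord_κ_lt_ord_lam⟩, hτ, hδ⟩
  | .cover, ⟨γ, hγ, hcol, hcov⟩ =>
    exact ⟨γ, hγ.inter_Iio d.ℓ_lt_ord_lam.le, hcol, fun x hx => hcov ⟨hx.1.1, hx.2⟩⟩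
  | .sup b, h =>
    intro ν hν hreg hlt
    obtain ⟨γ, hγ, hcol⟩ := h ν hν.1 hreg hlt
    exact ⟨γ, hγ.inter_Iio (le_of_lt hν.2), hcol⟩

variable [Countable ι] (F : ι → List Ordinal.{u} → Ordinal.{u})

theorem exists_admissible_trace (hT : OrdStationary omega1 T) :
    ∃ M, M.Countable ∧ ClosedUnder F M ∧
      ∃ δ ∈ T, M ∩ Iio omega1 = Iio δ ∧ d.Admissible Sig M δ .trace := by
  by_cases hlifts : StationaryOn Set.univ (lifts d.point Sig T)
  · obtain ⟨M, ⟨hMS, δ, hδ, hMδ⟩, hM, hcl⟩ := hlifts.exists_closedUnder F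
    exact ⟨M, hM, hcl, δ, hδ, hMδ, .inl hMS⟩
  · obtain ⟨τ, hτ, rfl⟩ := d.exists_subset_eq T hT.1
    obtain ⟨δ, hδT, hδ, hsub⟩ :=
      hT.exists_hullPoint uncountableRegular_omega1 F (countable_singleton τ)
    exact ⟨_, countable_hull ((countable_singleton τ).union (countable_Iio_of_lt_omega1 hδ)),
      closedUnder_hull, δ, hδT,
      hsub.antisymm fun x hx => ⟨subset_hull (.inr hx), lt_trans hx hδ⟩,
      .inr ⟨τ, subset_hull (.inl rfl), hτ, hδT, hlifts⟩⟩

theorem exists_admissible_cover (hT : OrdStationary omega1 T) :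
    ∃ M, M.Countable ∧ ClosedUnder F M ∧
      ∃ δ ∈ T, M ∩ Iio omega1 = Iio δ ∧ d.Admissible Sig M δ .cover := by
  obtain ⟨G, hG⟩ := exists_operations_Iio_subset
  obtain ⟨M, hM, hcl, ⟨δ, hδT, hδ⟩, ρ, hρ, hcov, γ, hγ, hMγ⟩ :=
    exists_model_of_cover (Sum.elim F G) d.uncountableRegular_ℓ d.omega1_lt_ℓ d.ord_κ_lt_ℓ hT
      (S := fun ρ => {γ ∈ countableCof d.ℓ | stationaryColor d.ℓ γ = ρ})
      (fun ρ hρ => ⟨ordStationary_stationaryColor d.uncountableRegular_ℓ (hρ.trans d.ord_κ_lt_ℓ),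
        fun γ hγ => hγ.1⟩)
      (A := d.covered) fun b _ hb => d.exists_subset_covered hb
  rw [closedUnder_sumElim] at hcl
  obtain rfl : stationaryColor d.ℓ γ = ρ := hγ.2
  exact ⟨M, hM, hcl.1, δ, hδT, hδ.inter_Iio_eq (hG M hcl.2), γ, hMγ, hρ, hcov⟩

theorem exists_admissible_sup (hT : OrdStationary omega1 T) (b : Bool) :
    ∃ M, M.Countable ∧ ClosedUnder F M ∧
      ∃ δ ∈ T, M ∩ Iio omega1 = Iio δ ∧ d.Admissible Sig M δ (.sup b) := by
  classical
  obtain ⟨G, hG⟩ := exists_operations_Iio_subset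
  let E : Ordinal.{u} → Set Ordinal.{u} := Function.update
    (fun ν => {γ ∈ countableCof ν | stationaryColor ν γ = b.toNat}) omega1 T
  have E_omega1 : E omega1 = T := Function.update_self ..
  have E_of_ne : ∀ ν ≠ omega1, E ν = {γ ∈ countableCof ν | stationaryColor ν γ = b.toNat} :=
    fun ν hν => Function.update_of_ne hν ..
  obtain ⟨M, hM, hcl, hpos, hsup⟩ := exists_model (E := E) (R := {ν | UncountableRegular ν})
    (Sum.elim F G) (fun ν hν => hν) (fun ν hν => by
      rcases eq_or_ne ν omega1 with rfl | hne
      · exact E_omega1 ▸ ⟨hT, fun δ hδ => ⟨hT.1 hδ, _, countableCofinal_Iio (hT.1 hδ)⟩⟩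
      · exact E_of_ne ν hne ▸ ⟨ordStationary_stationaryColor hν
          ((Ordinal.natCast_lt_omega0 _).trans hν.1), fun γ hγ => hγ.1⟩) [omega1]
  rw [closedUnder_sumElim] at hcl
  obtain ⟨δ, hδT, hδ⟩ := hsup omega1 ⟨hpos _ List.mem_cons_self, uncountableRegular_omega1⟩
  refine ⟨M, hM, hcl.1, δ, E_omega1 ▸ hδT, hδ.inter_Iio_eq (hG M hcl.2), fun ν hν hreg hlt => ?_⟩
  obtain ⟨γ, hγ, hMγ⟩ := hsup ν ⟨hν, hreg⟩
  rw [E_of_ne ν hlt.ne'] at hγ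
  exact ⟨γ, hMγ, hγ.2⟩

theorem exists_admissible (hT : OrdStationary omega1 T) : ∀ r : Role,
    ∃ M, M.Countable ∧ ClosedUnder F M ∧
      ∃ δ ∈ T, M ∩ Iio omega1 = Iio δ ∧ d.Admissible Sig M δ r
  | .trace => exists_admissible_trace F hT
  | .cover => exists_admissible_cover F hT
  | .sup b => exists_admissible_sup F hT b

variable (d Sig) in
/-- The countable models below `κ⁺⁺` that meet the requirement of the role assigned to their
intersection with `ω₁`. -/
def admissibleModels (role : Ordinal.{u} → Role) : Set (Set Ordinal.{u}) :=
  {M | (M ⊆ Iio d.lam.ord ∧ M.Countable) ∧ ClosedUnder d.boundedOp M ∧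
    ∃ δ < omega1, M ∩ Iio omega1 = Iio δ ∧ d.Admissible Sig M δ (role δ)}

theorem stationaryOn_admissibleModels (role : Ordinal.{u} → Role) (hT : OrdStationary omega1 T) :
    StationaryOn (Iio d.lam.ord)
      {M ∈ d.admissibleModels Sig role | ∃ δ ∈ T, M ∩ Iio omega1 = Iio δ} := by
  intro C hC
  obtain ⟨F, hFlam, hF⟩ := hC.exists_operations ⟨d.ℓ, d.ℓ_lt_ord_lam⟩
  obtain ⟨r, hr⟩ := hT.exists_of_countable_cover uncountableRegular_omega1
    (P := fun r => {δ | role δ = r}) fun δ _ => ⟨role δ, rfl⟩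
  obtain ⟨M, hM, hcl, δ, ⟨hδT, rfl⟩, hMδ, hadm⟩ :=
    exists_admissible (d := d) (Sig := Sig) (Sum.elim F d.boundedOp) hr r
  rw [closedUnder_sumElim] at hcl
  have hδ : (M ∩ Iio d.lam.ord) ∩ Iio omega1 = Iio δ := by
    rw [inter_assoc, inter_eq_right.2 (Iio_subset_Iio (d.omega1_lt_ℓ.trans d.ℓ_lt_ord_lam).le), hMδ]
  exact ⟨M ∩ Iio d.lam.ord, ⟨⟨⟨inter_subset_right, hM.mono inter_subset_left⟩,
    hcl.2.inter d.boundedOp_mem, δ, hT.1 hδT, hδ, hadm.inter_Iio⟩, δ, hδT, hδ⟩,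
    hF _ (hM.mono inter_subset_left) inter_subset_right (hcl.1.inter hFlam)⟩

variable (d Sig) in
/-- The outcome of applying strong reflection to the admissible models. -/
structure IsReflection (role : Ordinal.{u} → Role) (Y : Set Ordinal.{u}) : Prop where
  ordStationary_role : ∀ r, OrdStationary omega1 {δ | δ < omega1 ∧ role δ = r}
  Iio_omega1_subset : Iio omega1 ⊆ Y
  mk_eq : #Y = ℵ₁
  exists_club : ∃ D ⊆ d.admissibleModels Sig role, ClubOn Y D

namespace IsReflection

variable {role : Ordinal.{u} → Role} (hY : d.IsReflection Sig role Y) {a : Set Ordinal.{u}}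
include hY

theorem exists_model (r : Role) (haY : a ⊆ Y) (ha : a.Countable) :
    ∃ M, a ⊆ M ∧ M ⊆ Y ∧ M.Countable ∧ ClosedUnder d.boundedOp M ∧
      ∃ δ, d.Admissible Sig M δ r := by
  obtain ⟨D, hDZ, hD⟩ := hY.exists_club
  obtain ⟨M, hMD, haM, δ, ⟨-, rfl⟩, hδ⟩ := hD.exists_superset_inter_omega1
    hY.Iio_omega1_subset (hY.ordStationary_role r) haY ha
  obtain ⟨⟨-, hM⟩, hcl, δ', -, hδ', hadm⟩ := hDZ hMD
  obtain rfl := Iio_injective (hδ.symm.trans hδ')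
  exact ⟨M, haM, (hD.1 M hMD).1, hM, hcl, δ, hadm⟩

theorem closedUnder : ClosedUnder d.boundedOp Y := by
  intro o l hl
  obtain ⟨M, hlM, hMY, -, hcl, -⟩ := hY.exists_model .trace hl l.finite_toSet.countable
  exact hMY (hcl o l hlM)

theorem subset_Iio : Y ⊆ Iio d.lam.ord := by
  intro y hy
  obtain ⟨D, hDZ, hD⟩ := hY.exists_club
  obtain ⟨M, hMD, hyM⟩ := hD.2.1 {y} (singleton_subset_iff.2 hy) (countable_singleton y)
  exact (hDZ hMD).1.1 (hyM rfl)

-- Otherwise all models that include `a` have the same supremum below `ν`, although the two roles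
-- `sup` give different colours to it.
theorem exists_bound {ν : Ordinal.{u}} (hνY : ν ∈ Y) (hν : UncountableRegular ν)
    (hlt : omega1 < ν) (haY : a ⊆ Y) (haν : a ⊆ Iio ν) (ha : a.Countable) :
    ∃ y ∈ Y, y < ν ∧ ∀ x ∈ a, x ≤ y := by
  by_contra! hunbdd
  have isLUB_of_color : ∀ b : Bool, ∃ γ, IsLUB a γ ∧ stationaryColor ν γ = b.toNat := by
    intro b
    obtain ⟨M, haM, hMY, -, -, _, hadm⟩ :=
      hY.exists_model (.sup b) (insert_subset hνY haY) (ha.insert ν)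
    obtain ⟨γ, hγ, hcol⟩ := hadm ν (haM (.inl rfl)) hν hlt
    refine ⟨γ, ⟨fun x hx => hγ.isLUB.1 ⟨haM (.inr hx), haν hx⟩, fun z hz => hγ.isLUB.2 ?_⟩, hcol⟩
    rintro y ⟨hyM, hyν⟩
    obtain ⟨x, hx, hyx⟩ := hunbdd y (hMY hyM) hyν
    exact hyx.le.trans (hz hx)
  obtain ⟨γ₀, hγ₀, hcol₀⟩ := isLUB_of_color false
  obtain ⟨γ₁, hγ₁, hcol₁⟩ := isLUB_of_color true
  rw [hγ₀.unique hγ₁, hcol₁] at hcol₀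
  simp at hcol₀

theorem exists_mem_between {s ζ : Ordinal.{u}} (haY : a ⊆ Y) (ha : a.Countable) (hs : IsLUB a s)
    (hζ : ζ ∈ Y) (hsζ : s < ζ) : ∃ y ∈ Y, s ≤ y ∧ y < ζ := by
  have cofinalMap_mem : ∀ ξ ∈ Y, ξ < ζ.cof.ord → cofinalMap ζ ξ ∈ Y := fun ξ hξ hlt =>
    op_mem hY.closedUnder .cofinalMap (l := [ζ, ξ]) (by simp [hζ, hξ])
      ((cofinalMap_lt hlt).trans (hY.subset_Iio hζ))
  suffices ∃ ξ ∈ Y, ξ < ζ.cof.ord ∧ s ≤ cofinalMap ζ ξ from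
    let ⟨ξ, hξ, hlt, hle⟩ := this
    ⟨_, cofinalMap_mem ξ hξ hlt, hle, cofinalMap_lt hlt⟩
  rcases le_or_gt ζ.cof.ord omega1 with hcof | hcof
  · obtain ⟨ξ, hξ, hle⟩ := exists_le_cofinalMap hsζ
    exact ⟨ξ, hY.Iio_omega1_subset (hξ.trans_le hcof), hξ, hle⟩
  have lt_ζ : ∀ x ∈ a, x < ζ := fun x hx => (hs.1 hx).trans_lt hsζ
  have cof_lt : ζ.cof.ord < d.lam.ord := (Ordinal.ord_cof_le ζ).trans_lt (hY.subset_Iio hζ)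
  have cof_mem : ζ.cof.ord ∈ Y := op_mem hY.closedUnder .cof (l := [ζ]) (by simp [hζ]) cof_lt
  obtain ⟨η, hηY, hη, hle⟩ := hY.exists_bound (a := cofinalIndex ζ '' a) cof_mem
    ⟨uncountableRegular_omega1.1.trans hcof, congrArg Cardinal.ord (Ordinal.cof_ord_cof ζ)⟩ hcof
    (image_subset_iff.2 fun x hx => op_mem hY.closedUnder .cofinalIndex (l := [ζ, x])
      (by simp [hζ, haY hx]) ((cofinalIndex_lt (lt_ζ x hx)).trans cof_lt))
    (image_subset_iff.2 fun x hx => cofinalIndex_lt (lt_ζ x hx)) (ha.image _)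
  exact ⟨η, hηY, hη, hs.2 fun x hx => (le_cofinalMap_cofinalIndex (lt_ζ x hx)).trans
    (cofinalMap_le_cofinalMap (hle _ ⟨x, hx, rfl⟩) hη)⟩

theorem isLUB_mem {s ζ : Ordinal.{u}} (haY : a ⊆ Y) (ha : a.Countable) (hs : IsLUB a s)
    (hζ : ζ ∈ Y) (hsζ : s ≤ ζ) : s ∈ Y := by
  induction ζ using WellFoundedLT.induction with
  | ind ζ ih =>
    rcases hsζ.eq_or_lt with rfl | hlt
    · exact hζ
    · obtain ⟨y, hyY, hsy, hyζ⟩ := hY.exists_mem_between haY ha hs hζ hlt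
      exact ih y hyζ hyY hsy

theorem exists_subset_covered (haY : a ⊆ Y) (ha : a.Countable) :
    ∃ ρ ∈ Y, ρ < d.κ.ord ∧ a ∩ Iio d.κ.ord ⊆ d.covered ρ := by
  obtain ⟨M, haM, hMY, hM, -, -, γ, hγ, hcol, hcov⟩ := hY.exists_model .cover haY ha
  have ℓ_mem : d.ℓ ∈ Y := op_mem hY.closedUnder .ell (l := []) (by simp) d.ℓ_lt_ord_lam
  have γ_mem : γ ∈ Y := hY.isLUB_mem (inter_subset_left.trans hMY) (hM.mono inter_subset_left)
    hγ.isLUB ℓ_mem hγ.1.le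
  exact ⟨_, op_mem hY.closedUnder .color (l := [γ]) (by simp [γ_mem])
    (hcol.trans d.ord_κ_lt_ord_lam), hcol, (inter_subset_inter_left _ haM).trans hcov⟩

theorem exists_chain : ∃ q : Ordinal.{u} → Ordinal.{u}, (∀ α < omega1, q α ∈ Y) ∧
    (∀ α < omega1, ∀ β < α, d.member (q β) ⊆ d.member (q α)) ∧
    ∀ x, d.point x ∈ Y → ∃ α < omega1, x ∈ d.member (q α) := by
  have : Nonempty Y := ⟨0, hY.Iio_omega1_subset uncountableRegular_omega1.pos⟩
  obtain ⟨z, hz⟩ := exists_surjOn_Iio_ord (W := Y) (c := ℵ₁) (by simp [hY.mk_eq])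
  choose! g g_mem g_lt hg using fun a haY ha => hY.exists_subset_covered (a := a) haY ha
  let q : Ordinal.{u} → Ordinal.{u} := WellFoundedLT.fix fun α q =>
    g (insert (z α).1 (range fun β : Iio α => q β β.2))
  have q_eq : ∀ α, q α = g (insert (z α).1 (q '' Iio α)) := fun α => by
    rw [image_eq_range]
    exact WellFoundedLT.fix_eq ..
  have hq : ∀ α < omega1, q α ∈ Y ∧ q α < d.κ.ord ∧
      insert (z α).1 (q '' Iio α) ∩ Iio d.κ.ord ⊆ d.covered (q α) := by
    intro α hα
    induction α using WellFoundedLT.induction with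
    | ind α ih =>
      have hsub : insert (z α).1 (q '' Iio α) ⊆ Y := insert_subset (z α).2 <|
        image_subset_iff.2 fun β hβ => (ih β hβ (lt_trans hβ hα)).1
      have hcount := ((countable_Iio_of_lt_omega1 hα).image q).insert (z α).1
      rw [q_eq α]
      exact ⟨g_mem _ hsub hcount, g_lt _ hsub hcount, hg _ hsub hcount⟩
  refine ⟨q, fun α hα => (hq α hα).1, fun α hα β hβ => ?_, fun x hx => ?_⟩
  · exact ((hq α hα).2.2 ⟨.inr ⟨β, hβ, rfl⟩, (hq β (hβ.trans hα)).2.1⟩).2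
  · obtain ⟨α, hα, hzα⟩ := hz ⟨_, hx⟩
    exact ⟨α, hα, ((hq α hα).2.2 ⟨.inl (congrArg Subtype.val hzα).symm, d.point_lt x⟩).1 x rfl⟩

theorem point_element_mem {ρ ξ : Ordinal.{u}} (hρ : ρ ∈ Y) (hξ : ξ < omega1) :
    d.point (d.element ρ ξ) ∈ Y :=
  op_mem hY.closedUnder .element (l := [ρ, ξ]) (by simp [hρ, hY.Iio_omega1_subset hξ])
    ((d.point_lt _).trans d.ord_κ_lt_ord_lam)

theorem preimage_mem (hΓ : Tight Γ) : d.point ⁻¹' Y ∈ Γ := by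
  obtain ⟨q, hqY, hmono, hcover⟩ := hY.exists_chain
  have cof_omega1 : omega1.cof = ℵ₁ := isRegular_aleph_one.cof_ord
  have hunion : ⋃ α ∈ Iio omega1, d.member (q α) = d.point ⁻¹' Y := by
    refine (iUnion₂_subset fun α hα x hx => ?_).antisymm fun x hx => ?_
    · obtain ⟨ξ, hξ, rfl⟩ := d.member_subset _ hx
      exact hY.point_element_mem (hqY α hα) hξ
    · obtain ⟨α, hα, hxα⟩ := hcover x hx
      exact mem_biUnion hα hxα
  rw [← hunion]
  refine hΓ omega1 _ (fun α _ => d.member_mem _) (fun β α hβα hα => ?_) ?_ ?_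
  · rcases hβα.eq_or_lt with rfl | hlt
    exacts [Subset.rfl, hmono α hα β hlt]
  · rw [cof_omega1]
    exact aleph_lt_aleph.2 zero_lt_one
  · rw [cof_omega1]
    exact aleph_lt_aleph.2 one_lt_two

theorem stationaryOn_preimage
    (hS : StationaryOn Set.univ (lifts d.point Sig {δ | δ < omega1 ∧ role δ = .trace})) :
    StationaryOn (d.point ⁻¹' Y) {s ∈ Sig | s ⊆ d.point ⁻¹' Y} := by
  intro C hC
  have : Nonempty X := ⟨d.element 0 0⟩
  obtain ⟨D, hDZ, hD⟩ := hY.exists_club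
  have zero_mem : 0 ∈ Y := hY.Iio_omega1_subset uncountableRegular_omega1.pos
  obtain ⟨F, hFY, hF⟩ := hD.exists_operations ⟨0, zero_mem⟩
  obtain ⟨H, hHY, hH⟩ := hC.exists_operations
    ⟨_, hY.point_element_mem zero_mem uncountableRegular_omega1.pos⟩
  obtain ⟨H', hH'⟩ := exists_operations_preimage d.point_injective H
  obtain ⟨G, hG⟩ := StationaryOn.exists_operations_diagonal fun τ => lifts d.point Sig (d.subset τ)
  obtain ⟨M, ⟨hMS, δ, ⟨-, hrole⟩, hδ⟩, hM, hcl⟩ :=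
    hS.exists_closedUnder (Sum.elim F (Sum.elim H' G))
  simp only [closedUnder_sumElim] at hcl
  obtain ⟨hclF, hclH, hclG⟩ := hcl
  have hMD : M ∩ Y ∈ D :=
    hF _ (hM.mono inter_subset_left) inter_subset_right (hclF.inter hFY)
  have hMC : d.point ⁻¹' (M ∩ Y) ∈ C :=
    hH _ ((hM.mono inter_subset_left).preimage d.point_injective) (preimage_mono inter_subset_right)
      ((hH' M hclH).inter hHY)
  have hδ' : (M ∩ Y) ∩ Iio omega1 = Iio δ := by
    rw [inter_assoc, inter_eq_right.2 hY.Iio_omega1_subset, hδ]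
  obtain ⟨-, -, δ', -, hδ'', hadm⟩ := hDZ hMD
  obtain rfl := Iio_injective (hδ'.symm.trans hδ'')
  rw [hrole] at hadm
  refine ⟨_, ⟨hadm.resolve_right ?_, preimage_mono inter_subset_right⟩, hMC⟩
  rintro ⟨τ, hτ, -, hδτ, hnot⟩
  exact hnot (hG M hM hclG τ hτ.1 ⟨hMS, δ, hδτ, hδ⟩)

end IsReflection

end Coding

end Reflecting

/-- SRP implies Axiom R. -/
theorem srp_implies_axiomR (hSRP : SRP.{u}) : AxiomR.{u} := by
  intro X Sig Γ _ hS hΓ htight hcof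
  rcases isEmpty_or_nonempty X with hX | hX
  · obtain ⟨c, hc, -⟩ := hcof ∅ (by simp)
    obtain rfl : c = Set.univ := Subsingleton.elim _ _
    exact ⟨_, hc, by simpa only [subset_univ, and_true, ofPred_mem_eq] using hS⟩
  obtain ⟨d⟩ := nonempty_coding hΓ hcof
  obtain ⟨role, hrole, hlifts⟩ :=
    exists_partition_stationaryOn_lifts d.point_injective hS Role.trace
  obtain ⟨Y, hω₁Y, -, hYcard, hclub⟩ := hSRP d.lam d.aleph_two_le_lam
    (d.admissibleModels Sig role) (fun M hM => hM.1)
    (fun T hT => Coding.stationaryOn_admissibleModels role hT) (Iio omega1)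
    (Iio_subset_Iio (d.omega1_lt_ℓ.trans d.ℓ_lt_ord_lam).le) (by simp [omega1])
  have hY : d.IsReflection Sig role Y := ⟨hrole, hω₁Y, hYcard, hclub⟩
  exact ⟨d.point ⁻¹' Y, hY.preimage_mem htight, hY.stationaryOn_preimage hlifts⟩
end

section
/- Assume the P-ideal Dichotomy (PID) and that the bounding number 𝔟 equals ℵ₂. Then every hereditarily separable subspace of a compact Hausdorff sequential space is hereditarily Lindelöf. -/
universe u

/-- The P-ideal Dichotomy (PID): for every uncountable set `X` and every P-ideal `I` of countable
subsets of `X` (downward closed, and such that every countable subfamily is almost included in a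
single member), either there is an uncountable `A ⊆ X` all of whose countable subsets are in `I`,
or `X` is a countable union of sets orthogonal to `I`. -/
def PID : Prop :=
  ∀ (X : Type u), Uncountable X → ∀ I : Set (Set X),
    (∀ s ∈ I, s.Countable) →
    (∀ s ∈ I, ∀ t ⊆ s, t ∈ I) →
    (∀ f : ℕ → Set X, (∀ n, f n ∈ I) → ∃ J ∈ I, ∀ n, (f n \ J).Finite) →
    (∃ A : Set X, ¬ A.Countable ∧ ∀ B ⊆ A, B.Countable → B ∈ I) ∨
    (∃ B : ℕ → Set X, (⋃ n, B n) = Set.univ ∧ ∀ n, ∀ s ∈ I, (B n ∩ s).Finite)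

/-- `f ≤* g`: `f` is eventually dominated by `g`. -/
def EvDominated (f g : ℕ → ℕ) : Prop := ∀ᶠ n in Filter.atTop, f n ≤ g n

/-- The bounding number `𝔟`: the least cardinality of a family `F ⊆ ω^ω` unbounded with
respect to eventual domination. -/
noncomputable def boundingNumber : Cardinal.{0} :=
  sInf { c : Cardinal.{0} | ∃ F : Set (ℕ → ℕ), Cardinal.mk F = c ∧
    ∀ g : ℕ → ℕ, ∃ f ∈ F, ¬ EvDominated f g }

/-!
If `Z` is not Lindelöf, transfinite recursion of length `ω₁` gives points `x i` of `Z`, each with an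
open neighbourhood `U i` containing only countably many `x j`; shrink `U i` to closed neighbourhoods
`V i`. Since `ℵ₁ < 𝔟`, the countable sets of indices meeting every `x ⁻¹' V i` in a finite set form
a P-ideal. If all countable subsets of an uncountable `A` are in it, then each `V i` contains only
finitely many `x j` with `j ∈ A`, which yields an uncountable discrete subspace. Otherwise some
uncountable `B` is orthogonal to the ideal. By the Lindelöf property `x '' B` has a point `y` in its
closure outside all `U i`, and `ℵ₁ < 𝔟` together with sequentiality gives a sequence in `x '' B`
that eventually leaves each `V i`, as if it converged to `y`. Its indices form an infinite subset of
`B` in the ideal, a contradiction.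
-/

open Set Filter Topology Cardinal

section BoundingNumber

variable {ι : Type u}

theorem exists_forall_evDominated (hι : #ι < lift.{u} boundingNumber) (f : ι → ℕ → ℕ) :
    ∃ g, ∀ i, EvDominated (f i) g := by
  by_contra! h
  refine hι.not_ge ?_
  have hrange : boundingNumber ≤ #(range f) :=
    csInf_le' ⟨range f, rfl, fun g ↦ (h g).imp' f fun i hi ↦ ⟨mem_range_self i, hi⟩⟩
  calc lift.{u} boundingNumber ≤ lift.{u} #(range f) := lift_le.2 hrange
    _ ≤ lift.{0} #ι := mk_range_le_lift
    _ = #ι := lift_uzero _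

/-- The ideal of countable sets orthogonal to the family `V`, i.e. meeting each `V i` in a finite
set. -/
def countableOrthogonal {α : Type*} (V : ι → Set α) : Set (Set α) :=
  {s | s.Countable ∧ ∀ i, (s ∩ V i).Finite}

variable {α : Type*} {V : ι → Set α}

theorem mem_countableOrthogonal_of_subset {s t : Set α} (hs : s ∈ countableOrthogonal V)
    (hts : t ⊆ s) : t ∈ countableOrthogonal V :=
  ⟨hs.1.mono hts, fun i ↦ (hs.2 i).subset (inter_subset_inter_left _ hts)⟩

-- After enumerating each `f n`, the sets `f n ∩ V i` are bounded by a function of `n` for each `i`;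
-- cutting `f n` above a function dominating all of these leaves a set orthogonal to every `V i`.
theorem exists_countableOrthogonal_forall_finite_sdiff (hι : #ι < lift.{u} boundingNumber)
    {f : ℕ → Set α} (hf : ∀ n, f n ∈ countableOrthogonal V) :
    ∃ J ∈ countableOrthogonal V, ∀ n, (f n \ J).Finite := by
  choose e he using fun n ↦ countable_iff_exists_injOn.1 (hf n).1
  choose F hF using fun i n ↦ (((hf n).2 i).image (e n)).bddAbove
  obtain ⟨g, hg⟩ := exists_forall_evDominated hι F
  refine ⟨⋃ n, {a ∈ f n | g n < e n a},
    ⟨countable_iUnion fun n ↦ (hf n).1.mono (sep_subset _ _), fun i ↦ ?_⟩, fun n ↦ ?_⟩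
  · obtain ⟨N, hN⟩ := eventually_atTop.1 (hg i)
    have hfin : (⋃ n ∈ Iio N, f n ∩ V i).Finite := (finite_Iio N).biUnion fun n _ ↦ (hf n).2 i
    refine hfin.subset ?_
    rintro a ⟨ha, haV⟩
    obtain ⟨n, han, hlt⟩ := mem_iUnion.1 ha
    have hle : e n a ≤ F i n := hF i n (mem_image_of_mem _ ⟨han, haV⟩)
    have hnN : n < N := not_le.1 fun h ↦ (hlt.trans_le (hle.trans (hN n h))).false
    exact mem_biUnion hnN ⟨han, haV⟩
  · refine Finite.of_finite_image ((finite_Iic (g n)).subset ?_) ((he n).mono sdiff_subset)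
    rintro _ ⟨a, ⟨ha, haJ⟩, rfl⟩
    exact not_lt.1 fun h ↦ haJ (mem_iUnion.2 ⟨n, ha, h⟩)

theorem finite_inter_of_forall_countable_subset {A : Set α}
    (hA : ∀ s ⊆ A, s.Countable → s ∈ countableOrthogonal V) (i : ι) : (A ∩ V i).Finite := by
  by_contra hinf
  obtain ⟨t, htA, htc, htinf⟩ := Set.Infinite.exists_subset_countable_infinite hinf
  have ht := (hA t (htA.trans inter_subset_left) htc).2 i
  rw [inter_eq_left.2 (htA.trans inter_subset_right)] at ht
  exact htinf ht

theorem range_mem_countableOrthogonal {a : ℕ → α} (ha : ∀ i, ∀ᶠ k in atTop, a k ∉ V i) :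
    range a ∈ countableOrthogonal V := by
  refine ⟨countable_range a, fun i ↦ ?_⟩
  have hfin : {k | a k ∈ V i}.Finite := by
    simpa only [← Nat.cofinite_eq_atTop, eventually_cofinite, not_not] using ha i
  rw [← image_preimage_eq_range_inter]
  exact hfin.image a

-- The set `T` of all points `y` as in the conclusion contains `W`, and diagonalizing along a
-- function that dominates the moduli of convergence shows that `T` is sequentially closed.
theorem exists_seq_forall_eventually_mem {X : Type*} [TopologicalSpace X] [SequentialSpace X]
    (hι : #ι < lift.{u} boundingNumber) {G : ι → Set X} (hG : ∀ i, IsOpen (G i)) {W : Set X}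
    {y : X} (hy : y ∈ closure W) :
    ∃ w : ℕ → X, (∀ k, w k ∈ W) ∧ ∀ i, y ∈ G i → ∀ᶠ k in atTop, w k ∈ G i := by
  let T : Set X :=
    {y | ∃ w : ℕ → X, (∀ k, w k ∈ W) ∧ ∀ i, y ∈ G i → ∀ᶠ k in atTop, w k ∈ G i}
  have hWT : W ⊆ T := fun x hx ↦ ⟨fun _ ↦ x, fun _ ↦ hx, fun _ hi ↦ .of_forall fun _ ↦ hi⟩
  have hT : IsSeqClosed T := by
    intro z y hz hzy
    choose w hwW hw using hz
    choose N hN using fun i n ↦ eventually_atTop.1 (eventually_imp_distrib_left.2 (hw n i))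
    obtain ⟨g, hg⟩ := exists_forall_evDominated hι N
    refine ⟨fun n ↦ w n (g n), fun n ↦ hwW n _, fun i hi ↦ ?_⟩
    filter_upwards [hzy.eventually ((hG i).mem_nhds hi), hg i] with n hzn hNg
    exact hN i n _ hNg hzn
  exact closure_minimal hWT hT.isClosed hy

end BoundingNumber

section Discrete

variable {X : Type*} [TopologicalSpace X]

theorem countable_of_isDiscrete_of_exists_dense {D : Set X} (hD : IsDiscrete D)
    (hsep : ∃ c ⊆ D, c.Countable ∧ D ⊆ closure c) : D.Countable := by
  obtain ⟨c, hcD, hc, hDc⟩ := hsep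
  refine hc.mono fun d hd ↦ ?_
  obtain ⟨U, hU, hUD⟩ := isOpen_inter_eq_singleton_of_mem_discrete hD hd
  have hdU : d ∈ U := (hUD.ge rfl).1
  obtain ⟨z, hzU, hzc⟩ := mem_closure_iff.1 (hDc hd) U hU hdU
  exact hUD.le ⟨hzU, hcD hzc⟩ ▸ hzc

variable [R1Space X]

theorem isDiscrete_of_finite_inter {D : Set X} (hinj : InjOn SeparationQuotient.mk D)
    (hD : ∀ d ∈ D, ∃ V ∈ 𝓝 d, (V ∩ D).Finite) : IsDiscrete D := by
  refine .of_nhdsWithin fun d hd ↦ ?_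
  obtain ⟨V, hV, hfin⟩ := hD d hd
  have hd_notMem : d ∉ closure ((V ∩ D) \ {d}) := by
    rw [hfin.sdiff.isCompact.mem_closure_iff_exists_inseparable]
    rintro ⟨z, ⟨⟨-, hzD⟩, hzd⟩, hz⟩
    exact hzd (hinj hzD hd (SeparationQuotient.mk_eq_mk.2 hz))
  rw [le_pure_iff]
  filter_upwards [mem_nhdsWithin_of_mem_nhds hV, self_mem_nhdsWithin,
    mem_nhdsWithin_of_mem_nhds (isClosed_closure.isOpen_compl.mem_nhds hd_notMem)] with z hzV hzD hz
  by_contra hzd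
  exact hz (subset_closure ⟨⟨hzV, hzD⟩, hzd⟩)

-- Without `T₁`, distinct `x i` may be inseparable; a set `D` of representatives is mapped to a
-- discrete set, and each class is covered by the finite set `A ∩ x ⁻¹' V d` of its representative.
theorem countable_of_finite_inter_preimage {ι : Type*} {x : ι → X} {A : Set ι} {V : ι → Set X}
    (hV : ∀ i, V i ∈ 𝓝 (x i)) (hfin : ∀ i, (A ∩ x ⁻¹' V i).Finite)
    (hx : ∀ D ⊆ range x, IsDiscrete D → D.Countable) : A.Countable := by
  obtain ⟨D, hDA, hD⟩ := exists_subset_bijOn A (SeparationQuotient.mk ∘ x)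
  have hdisc : IsDiscrete (x '' D) := by
    refine isDiscrete_of_finite_inter hD.injOn.image_of_comp ?_
    rintro _ ⟨d, -, rfl⟩
    refine ⟨V d, hV d, ((hfin d).image x).subset ?_⟩
    rintro _ ⟨hjV, j, hj, rfl⟩
    exact mem_image_of_mem x ⟨hDA hj, hjV⟩
  have hDc : D.Countable := countable_of_injective_of_countable_image
    (InjOn.of_comp hD.injOn) (hx _ (image_subset_range x D) hdisc)
  refine (hDc.biUnion fun d _ ↦ (hfin d).countable).mono fun i hi ↦ ?_
  obtain ⟨d, hdD, hd⟩ := hD.surjOn (mem_image_of_mem _ hi)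
  have hins : Inseparable (x d) (x i) := SeparationQuotient.mk_eq_mk.1 hd
  exact mem_biUnion hdD ⟨hi, mem_of_mem_nhds (x := x i) (hins.nhds_eq ▸ hV d)⟩

end Discrete

section LocallyCountable

theorem exists_forall_image_Iio {ι α : Type*} [Preorder ι] [WellFoundedLT ι]
    (hι : ∀ i : ι, (Iio i).Countable) {P : Set α → α → Prop}
    (hP : ∀ S : Set α, S.Countable → ∃ a, P S a) : ∃ x : ι → α, ∀ i, P (x '' Iio i) (x i) := by
  have : Nonempty α := (hP ∅ countable_empty).nonempty
  choose! p hp using hP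
  let x : ι → α := wellFounded_lt.fix fun i rec ↦ p (range fun j : Iio i ↦ rec j.1 j.2)
  have hx : ∀ i, x i = p (x '' Iio i) := fun i ↦ by
    rw [image_eq_range]
    exact WellFounded.fix_eq _ _ i
  exact ⟨x, fun i ↦ hx i ▸ hp _ ((hι i).image x)⟩

variable {X : Type*} [TopologicalSpace X]

theorem exists_locallyCountable_of_not_isLindelof {ι : Type*} [LinearOrder ι] [WellFoundedLT ι]
    (hι : ∀ i : ι, (Iio i).Countable) {Z : Set X} (hZ : ¬ IsLindelof Z) :
    ∃ x : ι → X, (∀ i, x i ∈ Z) ∧ ∀ i, ∃ U, IsOpen U ∧ x i ∈ U ∧ (x ⁻¹' U).Countable := by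
  rw [isLindelof_iff_countable_subcover] at hZ
  push Not at hZ
  obtain ⟨κ, C, hCo, hZC, hC⟩ := hZ
  have hcover : ∀ z ∈ Z, ∃ k, z ∈ C k := fun z hz ↦ mem_iUnion.1 (hZC hz)
  obtain ⟨z₀, hz₀, -⟩ := not_subset.1 (hC ∅ countable_empty)
  have : Nonempty κ := (hcover z₀ hz₀).nonempty
  choose! c hc using hcover
  have havoid : ∀ S : Set X, S.Countable → ∃ z, z ∈ Z ∧ ∀ s ∈ S, z ∉ C (c s) := fun S hS ↦ by
    obtain ⟨z, hz, hzC⟩ := not_subset.1 (hC (c '' S) (hS.image c))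
    exact ⟨z, hz, fun s hs h ↦ hzC (mem_biUnion (mem_image_of_mem c hs) h)⟩
  obtain ⟨x, hx⟩ := exists_forall_image_Iio hι havoid
  refine ⟨x, fun i ↦ (hx i).1, fun i ↦ ⟨C (c (x i)), hCo _, hc _ (hx i).1, ?_⟩⟩
  have hIic : (Iic i).Countable := Iio_insert (a := i) ▸ (hι i).insert i
  exact hIic.mono fun j hj ↦ not_lt.1 fun hij ↦ (hx j).2 _ (mem_image_of_mem x hij) hj

theorem exists_mem_closure_image_forall_notMem [LindelofSpace X] {ι : Type*} {x : ι → X}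
    {U : ι → Set X} (hU : ∀ i, IsOpen (U i)) (hUc : ∀ i, (x ⁻¹' U i).Countable) {B : Set ι}
    (hB : ¬ B.Countable) : ∃ y ∈ closure (x '' B), ∀ i, y ∉ U i := by
  by_contra! h
  obtain ⟨t, ht, hcover⟩ := isClosed_closure.isLindelof.elim_countable_subcover U hU
    fun y hy ↦ mem_iUnion.2 (h y hy)
  refine hB ((ht.biUnion fun i _ ↦ hUc i).mono fun j hj ↦ ?_)
  simpa using hcover (subset_closure (mem_image_of_mem x hj))

theorem exists_infinite_countableOrthogonal_subset [LindelofSpace X] [SequentialSpace X]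
    {ι : Type u} (hι : #ι < lift.{u} boundingNumber) {x : ι → X} {U V : ι → Set X}
    (hU : ∀ i, IsOpen (U i)) (hUc : ∀ i, (x ⁻¹' U i).Countable) (hV : ∀ i, IsClosed (V i))
    (hxV : ∀ i, x i ∈ V i) (hVU : ∀ i, V i ⊆ U i) {B : Set ι} (hB : ¬ B.Countable) :
    ∃ s ∈ countableOrthogonal fun i ↦ x ⁻¹' V i, s ⊆ B ∧ s.Infinite := by
  obtain ⟨y, hyB, hyU⟩ := exists_mem_closure_image_forall_notMem hU hUc hB
  obtain ⟨w, hwB, hw⟩ :=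
    exists_seq_forall_eventually_mem hι (fun i ↦ (hV i).isOpen_compl) hyB
  choose a haB hxa using hwB
  have haV : ∀ i, ∀ᶠ k in atTop, a k ∉ x ⁻¹' V i := fun i ↦ by
    simpa [hxa] using hw i fun h ↦ hyU i (hVU i h)
  refine ⟨range a, range_mem_countableOrthogonal haV, range_subset_iff.2 haB, fun hfin ↦ ?_⟩
  obtain ⟨k, hk⟩ := (hfin.eventually_all.2 fun i _ ↦ haV i).exists
  exact hk (a k) (mem_range_self k) (hxV (a k))

theorem countable_of_locallyCountable (hPID : PID.{u}) [LindelofSpace X] [RegularSpace X]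
    [SequentialSpace X] {ι : Type u} (hι : #ι < lift.{u} boundingNumber) {x : ι → X}
    (hx : ∀ i, ∃ U, IsOpen U ∧ x i ∈ U ∧ (x ⁻¹' U).Countable)
    (hdisc : ∀ D ⊆ range x, IsDiscrete D → D.Countable) : Countable ι := by
  by_contra hcount
  rw [not_countable_iff] at hcount
  choose U hU hxU hUc using hx
  choose V hV hVc hVU using fun i ↦ exists_mem_nhds_isClosed_subset ((hU i).mem_nhds (hxU i))
  rcases hPID ι hcount (countableOrthogonal fun i ↦ x ⁻¹' V i) (fun _ hs ↦ hs.1)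
    (fun _ hs _ ↦ mem_countableOrthogonal_of_subset hs)
    (fun _ ↦ exists_countableOrthogonal_forall_finite_sdiff hι) with
    ⟨A, hA, hAV⟩ | ⟨B, hBuniv, hB⟩
  · exact hA (countable_of_finite_inter_preimage hV
      (finite_inter_of_forall_countable_subset hAV) hdisc)
  · obtain ⟨n, hn⟩ : ∃ n, ¬ (B n).Countable := by
      by_contra! h
      exact not_countable_univ (hBuniv ▸ countable_iUnion h)
    obtain ⟨s, hs, hsB, hsinf⟩ := exists_infinite_countableOrthogonal_subset hι hU hUc hVc
      (fun i ↦ mem_of_mem_nhds (hV i)) hVU hn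
    exact hsinf (inter_eq_right.2 hsB ▸ hB n s hs)

end LocallyCountable

theorem pid_b_aleph2_hs_implies_hl_general (hPID : PID.{u}) (hb : ℵ₁ < boundingNumber)
    {X : Type u} [TopologicalSpace X] [LindelofSpace X] [RegularSpace X] [SequentialSpace X]
    {Y : Set X} (hY : ∀ D ⊆ Y, IsDiscrete D → D.Countable) : ∀ Z ⊆ Y, IsLindelof Z := by
  intro Z hZY
  by_contra hZ
  let ω₁ : Type u := (ℵ₁ : Cardinal.{u}).ord.ToType
  have hω₁ : #ω₁ = ℵ₁ := by simp [ω₁]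
  have hIio : ∀ i : ω₁, (Iio i).Countable := fun i ↦ by
    rw [← le_aleph0_iff_set_countable, ← Order.lt_succ_iff, succ_aleph0]
    exact (mk_Iio_lt i (by simp [ω₁])).trans_eq hω₁
  obtain ⟨x, hxZ, hx⟩ := exists_locallyCountable_of_not_isLindelof hIio hZ
  have hcount : Countable ω₁ := countable_of_locallyCountable hPID
    (by simpa [hω₁] using lift_lt.{0, u}.2 hb) hx
    fun D hD ↦ hY D (hD.trans ((range_subset_iff.2 hxZ).trans hZY))
  exact (mk_le_aleph0_iff.2 hcount).not_gt (hω₁ ▸ aleph0_lt_aleph_one)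

/-- PID together with `𝔟 = ℵ₂` implies that every hereditarily separable subspace of a compact
Hausdorff sequential space is hereditarily Lindelöf. -/
theorem pid_b_aleph2_hs_implies_hl (hPID : PID.{u})
    (hb : boundingNumber = Cardinal.aleph 2)
    (X : Type u) [TopologicalSpace X] [CompactSpace X] [T2Space X] [SequentialSpace X]
    (Y : Set X)
    (hHS : ∀ Z ⊆ Y, ∃ c ⊆ Z, c.Countable ∧ Z ⊆ closure c) :
    ∀ Z ⊆ Y, IsLindelof Z :=
  pid_b_aleph2_hs_implies_hl_general hPID (by simp [hb]) fun D hDY hD ↦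
    countable_of_isDiscrete_of_exists_dense hD (hHS D hDY)
end
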